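/- arXiv:1410.8632 — 3 statements merged into one kernel-verified Lean document; each statement's English description precedes it below -/
import Mathlib

section
/- Let P = conv(S) ⊆ ℝ^d be the convex hull of a finite set S ⊆ ℚ^d of rational points, and let q be a positive integer such that q·s ∈ ℤ^d for every s ∈ S. Let h : ℝ^d → ℝ be a polynomial function of total degree at most m. Then there exist functions E_0, …, E_{d+m} : ℝ → ℝ such that: (a) each E_r is a finite real linear combination of products of at most d + m − r functions of the form t ↦ {η·t} with η ∈ ℚ (an empty product meaning the constant 1); (b) each E_r is periodic with period q; and (c) for every real t ≥ 0, Σ_{x ∈ ℤ^d ∩ tP} h(x) = Σ_{r=0}^{d+m} E_r(t)·t^r, where tP = {t·p : p ∈ P} and the left-hand sum is finite since tP is compact. -/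
open Pointwise

/-- `f : ℝ → ℝ` is a finite real linear combination of products of at most `k` functions of
the form `t ↦ {η·t}` with `η ∈ ℚ` (an empty product meaning the constant `1`). -/
def IsStepPoly1 (k : ℕ) (f : ℝ → ℝ) : Prop :=
  ∃ (n : ℕ) (coef : Fin n → ℝ) (L : Fin n → List ℚ),
    (∀ i, (L i).length ≤ k) ∧
    ∀ t : ℝ, f t = ∑ i, coef i *
      ((L i).map (fun η => Int.fract ((η : ℝ) * t))).prod

/-!
Measuring time in multiples of `1 / q` makes the vertices of `P` integral; the sum of `h` over
`ℤ^d ∩ tP` is then shown, by induction on `d`, to be a polynomial in `t` and functions `{c t}`,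
`c ∈ ℤ`, of degree at most `d + m`.

Describe `P` by finitely many integral inequalities `a · x ≤ b`. As `t` grows, a lattice point
`x ≠ 0` enters `tP` when an inequality with `b > 0` becomes tight and leaves it just after an
inequality with `b < 0` becomes tight. Hence the sum over `tP` is the sum over the points that have
entered up to time `t`, minus the sum over the points that have exited before time `t`. The points
entering or exiting at time `s` lie on facets of `sP`, and exist only if `s` is a multiple of
`1 / b`. On a facet, a unimodular change of coordinates lowers the dimension, so each of the two
terms is a sum over a grid, `∑ f (n / g)` for `n / g ≤ t`, of a step polynomial `f` of lower degree.
Such grid sums are step polynomials of one degree more; the products of floors that occur are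
handled by interchanging summations, as in the reciprocity law for `∑ ⌊a n / g⌋`.
-/

open scoped NNReal Matrix

/-! ### Step polynomials on `[0, ∞)` -/

/-- The functions `1`, `t` and `{c t}`, for `c` an integer, of a real variable `t ≥ 0`. Integer
slopes are enough because time is measured in multiples of `1 / q`. -/
def stepGen : Set (ℝ≥0 → ℝ) :=
  insert 1 (insert (↑) (Set.range fun (c : ℤ) t => Int.fract ((c : ℝ) * t)))

/-- The step polynomials of degree at most `k`: the span of the functions
`t ^ r * {c₁ t} ⋯ {cₗ t}` with `r + l ≤ k`. -/
noncomputable def stepDegreeLE (k : ℕ) : Submodule ℝ (ℝ≥0 → ℝ) := Submodule.span ℝ stepGen ^ k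

section StepDegree

variable {k l : ℕ} {f g : ℝ≥0 → ℝ}

lemma stepDegreeLE_mono (h : k ≤ l) : stepDegreeLE k ≤ stepDegreeLE l :=
  pow_le_pow_right' (Submodule.one_le.2 (Submodule.subset_span (Set.mem_insert _ _))) h

lemma mul_mem_stepDegreeLE (hf : f ∈ stepDegreeLE k) (hg : g ∈ stepDegreeLE l) :
    f * g ∈ stepDegreeLE (k + l) := by
  rw [stepDegreeLE, pow_add]
  exact Submodule.mul_mem_mul hf hg

lemma pow_mem_stepDegreeLE (hf : f ∈ stepDegreeLE k) (r : ℕ) : f ^ r ∈ stepDegreeLE (k * r) := by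
  rw [stepDegreeLE, pow_mul]
  exact Submodule.pow_mem_pow _ hf r

lemma const_mem_stepDegreeLE (k : ℕ) (c : ℝ) : Function.const ℝ≥0 c ∈ stepDegreeLE k := by
  refine stepDegreeLE_mono k.zero_le ?_
  rw [stepDegreeLE, pow_zero]
  exact Submodule.mem_one.2 ⟨c, rfl⟩

lemma one_mem_stepDegreeLE (k : ℕ) : (1 : ℝ≥0 → ℝ) ∈ stepDegreeLE k :=
  const_mem_stepDegreeLE k 1

lemma stepGen_subset_stepDegreeLE : stepGen ⊆ stepDegreeLE 1 := by
  rw [stepDegreeLE, pow_one]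
  exact Submodule.subset_span

lemma coe_mem_stepDegreeLE : ((↑) : ℝ≥0 → ℝ) ∈ stepDegreeLE 1 :=
  stepGen_subset_stepDegreeLE (.inr (.inl rfl))

lemma fract_mem_stepDegreeLE (c : ℤ) :
    (fun t : ℝ≥0 => Int.fract ((c : ℝ) * t)) ∈ stepDegreeLE 1 :=
  stepGen_subset_stepDegreeLE (.inr (.inr ⟨c, rfl⟩))

lemma coe_pow_mem_stepDegreeLE (r : ℕ) : ((↑) : ℝ≥0 → ℝ) ^ r ∈ stepDegreeLE r := by
  simpa only [one_mul] using pow_mem_stepDegreeLE coe_mem_stepDegreeLE r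

lemma floor_mem_stepDegreeLE (c : ℤ) : (fun t : ℝ≥0 => (⌊(c : ℝ) * t⌋ : ℝ)) ∈ stepDegreeLE 1 := by
  convert sub_mem (Submodule.smul_mem _ (c : ℝ) coe_mem_stepDegreeLE) (fract_mem_stepDegreeLE c)
    using 1
  funext t
  simp

lemma natFloor_mem_stepDegreeLE (c : ℕ) : (fun t : ℝ≥0 => (⌊c * t⌋₊ : ℝ)) ∈ stepDegreeLE 1 := by
  convert floor_mem_stepDegreeLE c using 2 with t
  exact natCast_floor_eq_intCast_floor (c * t : ℝ≥0).coe_nonneg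

lemma natCeil_mem_stepDegreeLE (c : ℕ) : (fun t : ℝ≥0 => (⌈c * t⌉₊ : ℝ)) ∈ stepDegreeLE 1 := by
  convert neg_mem (floor_mem_stepDegreeLE (-c)) using 1
  funext t
  have hceil : (⌈c * t⌉₊ : ℝ) = ⌈(c : ℝ) * t⌉ :=
    natCast_ceil_eq_intCast_ceil (c * t : ℝ≥0).coe_nonneg
  simp [hceil, Int.floor_neg]

lemma sum_range_pow_mem_stepDegreeLE {u : ℝ≥0 → ℕ} (hu : (fun t => (u t : ℝ)) ∈ stepDegreeLE 1)
    (r : ℕ) : (fun t => ∑ n ∈ Finset.range (u t), (n : ℝ) ^ r) ∈ stepDegreeLE (r + 1) := by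
  have hfaulhaber : (fun t => ∑ n ∈ Finset.range (u t), (n : ℝ) ^ r) =
      ∑ i ∈ Finset.range (r + 1), ((bernoulli i * (r + 1).choose i / (r + 1) : ℚ) : ℝ) •
        (fun t => (u t : ℝ)) ^ (r + 1 - i) := by
    funext t
    have h := congrArg (Rat.cast : ℚ → ℝ) (sum_range_pow (u t) r)
    push_cast at h
    simp only [h, Finset.sum_apply, Pi.smul_apply, Pi.pow_apply, smul_eq_mul]
    push_cast
    exact Finset.sum_congr rfl fun i _ => by ring
  rw [hfaulhaber]
  refine sum_mem fun i _ => Submodule.smul_mem _ _ (stepDegreeLE_mono ?_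
    (pow_mem_stepDegreeLE hu _))
  omega

end StepDegree

lemma exists_eq_pow_mul_prod_of_mem_insert_pow {M : Type*} [CommMonoid M] {x y : M} {G : Set M}
    {k : ℕ} (hy : y ∈ (insert 1 (insert x G)) ^ k) :
    ∃ (r : ℕ) (L : List M), (∀ g ∈ L, g ∈ G) ∧ r + L.length ≤ k ∧ y = x ^ r * L.prod := by
  induction k generalizing y with
  | zero => exact ⟨0, [], by simp, by simp, by simpa using hy⟩
  | succ k ih =>
    rw [pow_succ'] at hy
    obtain ⟨z, hz, w, hw, rfl⟩ := hy
    obtain ⟨r, L, hL, hk, rfl⟩ := ih hw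
    rcases hz with rfl | rfl | hz
    · exact ⟨r, L, hL, by omega, one_mul _⟩
    · exact ⟨r + 1, L, hL, by omega, by simp only [pow_succ', mul_assoc]⟩
    · refine ⟨r, z :: L, List.forall_mem_cons.2 ⟨hz, hL⟩, by simp; omega, ?_⟩
      simp only [List.prod_cons, mul_left_comm]

/-! ### Sums over a grid -/

/-- The sum of the values of `f` at the multiples of `1 / g` in `(0, t]`. -/
noncomputable def gridSum (g : ℕ) : (ℝ≥0 → ℝ) →ₗ[ℝ] ℝ≥0 → ℝ where
  toFun f t := ∑ n ∈ Finset.Ioc 0 ⌊g * t⌋₊, f (n / g)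
  map_add' _ _ := funext fun _ => Finset.sum_add_distrib
  map_smul' _ _ := funext fun _ => (Finset.mul_sum _ _ _).symm

/-- The sum of the values of `f` at the multiples of `1 / g` in `(0, t)`. -/
noncomputable def gridSumLT (g : ℕ) (f : ℝ≥0 → ℝ) (t : ℝ≥0) : ℝ :=
  ∑ n ∈ Finset.Ico 1 ⌈g * t⌉₊, f (n / g)

/-- The function `t ↦ ⌊c t⌋`. -/
noncomputable def floorMul (c : ℕ) (t : ℝ≥0) : ℝ := ⌊c * t⌋₊

section GridSum

variable {g k : ℕ}

lemma gridSum_apply (g : ℕ) (f : ℝ≥0 → ℝ) (t : ℝ≥0) :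
    gridSum g f t = ∑ n ∈ Finset.Ioc 0 ⌊g * t⌋₊, f (n / g) := rfl

lemma gridSum_congr {f₁ f₂ : ℝ≥0 → ℝ} (h : ∀ n : ℕ, f₁ (n / g) = f₂ (n / g)) :
    gridSum g f₁ = gridSum g f₂ := by
  funext t
  simp only [gridSum_apply, h]

lemma gridSum_one (c : ℕ) : gridSum c 1 = floorMul c := by
  funext t
  simp [gridSum_apply, floorMul]

lemma mem_Ioc_floor_mul_iff (hg : 0 < g) {n : ℕ} {t : ℝ≥0} :
    n ∈ Finset.Ioc 0 ⌊g * t⌋₊ ↔ 0 < n ∧ (n / g : ℝ≥0) ≤ t := by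
  rw [Finset.mem_Ioc, Nat.le_floor_iff zero_le, div_le_iff₀' (by positivity)]

lemma mem_Ico_ceil_mul_iff (hg : 0 < g) {n : ℕ} {t : ℝ≥0} :
    n ∈ Finset.Ico 1 ⌈g * t⌉₊ ↔ 0 < n ∧ (n / g : ℝ≥0) < t := by
  rw [Finset.mem_Ico, Nat.lt_ceil, div_lt_iff₀' (by positivity), Nat.succ_le_iff]

/-- The terms of the product are pairs of grid points; each pair is counted at its later point. -/
lemma gridSum_mul_gridSum {a b : ℕ} (ha : 0 < a) (hb : 0 < b) (u v : ℝ≥0 → ℝ) :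
    gridSum a u * gridSum b v =
      gridSum a (u * gridSum b v) + gridSum b (gridSumLT a u * v) := by
  funext t
  have hle : ∑ m ∈ Finset.Ioc 0 ⌊a * t⌋₊, ∑ n ∈ Finset.Ioc 0 ⌊b * t⌋₊,
      (if (n / b : ℝ≥0) ≤ m / a then u (m / a) * v (n / b) else 0) =
        gridSum a (u * gridSum b v) t := by
    refine Finset.sum_congr rfl fun m hm => ?_
    rw [mem_Ioc_floor_mul_iff ha] at hm
    rw [← Finset.sum_filter, Pi.mul_apply, gridSum_apply, Finset.mul_sum]
    refine Finset.sum_congr (Finset.ext fun n => ?_) fun _ _ => rfl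
    simp only [Finset.mem_filter, mem_Ioc_floor_mul_iff hb]
    exact ⟨fun h => ⟨h.1.1, h.2⟩, fun h => ⟨⟨h.1, h.2.trans hm.2⟩, h.2⟩⟩
  have hlt : ∑ m ∈ Finset.Ioc 0 ⌊a * t⌋₊, ∑ n ∈ Finset.Ioc 0 ⌊b * t⌋₊,
      (if (n / b : ℝ≥0) ≤ m / a then 0 else u (m / a) * v (n / b)) =
        gridSum b (gridSumLT a u * v) t := by
    rw [Finset.sum_comm]
    refine Finset.sum_congr rfl fun n hn => ?_
    rw [mem_Ioc_floor_mul_iff hb] at hn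
    simp only [← ite_not _ _ (0 : ℝ)]
    rw [← Finset.sum_filter, Pi.mul_apply, gridSumLT, Finset.sum_mul]
    refine Finset.sum_congr (Finset.ext fun m => ?_) fun _ _ => rfl
    simp only [Finset.mem_filter, mem_Ioc_floor_mul_iff ha, mem_Ico_ceil_mul_iff ha, not_le]
    exact ⟨fun h => ⟨h.1.1, h.2⟩, fun h => ⟨⟨h.1, h.2.le.trans hn.2⟩, h.2⟩⟩
  rw [Pi.mul_apply, Pi.add_apply, ← hle, ← hlt, gridSum_apply, gridSum_apply,
    Finset.sum_mul_sum]
  simp only [← Finset.sum_add_distrib]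
  refine Finset.sum_congr rfl fun m _ => Finset.sum_congr rfl fun n _ => ?_
  split_ifs <;> simp

lemma sum_Ico_div_pow (g r : ℕ) {N : ℕ} (hN : 0 < N) :
    ∑ n ∈ Finset.Ico 1 N, ((n / g : ℝ≥0) : ℝ) ^ r =
      ((g : ℝ) ^ r)⁻¹ * (∑ n ∈ Finset.range N, (n : ℝ) ^ r - 0 ^ r) := by
  rw [Finset.range_eq_Ico, Finset.sum_eq_sum_Ico_succ_bot hN, Nat.cast_zero,
    add_sub_cancel_left, Finset.mul_sum]
  refine Finset.sum_congr rfl fun n _ => ?_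
  rw [NNReal.coe_div, div_pow, div_eq_inv_mul, NNReal.coe_natCast, NNReal.coe_natCast]

lemma gridSum_coe_pow_mem (g r : ℕ) : gridSum g ((↑) ^ r) ∈ stepDegreeLE (r + 1) := by
  have hfloor : (fun t : ℝ≥0 => ((⌊g * t⌋₊ + 1 : ℕ) : ℝ)) ∈ stepDegreeLE 1 := by
    convert add_mem (natFloor_mem_stepDegreeLE g) (one_mem_stepDegreeLE 1) using 1
    funext t
    simp
  convert Submodule.smul_mem _ ((g : ℝ) ^ r)⁻¹ (sub_mem (sum_range_pow_mem_stepDegreeLE hfloor r)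
    (const_mem_stepDegreeLE (r + 1) (0 ^ r))) using 1
  funext t
  rw [gridSum_apply, ← Finset.Ico_add_one_add_one_eq_Ioc]
  exact sum_Ico_div_pow g r (Nat.succ_pos _)

lemma exists_gridSumLT_coe_pow_eq (g r : ℕ) (hg : 0 < g) :
    ∃ H ∈ stepDegreeLE (r + 1), ∀ z, 0 < z → gridSumLT g ((↑) ^ r) z = H z :=
  ⟨_, Submodule.smul_mem _ ((g : ℝ) ^ r)⁻¹ (sub_mem (sum_range_pow_mem_stepDegreeLE
    (natCeil_mem_stepDegreeLE g) r) (const_mem_stepDegreeLE (r + 1) (0 ^ r))),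
    fun z hz => sum_Ico_div_pow g r (Nat.ceil_pos.2 (by positivity))⟩

/-- The span of the grid sums, of spacing more than `1 / g`, of step polynomials of degree at
most `k`. -/
noncomputable def coarseSums (g k : ℕ) : Submodule ℝ (ℝ≥0 → ℝ) :=
  Submodule.span ℝ {u | ∃ c ∈ Set.Ioo 0 g, ∃ f ∈ stepDegreeLE k, u = gridSum c f}

lemma coarseSums_mono (g : ℕ) {l : ℕ} (h : k ≤ l) : coarseSums g k ≤ coarseSums g l :=
  Submodule.span_mono fun _ ⟨c, hc, f, hf, hu⟩ => ⟨c, hc, f, stepDegreeLE_mono h hf, hu⟩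

lemma gridSum_mem_coarseSums {c : ℕ} (hc : c ∈ Set.Ioo 0 g) {f : ℝ≥0 → ℝ}
    (hf : f ∈ stepDegreeLE k) : gridSum c f ∈ coarseSums g k :=
  Submodule.subset_span ⟨c, hc, f, hf, rfl⟩

lemma gridSum_mul_sub_mem_coarseSums {a p : ℕ} (ha : 0 < a) {h H : ℝ≥0 → ℝ}
    (hH : H ∈ stepDegreeLE p) (hlt : ∀ z, 0 < z → gridSumLT a h z = H z) {j : ℝ≥0 → ℝ}
    (hj : j ∈ coarseSums g k) : gridSum a h * j - gridSum a (h * j) ∈ coarseSums g (p + k) := by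
  suffices hle : coarseSums g k ≤ (coarseSums g (p + k)).comap
      (LinearMap.mulLeft ℝ (gridSum a h) - gridSum a ∘ₗ LinearMap.mulLeft ℝ h) from hle hj
  refine Submodule.span_le.2 ?_
  rintro _ ⟨c, hc, f, hf, rfl⟩
  have hrest : gridSum c (gridSumLT a h * f) = gridSum c (H * f) := by
    funext t
    rw [gridSum_apply, gridSum_apply]
    refine Finset.sum_congr rfl fun n hn => ?_
    have hn' : 0 < n := (Finset.mem_Ioc.1 hn).1
    have hc' : 0 < c := hc.1
    rw [Pi.mul_apply, Pi.mul_apply, hlt _ (by positivity)]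
  have hsplit : gridSum a h * gridSum c f - gridSum a (h * gridSum c f) = gridSum c (H * f) := by
    rw [gridSum_mul_gridSum ha hc.1, hrest, add_sub_cancel_left]
  simpa [hsplit] using gridSum_mem_coarseSums hc (mul_mem_stepDegreeLE hH hf)

lemma list_prod_floorMul_mem_stepDegreeLE {L : List (ℝ≥0 → ℝ)}
    (hL : ∀ f ∈ L, f ∈ floorMul '' Set.Ioo 0 g) : L.prod ∈ stepDegreeLE L.length := by
  induction L with
  | nil => exact one_mem_stepDegreeLE 0
  | cons f L ih =>
    rw [List.forall_mem_cons] at hL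
    obtain ⟨⟨c, -, rfl⟩, hL⟩ := hL
    rw [List.prod_cons, List.length_cons, add_comm]
    exact mul_mem_stepDegreeLE (natFloor_mem_stepDegreeLE c) (ih hL)

lemma list_prod_floorMul_mem_coarseSums {f : ℝ≥0 → ℝ} {L : List (ℝ≥0 → ℝ)}
    (hL : ∀ u ∈ f :: L, u ∈ floorMul '' Set.Ioo 0 g) :
    (f :: L).prod ∈ coarseSums g L.length := by
  induction L generalizing f with
  | nil =>
    obtain ⟨c, hc, rfl⟩ := hL f (by simp)
    rw [List.prod_singleton, ← gridSum_one]
    exact gridSum_mem_coarseSums hc (one_mem_stepDegreeLE 0)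
  | cons a L ih =>
    rw [List.forall_mem_cons] at hL
    obtain ⟨⟨c, hc, rfl⟩, hL⟩ := hL
    obtain ⟨H, hH, hlt⟩ := exists_gridSumLT_coe_pow_eq c 0 hc.1
    rw [pow_zero] at hlt
    have hrest := gridSum_mul_sub_mem_coarseSums hc.1 hH hlt (ih hL)
    rw [one_mul, zero_add, add_comm, ← List.length_cons (a := a)] at hrest
    have hmain := gridSum_mem_coarseSums hc (list_prod_floorMul_mem_stepDegreeLE hL)
    rw [List.prod_cons, ← gridSum_one]
    simpa using add_mem hrest hmain

/-- Restriction of functions to the grid of multiples of `1 / g`. -/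
noncomputable def restrictGrid (g : ℕ) : (ℝ≥0 → ℝ) →ₐ[ℝ] ℕ → ℝ :=
  AlgHom.pi fun n => Pi.evalAlgHom ℝ (fun _ => ℝ) (n / g : ℝ≥0)

/-- The functions `1`, `t` and `⌊c t⌋` with `0 < c < g`, which generate the step polynomials on
the grid of multiples of `1 / g`. -/
def gridGen (g : ℕ) : Set (ℝ≥0 → ℝ) := insert 1 (insert (↑) (floorMul '' Set.Ioo 0 g))

lemma fract_mul_div_eq (hg : 0 < g) (c : ℤ) (n : ℕ) :
    Int.fract ((c : ℝ) * (n / g : ℝ≥0)) =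
      (c % g).toNat * ((n / g : ℝ≥0) : ℝ) - floorMul (c % g).toNat (n / g) := by
  have hcast : ((c % g).toNat : ℝ) = (c % g : ℤ) := by
    exact_mod_cast Int.toNat_of_nonneg (Int.emod_nonneg c (by omega))
  have hfloor : floorMul (c % g).toNat (n / g) =
      ⌊((c % g).toNat : ℝ) * ((n / g : ℝ≥0) : ℝ)⌋ :=
    natCast_floor_eq_intCast_floor ((c % g).toNat * (n / g) : ℝ≥0).coe_nonneg
  have hmod : (c : ℝ) * (n / g : ℝ≥0) =
      (c % g).toNat * ((n / g : ℝ≥0) : ℝ) + ((c / g * n : ℤ) : ℝ) := by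
    rw [hcast]
    nth_rw 1 [← Int.emod_add_mul_ediv c g]
    push_cast
    field_simp
  rw [hfloor, hmod, Int.fract_add_intCast, Int.fract]

lemma map_restrictGrid_le (hg : 0 < g) :
    (Submodule.span ℝ stepGen).map (restrictGrid g).toLinearMap ≤
      (Submodule.span ℝ (gridGen g)).map (restrictGrid g).toLinearMap := by
  rw [Submodule.map_span, Submodule.span_le]
  rintro _ ⟨f, rfl | rfl | ⟨c, rfl⟩, rfl⟩
  · exact ⟨1, Submodule.subset_span (.inl rfl), rfl⟩
  · exact ⟨_, Submodule.subset_span (.inr (.inl rfl)), rfl⟩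
  · have hcoe := Submodule.smul_mem _ ((c % g).toNat : ℝ) (Submodule.subset_span
      (.inr (.inl rfl)) : ((↑) : ℝ≥0 → ℝ) ∈ Submodule.span ℝ (gridGen g))
    have hfloor : floorMul (c % g).toNat ∈ Submodule.span ℝ (gridGen g) := by
      rcases (c % g).toNat.eq_zero_or_pos with h0 | hpos
      · convert zero_mem (Submodule.span ℝ (gridGen g))
        funext t
        simp [h0, floorMul]
      · have hlt := Int.emod_lt_of_pos c (b := g) (by omega)
        exact Submodule.subset_span (.inr (.inr ⟨_, ⟨hpos, by omega⟩, rfl⟩))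
    exact ⟨_, sub_mem hcoe hfloor, funext fun n => (fract_mul_div_eq hg c n).symm⟩

lemma exists_mem_span_gridGen_pow_eq (hg : 0 < g) {f : ℝ≥0 → ℝ} (hf : f ∈ stepDegreeLE k) :
    ∃ u ∈ Submodule.span ℝ (gridGen g) ^ k, ∀ n : ℕ, f (n / g) = u (n / g) := by
  have hle := pow_le_pow_left' (map_restrictGrid_le hg) k
  rw [← Submodule.map_pow, ← Submodule.map_pow] at hle
  obtain ⟨u, hu, huf⟩ := hle ⟨f, hf, rfl⟩
  exact ⟨u, hu, fun n => (congrFun huf n).symm⟩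

lemma gridSum_pow_mul_prod_floorMul_mem (hg : 0 < g) {r : ℕ} {L : List (ℝ≥0 → ℝ)}
    (hL : ∀ f ∈ L, f ∈ floorMul '' Set.Ioo 0 g) (hk : r + L.length ≤ k)
    (hcoarse : coarseSums g k ≤ stepDegreeLE (k + 1)) :
    gridSum g ((↑) ^ r * L.prod) ∈ stepDegreeLE (k + 1) := by
  cases L with
  | nil => simpa using stepDegreeLE_mono (by simpa using hk) (gridSum_coe_pow_mem g r)
  | cons f L =>
    obtain ⟨H, hH, hlt⟩ := exists_gridSumLT_coe_pow_eq g r hg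
    have hrest := gridSum_mul_sub_mem_coarseSums hg hH hlt (list_prod_floorMul_mem_coarseSums hL)
    rw [List.length_cons] at hk
    rw [show r + 1 + L.length = r + (L.length + 1) by ring] at hrest
    have hprod := mul_mem_stepDegreeLE (gridSum_coe_pow_mem g r)
      (list_prod_floorMul_mem_stepDegreeLE hL)
    rw [List.length_cons, add_right_comm] at hprod
    have := sub_mem (stepDegreeLE_mono (Nat.succ_le_succ hk) hprod)
      (hcoarse (coarseSums_mono g hk hrest))
    rwa [sub_sub_cancel] at this

/-- Each `{c t}` agrees on the grid with a combination of `t` and `⌊c' t⌋`, `0 ≤ c' < g`. Such a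
floor is itself a sum over a coarser grid, so exchanging the order of summation leads from the
grid of spacing `1 / g` to coarser ones. -/
theorem gridSum_mem_stepDegreeLE (hg : 0 < g) {f : ℝ≥0 → ℝ} (hf : f ∈ stepDegreeLE k) :
    gridSum g f ∈ stepDegreeLE (k + 1) := by
  induction g using Nat.strong_induction_on generalizing k f with
  | _ g ih =>
  have hcoarse : coarseSums g k ≤ stepDegreeLE (k + 1) := by
    refine Submodule.span_le.2 ?_
    rintro _ ⟨c, hc, f, hf, rfl⟩
    exact ih c hc.2 hc.1 hf
  obtain ⟨u, hu, hfu⟩ := exists_mem_span_gridGen_pow_eq hg hf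
  rw [gridSum_congr hfu]
  suffices hle : Submodule.span ℝ (gridGen g) ^ k ≤ (stepDegreeLE (k + 1)).comap (gridSum g) from
    hle hu
  rw [Submodule.span_pow, Submodule.span_le]
  intro y hy
  obtain ⟨r, L, hL, hk, rfl⟩ := exists_eq_pow_mul_prod_of_mem_insert_pow hy
  exact gridSum_pow_mul_prod_floorMul_mem hg hL hk hcoarse

end GridSum

/-! ### Polynomial weights -/

/-- The value of a polynomial at a lattice point. -/
noncomputable def evalInt {d : ℕ} (p : MvPolynomial (Fin d) ℝ) (x : Fin d → ℤ) : ℝ :=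
  MvPolynomial.eval (Int.cast ∘ x) p

lemma exists_mvPolynomial_eval_eq_eval_linear {σ τ : Type*} [Finite τ]
    (L : (τ → ℝ) →ₗ[ℝ] σ → ℝ) (p : MvPolynomial σ ℝ) :
    ∃ P : MvPolynomial τ ℝ, P.totalDegree ≤ p.totalDegree ∧
      ∀ z, MvPolynomial.eval z P = MvPolynomial.eval (L z) p := by
  classical
  cases nonempty_fintype τ
  set ℓ : σ → MvPolynomial τ ℝ := fun i => ∑ j, L (Pi.single j 1) i • MvPolynomial.X j
  have hdeg : ∀ i, (ℓ i).totalDegree ≤ 1 := fun i =>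
    MvPolynomial.totalDegree_finsetSum_le fun j _ =>
      (MvPolynomial.totalDegree_smul_le _ _).trans (MvPolynomial.totalDegree_X j).le
  have heval : ∀ z i, MvPolynomial.eval z (ℓ i) = L z i := fun z i => by
    simp only [ℓ, map_sum, MvPolynomial.smul_eval, MvPolynomial.eval_X]
    conv_rhs => rw [pi_eq_sum_univ' z, map_sum, Finset.sum_apply]
    simp [mul_comm]
  refine ⟨∑ e ∈ p.support, p.coeff e • ∏ i ∈ e.support, ℓ i ^ e i, ?_, fun z => ?_⟩
  · refine MvPolynomial.totalDegree_finsetSum_le fun e he => ?_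
    refine (MvPolynomial.totalDegree_smul_le _ _).trans ?_
    refine (MvPolynomial.totalDegree_finsetProd _ _).trans ?_
    refine le_trans (Finset.sum_le_sum fun i _ => ?_) (MvPolynomial.le_totalDegree he)
    exact (MvPolynomial.totalDegree_pow _ _).trans (mul_le_of_le_one_right' (hdeg i))
  · rw [MvPolynomial.eval_eq (L z) p]
    simp [heval]

lemma eval_cons_eq_sum {d : ℕ} (W : MvPolynomial (Fin (d + 1)) ℝ) (t : ℝ) (y : Fin d → ℤ) :
    MvPolynomial.eval (Fin.cons t (Int.cast ∘ y) : Fin (d + 1) → ℝ) W =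
      ∑ i ∈ (MvPolynomial.finSuccEquiv ℝ d W).support,
        t ^ i * evalInt ((MvPolynomial.finSuccEquiv ℝ d W).coeff i) y := by
  rw [MvPolynomial.eval_eq_eval_mv_eval', Polynomial.eval_map, Polynomial.eval₂_eq_sum,
    Polynomial.sum]
  exact Finset.sum_congr rfl fun i _ => mul_comm _ _

/-! ### Lattice points of the dilates of a lattice polytope -/

/-- The lattice points of the dilate by `t ≥ 0` of the polytope with vertices `v i`, `i ∈ T`.
For empty `T` the dilate by `0` is the origin, not the empty set. -/
def dilatePoints {ι : Type*} {d : ℕ} (T : Finset ι) (v : ι → Fin d → ℤ) (t : ℝ) :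
    Set (Fin d → ℤ) :=
  {x | ∃ w : ι → ℝ, (∀ i ∈ T, 0 ≤ w i) ∧ ∑ i ∈ T, w i = t ∧
    ∑ i ∈ T, w i • (Int.cast ∘ v i : Fin d → ℝ) = Int.cast ∘ x}

section DilatePoints

variable {ι : Type*} {d : ℕ} {T : Finset ι} {v : ι → Fin d → ℤ}

lemma vertex_mem_dilatePoints (v : ι → Fin d → ℤ) {i : ι} (hi : i ∈ T) :
    v i ∈ dilatePoints T v 1 := by
  classical
  have hnonneg : (0 : ι → ℝ) ≤ Pi.single i 1 := Pi.single_nonneg.2 zero_le_one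
  refine ⟨Pi.single i 1, fun k _ => hnonneg k, by simp [hi], ?_⟩
  rw [Finset.sum_eq_single_of_mem i hi fun k _ hk => by simp [hk]]
  simp

lemma dilatePoints_zero (T : Finset ι) (v : ι → Fin d → ℤ) : dilatePoints T v 0 = {0} := by
  refine Set.eq_singleton_iff_unique_mem.2 ⟨⟨0, by simp, by simp, ?_⟩, ?_⟩
  · ext j
    simp
  · rintro x ⟨w, hw, hsum, hx⟩
    have hw0 := (Finset.sum_eq_zero_iff_of_nonneg hw).1 hsum
    rw [Finset.sum_eq_zero fun i hi => by rw [hw0 i hi, zero_smul]] at hx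
    ext j
    simpa using (congrFun hx j).symm

lemma zero_mem_dilatePoints_iff {t : ℝ≥0} (ht : 0 < t ∨ 0 ∈ dilatePoints T v 1) :
    0 ∈ dilatePoints T v t ↔ 0 ∈ dilatePoints T v 1 := by
  have hscale : ∀ {s r : ℝ}, 0 < s → 0 < r → 0 ∈ dilatePoints T v s → 0 ∈ dilatePoints T v r := by
    rintro s r hs hr ⟨w, hw, hsum, h0⟩
    refine ⟨fun i => r / s * w i, fun i hi => mul_nonneg (by positivity) (hw i hi), ?_, ?_⟩
    · rw [← Finset.mul_sum, hsum, div_mul_cancel₀ _ hs.ne']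
    · simp only [mul_smul, ← Finset.smul_sum, h0]
      ext j
      simp
  rcases eq_zero_or_pos t with rfl | ht'
  · simp [dilatePoints_zero, ht.resolve_left (lt_irrefl 0)]
  · exact ⟨hscale ht' one_pos, hscale one_pos ht'⟩

lemma sum_weights_mul_dotProduct {w : ι → ℝ} {x : Fin d → ℤ}
    (hx : ∑ i ∈ T, w i • (Int.cast ∘ v i : Fin d → ℝ) = Int.cast ∘ x) (α : Fin d → ℤ) :
    ∑ i ∈ T, w i * ((α ⬝ᵥ v i : ℤ) : ℝ) = (α ⬝ᵥ x : ℤ) := by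
  have hcast : ∀ y : Fin d → ℤ, ((α ⬝ᵥ y : ℤ) : ℝ) = (Int.cast ∘ α) ⬝ᵥ (Int.cast ∘ y) :=
    (Int.castRingHom ℝ).map_dotProduct α
  simp only [hcast, ← hx, dotProduct_sum, dotProduct_smul, smul_eq_mul]

lemma mem_dilatePoints_filter_iff {α : Fin d → ℤ} {β : ℤ} (hv : ∀ i ∈ T, α ⬝ᵥ v i ≤ β) {t : ℝ}
    {x : Fin d → ℤ} :
    x ∈ dilatePoints (T.filter fun i => α ⬝ᵥ v i = β) v t ↔
      x ∈ dilatePoints T v t ∧ ((α ⬝ᵥ x : ℤ) : ℝ) = β * t := by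
  classical
  constructor
  · rintro ⟨w, hw, rfl, hx⟩
    refine ⟨⟨fun i => if α ⬝ᵥ v i = β then w i else 0, fun i hi => ?_, ?_, ?_⟩, ?_⟩
    · dsimp only
      split_ifs with h
      exacts [hw i (Finset.mem_filter.2 ⟨hi, h⟩), le_rfl]
    · rw [Finset.sum_filter]
    · simpa only [ite_smul, zero_smul, Finset.sum_filter] using hx
    · rw [← sum_weights_mul_dotProduct hx, Finset.mul_sum]
      exact Finset.sum_congr rfl fun i hi => by rw [(Finset.mem_filter.1 hi).2, mul_comm]
  · rintro ⟨⟨w, hw, rfl, hx⟩, htight⟩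
    rw [← sum_weights_mul_dotProduct hx, Finset.mul_sum] at htight
    have hterm : ∀ i ∈ T, w i * ((α ⬝ᵥ v i : ℤ) : ℝ) ≤ β * w i := fun i hi => by
      rw [mul_comm (β : ℝ)]
      exact mul_le_mul_of_nonneg_left (by exact_mod_cast hv i hi) (hw i hi)
    have hw0 : ∀ i ∈ T, α ⬝ᵥ v i ≠ β → w i = 0 := fun i hi hne => by
      have heq := (Finset.sum_eq_sum_iff_of_le hterm).1 htight i hi
      rw [mul_comm (β : ℝ)] at heq
      by_contra h
      exact hne (by exact_mod_cast mul_left_cancel₀ h heq)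
    refine ⟨w, fun i hi => hw i (Finset.mem_filter.1 hi).1, ?_, ?_⟩
    · exact Finset.sum_filter_of_ne fun i hi h => by_contra fun hne => h (hw0 i hi hne)
    · rw [← hx]
      exact Finset.sum_filter_of_ne fun i hi h => by_contra fun hne =>
        h (by rw [hw0 i hi hne, zero_smul])

lemma intCast_comp_mulVec {e : ℕ} (M : Matrix (Fin d) (Fin e) ℤ) (y : Fin e → ℤ) :
    (Int.cast ∘ (M *ᵥ y) : Fin d → ℝ) = M.map (Int.castRingHom ℝ) *ᵥ (Int.cast ∘ y) :=
  funext ((Int.castRingHom ℝ).map_mulVec M y)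

lemma intCast_comp_smul_add_mulVec {e : ℕ} (n : ℤ) (c : Fin d → ℤ) (M : Matrix (Fin d) (Fin e) ℤ)
    (y : Fin e → ℤ) : (Int.cast ∘ (n • c + M *ᵥ y) : Fin d → ℝ) =
      (n : ℝ) • (Int.cast ∘ c) + M.map (Int.castRingHom ℝ) *ᵥ (Int.cast ∘ y) := by
  rw [← intCast_comp_mulVec]
  ext j
  simp

lemma dilatePoints_eq_image {e : ℕ} {u : ι → Fin e → ℤ} {M : Matrix (Fin d) (Fin e) ℤ}
    {N : Matrix (Fin e) (Fin d) ℤ} (hNM : N * M = 1) {b n : ℤ} {c : Fin d → ℤ}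
    (hv : ∀ i ∈ T, v i = b • c + M *ᵥ u i) {t : ℝ} (hn : b * t = n) :
    dilatePoints T v t = (fun y => n • c + M *ᵥ y) '' dilatePoints T u t := by
  have hcomb : ∀ w : ι → ℝ, ∑ i ∈ T, w i = t → ∑ i ∈ T, w i • (Int.cast ∘ v i : Fin d → ℝ) =
      (n : ℝ) • (Int.cast ∘ c) +
        M.map (Int.castRingHom ℝ) *ᵥ ∑ i ∈ T, w i • (Int.cast ∘ u i) := by
    intro w hw
    rw [Matrix.mulVec_sum, ← hn, ← hw, Finset.mul_sum, Finset.sum_smul, ← Finset.sum_add_distrib]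
    refine Finset.sum_congr rfl fun i hi => ?_
    rw [hv i hi, intCast_comp_smul_add_mulVec, smul_add, smul_smul, mul_comm, Matrix.mulVec_smul]
  ext x
  constructor
  · rintro ⟨w, hw, hsum, hx⟩
    rw [hcomb w hsum] at hx
    have hsub : (Int.cast ∘ (x - n • c) : Fin d → ℝ) =
        M.map (Int.castRingHom ℝ) *ᵥ ∑ i ∈ T, w i • (Int.cast ∘ u i) := by
      rw [← sub_eq_of_eq_add' hx.symm]
      ext j
      simp
    refine ⟨N *ᵥ (x - n • c), ⟨w, hw, hsum, ?_⟩, ?_⟩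
    · rw [intCast_comp_mulVec, hsub, Matrix.mulVec_mulVec, ← Matrix.map_mul, hNM]
      simp
    · refine Int.cast_injective.comp_left (g := (Int.cast : ℤ → ℝ)) ?_
      dsimp only
      rw [intCast_comp_smul_add_mulVec, intCast_comp_mulVec, hsub,
        Matrix.mulVec_mulVec _ (N.map _), ← Matrix.map_mul, hNM]
      simpa using hx
  · rintro ⟨y, ⟨w, hw, hsum, hy⟩, rfl⟩
    exact ⟨w, hw, hsum, by rw [hcomb w hsum, hy, intCast_comp_smul_add_mulVec]⟩

end DilatePoints

/-! ### Transfer of step sums along affine injections -/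

/-- For lattice polytopes in dimension `d` with vertices indexed by finite subsets of `ι`, the sum
of a polynomial over the lattice points of the dilate by `t` is a step polynomial in `t`. This is
asserted at `t = 0` only if the polytope contains the origin; the case of a nonempty polytope is
reduced to this one by a translation. -/
def HasStepSums (ι : Type*) (d : ℕ) : Prop :=
  ∀ (T : Finset ι) (v : ι → Fin d → ℤ) (p : MvPolynomial (Fin d) ℝ),
    ∃ f ∈ stepDegreeLE (d + p.totalDegree), ∀ t : ℝ≥0, 0 < t ∨ 0 ∈ dilatePoints T v 1 →
      HasSum ((dilatePoints T v t).indicator (evalInt p)) (f t)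

section HasStepSums

variable {ι : Type*} {d : ℕ}

lemma HasStepSums.exists_hasSum_eval_cons (h : HasStepSums ι d) (T : Finset ι)
    (v : ι → Fin d → ℤ) (W : MvPolynomial (Fin (d + 1)) ℝ) :
    ∃ f ∈ stepDegreeLE (d + W.totalDegree), ∀ t : ℝ≥0, 0 < t ∨ 0 ∈ dilatePoints T v 1 →
      HasSum ((dilatePoints T v t).indicator fun y =>
        MvPolynomial.eval (Fin.cons (t : ℝ) (Int.cast ∘ y) : Fin (d + 1) → ℝ) W) (f t) := by
  choose f hf hsum using fun i => h T v ((MvPolynomial.finSuccEquiv ℝ d W).coeff i)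
  refine ⟨∑ i ∈ (MvPolynomial.finSuccEquiv ℝ d W).support, (↑) ^ i * f i,
    sum_mem fun i hi => stepDegreeLE_mono ?_ (mul_mem_stepDegreeLE (coe_pow_mem_stepDegreeLE i)
      (hf i)), fun t ht => ?_⟩
  · have := MvPolynomial.totalDegree_coeff_finSuccEquiv_add_le W i (Polynomial.mem_support_iff.1 hi)
    omega
  · have hterms := hasSum_sum fun i (_ : i ∈ (MvPolynomial.finSuccEquiv ℝ d W).support) =>
      (hsum i t ht).mul_left ((t : ℝ) ^ i)
    rw [Finset.sum_apply]
    refine hterms.congr_fun fun y => ?_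
    by_cases hy : y ∈ dilatePoints T v t
    · simp only [Set.indicator_of_mem hy, eval_cons_eq_sum]
    · simp only [Set.indicator_of_notMem hy, mul_zero, Finset.sum_const_zero]

lemma HasStepSums.exists_hasSum_of_affine_image {e : ℕ} (h : HasStepSums ι e) {T : Finset ι}
    {v : ι → Fin d → ℤ} {u : ι → Fin e → ℤ} {M : Matrix (Fin d) (Fin e) ℤ}
    {N : Matrix (Fin e) (Fin d) ℤ} (hNM : N * M = 1) {b : ℤ} {c : Fin d → ℤ}
    (hv : ∀ i ∈ T, v i = b • c + M *ᵥ u i) (p : MvPolynomial (Fin d) ℝ) :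
    ∃ f ∈ stepDegreeLE (e + p.totalDegree), ∀ (t : ℝ≥0) (n : ℤ), (b : ℝ) * t = n →
      0 < t ∨ 0 ∈ dilatePoints T u 1 →
      HasSum ((dilatePoints T v t).indicator (evalInt p)) (f t) := by
  let L : (Fin (e + 1) → ℝ) →ₗ[ℝ] Fin d → ℝ :=
    (LinearMap.proj 0).smulRight ((b : ℝ) • (Int.cast ∘ c)) +
      (M.map (Int.castRingHom ℝ)).mulVecLin ∘ₗ LinearMap.funLeft ℝ ℝ Fin.succ
  obtain ⟨W, hWdeg, hW⟩ := exists_mvPolynomial_eval_eq_eval_linear L p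
  obtain ⟨f, hf, hsum⟩ := h.exists_hasSum_eval_cons T u W
  refine ⟨f, stepDegreeLE_mono (by omega) hf, fun t n hn ht => ?_⟩
  have hinj : Function.Injective fun y : Fin e → ℤ => n • c + M *ᵥ y := fun y z hyz => by
    have := congrArg (N *ᵥ ·) (add_left_cancel hyz)
    simpa only [Matrix.mulVec_mulVec, hNM, Matrix.one_mulVec] using this
  have hoff : ∀ x ∉ Set.range fun y : Fin e → ℤ => n • c + M *ᵥ y,
      (dilatePoints T v t).indicator (evalInt p) x = 0 := fun x hx =>
    Set.indicator_of_notMem (fun hxt => by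
      rw [dilatePoints_eq_image hNM hv hn] at hxt
      exact hx (Set.image_subset_range _ _ hxt)) _
  rw [← hinj.hasSum_iff hoff, dilatePoints_eq_image hNM hv hn]
  refine (hsum t ht).congr_fun fun y => ?_
  rw [Function.comp_apply, Set.indicator_image hinj]
  congr 1
  funext z
  have hL : L (Fin.cons (t : ℝ) (Int.cast ∘ z)) = Int.cast ∘ (n • c + M *ᵥ z) := by
    rw [intCast_comp_smul_add_mulVec, ← hn, mul_comm, mul_smul]
    rfl
  rw [Function.comp_apply, hW, hL, evalInt]

lemma exists_matrix_of_dotProduct_eq_one {α c : Fin (d + 1) → ℤ} (hc : α ⬝ᵥ c = 1) :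
    ∃ (M : Matrix (Fin (d + 1)) (Fin d) ℤ) (N : Matrix (Fin d) (Fin (d + 1)) ℤ),
      N * M = 1 ∧ ∀ x, (α ⬝ᵥ x) • c + M *ᵥ (N *ᵥ x) = x := by
  let l : (Fin (d + 1) → ℤ) →ₗ[ℤ] ℤ := dotProductBilin ℤ ℤ α
  have hlc : l c = 1 := hc
  have hsurj : Function.Surjective l := fun n =>
    ⟨n • c, by rw [map_smul, hlc, smul_eq_mul, mul_one]⟩
  have hrank : Module.finrank ℤ (LinearMap.ker l) = d := by
    have := Submodule.finrank_quotient_add_finrank (LinearMap.ker l)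
    rw [(l.quotKerEquivOfSurjective hsurj).finrank_eq] at this
    simp only [Module.finrank_self, Module.finrank_fintype_fun_eq_card, Fintype.card_fin] at this
    omega
  let b := (Module.finBasisOfFinrankEq ℤ (LinearMap.ker l) hrank).equivFun
  let proj : (Fin (d + 1) → ℤ) →ₗ[ℤ] LinearMap.ker l :=
    (LinearMap.id - l.smulRight c).codRestrict (LinearMap.ker l) fun x => by
      simp [-zsmul_eq_mul, hlc]
  let incl : (Fin d → ℤ) →ₗ[ℤ] Fin (d + 1) → ℤ := (LinearMap.ker l).subtype ∘ₗ b.symm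
  have hproj : ∀ x, (proj x : Fin (d + 1) → ℤ) = x - l x • c := fun _ => rfl
  refine ⟨LinearMap.toMatrix' incl, LinearMap.toMatrix' (b ∘ₗ proj), ?_, fun x => ?_⟩
  · have hcomp : (b ∘ₗ proj) ∘ₗ incl = LinearMap.id := by
      refine LinearMap.ext fun y => b.symm.injective <| Subtype.ext ?_
      have hker : l (b.symm y) = 0 := (b.symm y).2
      simp [incl, hproj, hker]
    rw [← LinearMap.toMatrix'_comp, hcomp, LinearMap.toMatrix'_id]
  · rw [LinearMap.toMatrix'_mulVec, LinearMap.toMatrix'_mulVec]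
    have hincl : incl ((b ∘ₗ proj) x) = x - l x • c := by
      rw [← hproj]
      simp [incl]
    rw [hincl]
    exact add_sub_cancel (l x • c) x

end HasStepSums

/-! ### Facets -/

/-- The indicator function of the multiples of `1 / b`. -/
noncomputable def gridIndicator (b : ℕ) : ℝ≥0 → ℝ :=
  (Set.range fun n : ℕ => (n / b : ℝ≥0)).indicator 1

/-- The step polynomials of degree at most `k` whose sums over the multiples of `1 / B` have degree
at most `k` as well. The functions of degree at most `k - 1` supported on such a grid are examples,
since summation over the grid raises their degree only by `1`. -/
noncomputable def gridStable (B k : ℕ) : Submodule ℝ (ℝ≥0 → ℝ) :=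
  stepDegreeLE k ⊓ (stepDegreeLE k).comap (gridSum B)

section Facets

lemma gridIndicator_natCast_div (b n : ℕ) : gridIndicator b (n / b) = 1 :=
  Set.indicator_of_mem (Set.mem_range_self n) _

lemma gridIndicator_eq_zero {b : ℕ} {t : ℝ≥0} (ht : ∀ n : ℕ, (n / b : ℝ≥0) ≠ t) :
    gridIndicator b t = 0 :=
  Set.indicator_of_notMem (s := Set.range _) (not_exists.2 ht) _

lemma gridIndicator_mem_stepDegreeLE {b : ℕ} (hb : 0 < b) : gridIndicator b ∈ stepDegreeLE 1 := by
  convert sub_mem (add_mem (one_mem_stepDegreeLE 1) (natFloor_mem_stepDegreeLE b))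
    (natCeil_mem_stepDegreeLE b) using 1
  funext t
  rw [Pi.sub_apply, Pi.add_apply, Pi.one_apply]
  by_cases ht : ∃ n : ℕ, (n / b : ℝ≥0) = t
  · obtain ⟨n, rfl⟩ := ht
    have hn : (b * (n / b) : ℝ≥0) = n := by field_simp
    rw [gridIndicator_natCast_div, hn, Nat.floor_natCast, Nat.ceil_natCast, add_sub_cancel_right]
  · have hlt : (⌊b * t⌋₊ : ℝ≥0) < b * t := (Nat.floor_le zero_le).lt_of_ne fun h =>
      ht ⟨_, by rw [h]; field_simp⟩
    have hceil : ⌈b * t⌉₊ = ⌊b * t⌋₊ + 1 :=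
      le_antisymm (Nat.ceil_le_floor_add_one _) (Nat.lt_ceil.2 hlt)
    rw [gridIndicator_eq_zero (not_exists.1 ht), hceil]
    push_cast
    ring

lemma gridSum_mul_gridIndicator {b c : ℕ} (hb : 0 < b) (hc : 0 < c) (f : ℝ≥0 → ℝ) :
    gridSum (b * c) (gridIndicator b * f) = gridSum b f := by
  funext t
  have hdiv : ∀ n : ℕ, ((c * n : ℕ) / (b * c : ℕ) : ℝ≥0) = n / b := fun n => by
    push_cast
    field_simp
  rw [gridSum_apply, gridSum_apply]
  symm
  refine Finset.sum_of_injOn (c * ·) (fun m _ n _ h => Nat.eq_of_mul_eq_mul_left hc h)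
    (fun n hn => ?_) (fun n hn hnot => ?_) (fun n _ => ?_)
  · rw [Finset.mem_coe, mem_Ioc_floor_mul_iff hb] at hn
    rw [Finset.mem_coe, mem_Ioc_floor_mul_iff (Nat.mul_pos hb hc), hdiv]
    exact ⟨Nat.mul_pos hc hn.1, hn.2⟩
  · rw [Pi.mul_apply, gridIndicator_eq_zero, zero_mul]
    intro m hm
    have hnm : n = c * m := by
      rw [← hdiv m, div_left_inj' (by positivity)] at hm
      exact_mod_cast hm.symm
    subst hnm
    rw [mem_Ioc_floor_mul_iff (Nat.mul_pos hb hc), hdiv] at hn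
    refine hnot ⟨m, ?_, rfl⟩
    rw [Finset.mem_coe, mem_Ioc_floor_mul_iff hb]
    exact ⟨Nat.pos_of_mul_pos_left hn.1, hn.2⟩
  · rw [Pi.mul_apply, hdiv, gridIndicator_natCast_div, one_mul]

lemma gridIndicator_mul_mem_gridStable {b B k : ℕ} (hB : 0 < B) (hb : b ∣ B) {f : ℝ≥0 → ℝ}
    (hf : f ∈ stepDegreeLE k) : gridIndicator b * f ∈ gridStable B (k + 1) := by
  obtain ⟨c, rfl⟩ := hb
  have hb : 0 < b := Nat.pos_of_mul_pos_right hB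
  refine ⟨?_, ?_⟩
  · rw [add_comm]
    exact mul_mem_stepDegreeLE (gridIndicator_mem_stepDegreeLE hb) hf
  · rw [SetLike.mem_coe, Submodule.mem_comap,
      gridSum_mul_gridIndicator hb (Nat.pos_of_mul_pos_left hB)]
    exact gridSum_mem_stepDegreeLE hb hf

lemma exists_eq_smul_primitive {d : ℕ} {α y : Fin d → ℤ} (h : α ⬝ᵥ y ≠ 0) :
    ∃ (g : ℤ) (α' : Fin d → ℤ) (b : ℕ) (c : Fin d → ℤ),
      g ≠ 0 ∧ α = g • α' ∧ α ⬝ᵥ y = g * b ∧ α' ⬝ᵥ c = 1 := by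
  obtain ⟨j, -⟩ : ∃ j, α j ≠ 0 := by
    by_contra! h0
    exact h (by rw [show α = 0 from funext h0, zero_dotProduct])
  obtain ⟨α', hα', hgcd⟩ := Finset.extract_gcd α (s := Finset.univ) ⟨j, Finset.mem_univ j⟩
  obtain ⟨c, hc⟩ := Finset.gcd_eq_sum_mul Finset.univ α'
  set g := Finset.univ.gcd α
  have hαg : α = g • α' := funext fun j => hα' j (Finset.mem_univ j)
  have hβg : α ⬝ᵥ y = g * (α' ⬝ᵥ y) := by rw [hαg, smul_dotProduct, smul_eq_mul]
  have hg : g ≠ 0 := left_ne_zero_of_mul (hβg ▸ h)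
  have hc' : α' ⬝ᵥ c = 1 := hc.symm.trans hgcd
  rcases le_total 0 (α' ⬝ᵥ y) with hy | hy
  · exact ⟨g, α', (α' ⬝ᵥ y).toNat, c, hg, hαg, by rw [Int.toNat_of_nonneg hy, hβg], hc'⟩
  · refine ⟨-g, -α', (-(α' ⬝ᵥ y)).toNat, -c, neg_ne_zero.2 hg, ?_, ?_, ?_⟩
    · rw [neg_smul_neg, hαg]
    · rw [Int.toNat_of_nonneg (neg_nonneg.2 hy), neg_mul_neg, hβg]
    · rw [neg_dotProduct_neg, hc']

variable {ι : Type*} {d : ℕ}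

lemma dilatePoints_empty (v : ι → Fin d → ℤ) {t : ℝ} (ht : t ≠ 0) : dilatePoints ∅ v t = ∅ := by
  refine Set.eq_empty_of_forall_notMem fun x hx => ht ?_
  obtain ⟨w, -, hsum, -⟩ := hx
  rw [← hsum, Finset.sum_empty]

lemma HasStepSums.exists_hasSum_of_primitive (h : HasStepSums ι d) {T : Finset ι}
    {v : ι → Fin (d + 1) → ℤ} {α c : Fin (d + 1) → ℤ} (hc : α ⬝ᵥ c = 1) {b : ℕ} (hb : 0 < b)
    (hv : ∀ i ∈ T, α ⬝ᵥ v i = b) (p : MvPolynomial (Fin (d + 1)) ℝ) :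
    ∃ f ∈ stepDegreeLE (d + p.totalDegree), ∀ t : ℝ≥0, 0 < t →
      HasSum ((dilatePoints T v t).indicator (evalInt p)) ((gridIndicator b * f) t) := by
  obtain ⟨M, N, hNM, hsplit⟩ := exists_matrix_of_dotProduct_eq_one hc
  obtain ⟨f, hf, hsum⟩ := h.exists_hasSum_of_affine_image (T := T) (v := v)
    (u := fun i => N *ᵥ v i) (b := b) hNM (fun i hi => by rw [← hv i hi, hsplit]) p
  refine ⟨f, hf, fun t ht => ?_⟩
  by_cases hn : ∃ n : ℕ, (n / b : ℝ≥0) = t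
  · obtain ⟨n, rfl⟩ := hn
    rw [Pi.mul_apply, gridIndicator_natCast_div, one_mul]
    exact hsum _ n (by push_cast; field_simp) (.inl ht)
  · have hempty : dilatePoints T v t = ∅ := by
      refine Set.eq_empty_of_forall_notMem fun x hx => hn ?_
      obtain ⟨w, -, hsum, hx⟩ := hx
      have hαx : ((α ⬝ᵥ x : ℤ) : ℝ) = b * t := by
        rw [← sum_weights_mul_dotProduct hx, ← hsum, Finset.mul_sum]
        exact Finset.sum_congr rfl fun i hi => by rw [hv i hi, mul_comm, Int.cast_natCast]
      have hnonneg : 0 ≤ α ⬝ᵥ x := by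
        have : (0 : ℝ) ≤ b * t := by positivity
        exact_mod_cast hαx ▸ this
      lift α ⬝ᵥ x to ℕ using hnonneg with n
      refine ⟨n, (div_eq_iff (by positivity)).2 ?_⟩
      rw [mul_comm]
      exact NNReal.coe_injective (by simpa using hαx)
    rw [hempty, Set.indicator_empty, Pi.mul_apply, gridIndicator_eq_zero (not_exists.1 hn),
      zero_mul]
    exact hasSum_zero

lemma HasStepSums.exists_hasSum_of_dotProduct_eq (h : HasStepSums ι d) {T : Finset ι}
    {v : ι → Fin (d + 1) → ℤ} {α : Fin (d + 1) → ℤ} {β : ℤ} (hβ : β ≠ 0)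
    (hv : ∀ i ∈ T, α ⬝ᵥ v i = β) {B : ℕ} (hB : 0 < B) (hβB : β ∣ B)
    (p : MvPolynomial (Fin (d + 1)) ℝ) :
    ∃ u ∈ gridStable B (d + 1 + p.totalDegree), ∀ t : ℝ≥0, 0 < t →
      HasSum ((dilatePoints T v t).indicator (evalInt p)) (u t) := by
  rcases T.eq_empty_or_nonempty with rfl | ⟨i₀, hi₀⟩
  · refine ⟨0, zero_mem _, fun t ht => ?_⟩
    rw [dilatePoints_empty v (by positivity), Set.indicator_empty]
    exact hasSum_zero
  obtain ⟨g, α', b, c, hg, hα, hgb, hc⟩ := exists_eq_smul_primitive ((hv i₀ hi₀).trans_ne hβ)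
  rw [hv i₀ hi₀] at hgb
  have hb : 0 < b := Nat.pos_of_ne_zero fun hb => hβ (by rw [hgb, hb, Nat.cast_zero, mul_zero])
  have hv' : ∀ i ∈ T, α' ⬝ᵥ v i = b := fun i hi => by
    have := hv i hi
    rw [hα, hgb, smul_dotProduct, smul_eq_mul] at this
    exact mul_left_cancel₀ hg this
  obtain ⟨f, hf, hsum⟩ := h.exists_hasSum_of_primitive hc hb hv' p
  have hbB : b ∣ B := by exact_mod_cast (Dvd.intro_left g hgb.symm).trans hβB
  exact ⟨_, add_right_comm d p.totalDegree 1 ▸ gridIndicator_mul_mem_gridStable hB hbB hf, hsum⟩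

/-- The lattice points of the dilate by `t` at which one of the inequalities
`a.1 ⬝ᵥ x ≤ a.2 * t` with `a ∈ A` is tight. -/
def tightPoints (T : Finset ι) (v : ι → Fin d → ℤ) (A : Finset ((Fin d → ℤ) × ℤ)) (t : ℝ) :
    Set (Fin d → ℤ) :=
  {x ∈ dilatePoints T v t | ∃ a ∈ A, ((a.1 ⬝ᵥ x : ℤ) : ℝ) = a.2 * t}

lemma tightPoints_empty (T : Finset ι) (v : ι → Fin d → ℤ) (t : ℝ) :
    tightPoints T v ∅ t = ∅ := by
  simp [tightPoints]

lemma indicator_tightPoints_insert [DecidableEq ((Fin d → ℤ) × ℤ)] {T : Finset ι}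
    {v : ι → Fin d → ℤ} {a : (Fin d → ℤ) × ℤ} (hv : ∀ i ∈ T, a.1 ⬝ᵥ v i ≤ a.2)
    (A : Finset ((Fin d → ℤ) × ℤ)) (t : ℝ) (w : (Fin d → ℤ) → ℝ) :
    (tightPoints T v (insert a A) t).indicator w =
      (dilatePoints (T.filter fun i => a.1 ⬝ᵥ v i = a.2) v t).indicator w +
        (tightPoints T v A t).indicator w -
        (tightPoints (T.filter fun i => a.1 ⬝ᵥ v i = a.2) v A t).indicator w := by
  have hunion : tightPoints T v (insert a A) t =
      dilatePoints (T.filter fun i => a.1 ⬝ᵥ v i = a.2) v t ∪ tightPoints T v A t := by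
    ext x
    simp only [tightPoints, Set.mem_ofPred_eq, Set.mem_union, mem_dilatePoints_filter_iff hv,
      Finset.exists_mem_insert, and_or_left]
  have hinter : tightPoints (T.filter fun i => a.1 ⬝ᵥ v i = a.2) v A t =
      dilatePoints (T.filter fun i => a.1 ⬝ᵥ v i = a.2) v t ∩ tightPoints T v A t := by
    ext x
    simp only [tightPoints, Set.mem_ofPred_eq, Set.mem_inter_iff, mem_dilatePoints_filter_iff hv]
    tauto
  rw [hunion, hinter, eq_sub_iff_add_eq, Set.indicator_union_add_inter]

lemma HasStepSums.exists_hasSum_tightPoints (h : HasStepSums ι d) {B : ℕ} (hB : 0 < B)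
    (T : Finset ι) (v : ι → Fin (d + 1) → ℤ) (A : Finset ((Fin (d + 1) → ℤ) × ℤ))
    (hA : ∀ a ∈ A, a.2 ≠ 0 ∧ a.2 ∣ B) (hv : ∀ a ∈ A, ∀ i ∈ T, a.1 ⬝ᵥ v i ≤ a.2)
    (p : MvPolynomial (Fin (d + 1)) ℝ) :
    ∃ u ∈ gridStable B (d + 1 + p.totalDegree), ∀ t : ℝ≥0, (A.Nonempty → 0 < t) →
      HasSum ((tightPoints T v A t).indicator (evalInt p)) (u t) := by
  classical
  induction A using Finset.induction_on generalizing T with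
  | empty =>
    refine ⟨0, zero_mem _, fun t _ => ?_⟩
    rw [tightPoints_empty, Set.indicator_empty]
    exact hasSum_zero
  | insert a A _ ih =>
    rw [Finset.forall_mem_insert] at hA hv
    obtain ⟨u, hu, hsum⟩ := ih T hA.2 hv.2
    obtain ⟨u', hu', hsum'⟩ := ih (T.filter fun i => a.1 ⬝ᵥ v i = a.2) hA.2
      fun a ha i hi => hv.2 a ha i (Finset.mem_filter.1 hi).1
    obtain ⟨u₀, hu₀, hsum₀⟩ := h.exists_hasSum_of_dotProduct_eq hA.1.1
      (fun i hi => (Finset.mem_filter.1 hi).2) hB hA.1.2 p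
    refine ⟨u₀ + u - u', sub_mem (add_mem hu₀ hu) hu', fun t ht => ?_⟩
    have ht' : 0 < t := ht (Finset.insert_nonempty a A)
    rw [indicator_tightPoints_insert hv.1]
    exact ((hsum₀ t ht').add (hsum t fun _ => ht')).sub (hsum' t fun _ => ht')

end Facets

/-! ### Integer inequalities for the dilates -/

section Inequalities

lemma exists_nonneg_forall_le_mul_iff {α : Type*} (A : Finset α) (f g : α → ℝ) :
    (∃ c : ℝ, 0 ≤ c ∧ ∀ a ∈ A, f a ≤ c * g a) ↔
      (∀ a ∈ A, g a ≤ 0 → f a ≤ 0) ∧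
      ∀ p ∈ A, ∀ n ∈ A, 0 < g p → g n < 0 → g p * f n - g n * f p ≤ 0 := by
  classical
  constructor
  · rintro ⟨c, hc, h⟩
    refine ⟨fun a ha hg => (h a ha).trans (mul_nonpos_of_nonneg_of_nonpos hc hg),
      fun p hp n hn hgp hgn => ?_⟩
    linarith [mul_le_mul_of_nonneg_left (h n hn) hgp.le,
      mul_le_mul_of_nonpos_left (h p hp) hgn.le]
  · rintro ⟨hnonpos, hcross⟩
    set L : Finset ℝ := insert 0 ((A.filter fun a => 0 < g a).image fun a => f a / g a)
    have hL : L.Nonempty := Finset.insert_nonempty _ _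
    refine ⟨L.max' hL, L.le_max' 0 (Finset.mem_insert_self _ _), fun a ha => ?_⟩
    rcases lt_trichotomy (g a) 0 with hg | hg | hg
    · rcases Finset.mem_insert.1 (L.max'_mem hL) with h | h
      · rw [h, zero_mul]
        exact hnonpos a ha hg.le
      · obtain ⟨p, hp, hpe⟩ := Finset.mem_image.1 h
        rw [Finset.mem_filter] at hp
        rw [← hpe, div_mul_eq_mul_div, le_div_iff₀ hp.2]
        linarith [hcross p hp.1 a ha hp.2 hg]
    · rw [hg, mul_zero]
      exact hnonpos a ha hg.le
    · rw [← div_le_iff₀ hg]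
      exact L.le_max' _ (Finset.mem_insert_of_mem (Finset.mem_image_of_mem _
        (Finset.mem_filter.2 ⟨ha, hg⟩)))

lemma mem_hull_insert_iff {E : Type*} [AddCommGroup E] [Module ℝ E] {x u : E} {s : Set E} :
    x ∈ PointedCone.hull ℝ (insert u s) ↔
      ∃ c : ℝ, 0 ≤ c ∧ x - c • u ∈ PointedCone.hull ℝ s := by
  rw [Submodule.mem_span_insert]
  constructor
  · rintro ⟨c, z, hz, rfl⟩
    exact ⟨c, c.2, by rwa [← Nonneg.coe_smul, add_sub_cancel_left]⟩
  · rintro ⟨c, hc, hx⟩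
    exact ⟨⟨c, hc⟩, _, hx, (add_sub_cancel (c • u) x).symm⟩

variable {κ : Type*} [Fintype κ]

lemma exists_forall_mem_hull_empty_iff :
    ∃ A : Finset (κ → ℤ), ∀ x : κ → ℝ,
      x ∈ PointedCone.hull ℝ (∅ : Set (κ → ℝ)) ↔ ∀ a ∈ A, (Int.cast ∘ a) ⬝ᵥ x ≤ 0 := by
  classical
  refine ⟨Finset.univ.image (fun j => Pi.single j 1) ∪
    Finset.univ.image (fun j => Pi.single j (-1)), fun x => ?_⟩
  have hcast : ∀ (j : κ) (c : ℤ),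
      (Int.cast ∘ (Pi.single j c : κ → ℤ) : κ → ℝ) = Pi.single j (c : ℝ) := fun j c =>
    funext fun k => by simp [Pi.single_apply, apply_ite (Int.cast : ℤ → ℝ)]
  simp only [Finset.forall_mem_union, Finset.forall_mem_image, Finset.mem_univ, true_imp_iff,
    hcast, single_dotProduct]
  rw [PointedCone.hull, Submodule.span_empty, Submodule.mem_bot]
  constructor
  · rintro rfl
    simp
  · rintro ⟨hle, hge⟩
    funext j
    refine le_antisymm ?_ ?_
    · simpa using @hle j
    · simpa using @hge j

/-- Fourier–Motzkin elimination of the coefficient of the last generator. -/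
lemma exists_forall_mem_hull_iff (U : Finset (κ → ℤ)) :
    ∃ A : Finset (κ → ℤ), ∀ x : κ → ℝ,
      x ∈ PointedCone.hull ℝ ((Int.cast ∘ · : (κ → ℤ) → κ → ℝ) '' U) ↔
        ∀ a ∈ A, (Int.cast ∘ a) ⬝ᵥ x ≤ 0 := by
  classical
  induction U using Finset.induction_on with
  | empty => simpa using exists_forall_mem_hull_empty_iff (κ := κ)
  | insert u U _ ih =>
    obtain ⟨A, hA⟩ := ih
    refine ⟨A.filter (fun a => a ⬝ᵥ u ≤ 0) ∪
      ((A ×ˢ A).filter fun z => 0 < z.1 ⬝ᵥ u ∧ z.2 ⬝ᵥ u < 0).image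
        (fun z => (z.1 ⬝ᵥ u) • z.2 - (z.2 ⬝ᵥ u) • z.1), fun x => ?_⟩
    have hcast : ∀ a : κ → ℤ,
        ((Int.cast ∘ a : κ → ℝ) ⬝ᵥ (Int.cast ∘ u : κ → ℝ)) = (a ⬝ᵥ u : ℤ) := fun a =>
      ((Int.castRingHom ℝ).map_dotProduct a u).symm
    have hcross : ∀ p n : κ → ℤ,
        (Int.cast ∘ ((p ⬝ᵥ u) • n - (n ⬝ᵥ u) • p) : κ → ℝ) ⬝ᵥ x =
          (p ⬝ᵥ u : ℤ) * ((Int.cast ∘ n) ⬝ᵥ x) - (n ⬝ᵥ u : ℤ) * ((Int.cast ∘ p) ⬝ᵥ x) := by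
      intro p n
      rw [show (Int.cast ∘ ((p ⬝ᵥ u) • n - (n ⬝ᵥ u) • p) : κ → ℝ) =
        ((p ⬝ᵥ u : ℤ) : ℝ) • (Int.cast ∘ n) - ((n ⬝ᵥ u : ℤ) : ℝ) • (Int.cast ∘ p) from
          funext fun j => by simp, sub_dotProduct, smul_dotProduct, smul_dotProduct, smul_eq_mul,
        smul_eq_mul]
    have helim := exists_nonneg_forall_le_mul_iff A (fun a => (Int.cast ∘ a) ⬝ᵥ x)
      (fun a => ((a ⬝ᵥ u : ℤ) : ℝ))
    rw [Finset.coe_insert, Set.image_insert_eq, mem_hull_insert_iff]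
    simp only [hA, dotProduct_sub, dotProduct_smul, smul_eq_mul, hcast, sub_nonpos, helim,
      Finset.forall_mem_union, Finset.forall_mem_image, Finset.mem_filter, Finset.mem_product,
      Prod.forall, hcross, Int.cast_nonpos, Int.cast_pos, Int.cast_lt_zero, and_imp]
    exact and_congr_right fun _ => ⟨fun h p n hp hn => h p hp n hn, fun h p hp n hn => h p n hp hn⟩

variable {ι : Type*} {d : ℕ}

/-- The inequalities `a.1 ⬝ᵥ x ≤ a.2 * t`, `a ∈ A`, describe the lattice points of all the dilates
of the polytope with vertices `v i`, `i ∈ T`. -/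
def IsInequalitySystem (T : Finset ι) (v : ι → Fin d → ℤ) (A : Finset ((Fin d → ℤ) × ℤ)) : Prop :=
  ∀ (t : ℝ) (x : Fin d → ℤ), x ∈ dilatePoints T v t ↔ ∀ a ∈ A, ((a.1 ⬝ᵥ x : ℤ) : ℝ) ≤ a.2 * t

lemma mem_dilatePoints_iff_mem_hull {T : Finset ι} {v : ι → Fin d → ℤ} {t : ℝ} {x : Fin d → ℤ} :
    x ∈ dilatePoints T v t ↔ (Fin.cons t (Int.cast ∘ x) : Fin (d + 1) → ℝ) ∈
      PointedCone.hull ℝ ((fun i => (Fin.cons 1 (Int.cast ∘ v i) : Fin (d + 1) → ℝ)) '' T) := by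
  have hcomb : ∀ w : ι → ℝ,
      ∑ i ∈ T, w i • (Fin.cons 1 (Int.cast ∘ v i) : Fin (d + 1) → ℝ) =
        Fin.cons (∑ i ∈ T, w i) (∑ i ∈ T, w i • (Int.cast ∘ v i)) := fun w => by
    ext j
    refine Fin.cases ?_ (fun j => ?_) j
    · simp
    · simp
  rw [Submodule.mem_span_image_finset_iff_exists_fun']
  constructor
  · rintro ⟨w, hw, hsum, hx⟩
    refine ⟨fun i => ⟨max (w i) 0, le_max_right _ _⟩, ?_⟩
    rw [← hsum, ← hx, ← hcomb]
    exact Finset.sum_congr rfl fun i hi => by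
      rw [← Nonneg.coe_smul]
      simp only [max_eq_left (hw i hi)]
  · rintro ⟨w, hw⟩
    rw [← Finset.sum_congr rfl fun i _ => Nonneg.coe_smul (w i) _, hcomb, Fin.cons_inj] at hw
    exact ⟨fun i => w i, fun i _ => (w i).2, hw⟩

lemma exists_isInequalitySystem (T : Finset ι) (v : ι → Fin d → ℤ) :
    ∃ A, IsInequalitySystem T v A := by
  classical
  obtain ⟨A, hA⟩ := exists_forall_mem_hull_iff
    (T.image fun i => (Fin.cons 1 (v i) : Fin (d + 1) → ℤ))
  refine ⟨A.image fun a => (Fin.tail a, -a 0), fun t x => ?_⟩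
  have hcons : ∀ y : Fin d → ℤ, (Int.cast ∘ (Fin.cons 1 y : Fin (d + 1) → ℤ) : Fin (d + 1) → ℝ) =
      Fin.cons 1 (Int.cast ∘ y) := fun y => by
    rw [Fin.comp_cons, Int.cast_one]
  have hdot : ∀ a : Fin (d + 1) → ℤ, (Int.cast ∘ a) ⬝ᵥ (Fin.cons t (Int.cast ∘ x)) =
      ((Fin.tail a ⬝ᵥ x : ℤ) : ℝ) + a 0 * t := fun a => by
    simp [dotProduct, Fin.sum_univ_succ, Fin.tail, add_comm]
  rw [mem_dilatePoints_iff_mem_hull, Finset.forall_mem_image]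
  have := hA (Fin.cons t (Int.cast ∘ x))
  simp only [Finset.coe_image, Set.image_image, hcons, hdot] at this
  rw [this]
  refine forall₂_congr fun a _ => ?_
  rw [Int.cast_neg, neg_mul, le_neg_iff_add_nonpos_right]

end Inequalities

/-! ### Entry and exit of a lattice point -/

section EntryExit

lemma exists_tight_of_forall_le {α : Type*} {A : Finset α} {p β : α → ℝ} {s t : ℝ} (hst : s ≤ t)
    (hs : ¬ ∀ a ∈ A, p a ≤ β a * s) (ht : ∀ a ∈ A, p a ≤ β a * t) :
    ∃ r, s < r ∧ r ≤ t ∧ (∀ a ∈ A, p a ≤ β a * r) ∧ ∃ a ∈ A, 0 < β a ∧ p a = β a * r := by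
  push Not at hs
  obtain ⟨a₀, ha₀, hlt⟩ := hs
  have hβ₀ : 0 < β a₀ := by
    by_contra! hβ
    exact (hlt.trans_le (ht a₀ ha₀)).not_ge (mul_le_mul_of_nonpos_left hst hβ)
  obtain ⟨a, ha, hmax⟩ := (A.filter fun a => 0 < β a).exists_max_image (fun a => p a / β a)
    ⟨a₀, Finset.mem_filter.2 ⟨ha₀, hβ₀⟩⟩
  rw [Finset.mem_filter] at ha
  have hrt : p a / β a ≤ t := (div_le_iff₀' ha.2).2 (ht a ha.1)
  refine ⟨p a / β a, ?_, hrt, fun b hb => ?_, a, ha.1, ha.2, (mul_div_cancel₀ _ ha.2.ne').symm⟩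
  · exact ((lt_div_iff₀' hβ₀).2 hlt).trans_le (hmax a₀ (Finset.mem_filter.2 ⟨ha₀, hβ₀⟩))
  · rcases lt_or_ge 0 (β b) with hβ | hβ
    · exact (div_le_iff₀' hβ).1 (hmax b (Finset.mem_filter.2 ⟨hb, hβ⟩))
    · exact (ht b hb).trans (mul_le_mul_of_nonpos_left hrt hβ)

lemma hasSum_gridSum {X : Type*} {F : ℝ≥0 → X → ℝ} {u : ℝ≥0 → ℝ}
    (h : ∀ t, 0 < t → HasSum (F t) (u t)) {B : ℕ} (hB : 0 < B) (t : ℝ≥0) :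
    HasSum (fun x => gridSum B (fun s => F s x) t) (gridSum B u t) := by
  simp only [gridSum_apply]
  refine hasSum_sum fun n hn => h _ ?_
  have : 0 < n := (Finset.mem_Ioc.1 hn).1
  positivity

lemma gridSum_indicator {X : Type*} {F : ℝ≥0 → Set X} {B : ℕ} (hB : 0 < B) {x : X}
    (huniq : ∀ s s', x ∈ F s → x ∈ F s' → s = s')
    (hgrid : ∀ s, x ∈ F s → ∃ n : ℕ, (n / B : ℝ≥0) = s) (w : X → ℝ) (t : ℝ≥0) :
    gridSum B (fun s => (F s).indicator w x) t = (⋃ s ∈ Set.Ioc 0 t, F s).indicator w x := by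
  rw [gridSum_apply]
  by_cases hx : x ∈ ⋃ s ∈ Set.Ioc 0 t, F s
  · rw [Set.indicator_of_mem hx]
    simp only [Set.mem_iUnion] at hx
    obtain ⟨s, ⟨hs, hst⟩, hxs⟩ := hx
    obtain ⟨n, rfl⟩ := hgrid s hxs
    rw [Finset.sum_eq_single_of_mem n ((mem_Ioc_floor_mul_iff hB).2 ⟨?_, hst⟩),
      Set.indicator_of_mem hxs]
    · refine fun m _ hmn => Set.indicator_of_notMem (fun hxm => hmn ?_) _
      have := huniq _ _ hxm hxs
      rw [div_left_inj' (by positivity)] at this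
      exact_mod_cast this
    · exact Nat.pos_of_ne_zero fun hn => hs.ne' (by rw [hn, Nat.cast_zero, zero_div])
  · rw [Set.indicator_of_notMem hx]
    refine Finset.sum_eq_zero fun n hn => Set.indicator_of_notMem (fun hxn => hx ?_) _
    rw [mem_Ioc_floor_mul_iff hB] at hn
    have := hn.1
    simp only [Set.mem_iUnion]
    exact ⟨n / B, ⟨by positivity, hn.2⟩, hxn⟩

variable {ι : Type*} {d : ℕ}

/-- The lattice points that the dilates reach at time `t`: one of the inequalities of `A` that
become weaker with time is tight. -/
def entryPoints (T : Finset ι) (v : ι → Fin d → ℤ) (A : Finset ((Fin d → ℤ) × ℤ)) (t : ℝ≥0) :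
    Set (Fin d → ℤ) :=
  tightPoints T v (A.filter fun a => 0 < a.2) t

/-- The lattice points that the dilates leave at time `t`: one of the inequalities of `A` that
become stronger with time is tight. -/
def exitPoints (T : Finset ι) (v : ι → Fin d → ℤ) (A : Finset ((Fin d → ℤ) × ℤ)) (t : ℝ≥0) :
    Set (Fin d → ℤ) :=
  tightPoints T v (A.filter fun a => a.2 < 0) t

variable {T : Finset ι} {v : ι → Fin d → ℤ} {A : Finset ((Fin d → ℤ) × ℤ)} {x : Fin d → ℤ}
  {s t : ℝ≥0}

lemma exists_natCast_div_of_mem_tightPoints {B : ℕ} (hB : 0 < B)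
    (hA : ∀ a ∈ A, a.2 ≠ 0 ∧ a.2 ∣ B) (hx : x ∈ tightPoints T v A t) :
    ∃ n : ℕ, (n / B : ℝ≥0) = t := by
  obtain ⟨-, a, ha, hax⟩ := hx
  obtain ⟨c, hc⟩ := (hA a ha).2
  have hcast : (((a.1 ⬝ᵥ x) * c : ℤ) : ℝ) = B * t := by
    rw [show (B : ℝ) = a.2 * c by exact_mod_cast hc, Int.cast_mul, hax, mul_right_comm]
  have hnonneg : 0 ≤ (a.1 ⬝ᵥ x) * c := by
    have : (0 : ℝ) ≤ B * t := by positivity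
    exact_mod_cast hcast ▸ this
  lift (a.1 ⬝ᵥ x) * c to ℕ using hnonneg with n
  refine ⟨n, (div_eq_iff (by positivity)).2 ?_⟩
  rw [mul_comm]
  exact NNReal.coe_injective (by simpa using hcast)

lemma zero_notMem_tightPoints (hA : ∀ a ∈ A, a.2 ≠ 0) (ht : 0 < t) :
    0 ∉ tightPoints T v A t := by
  rintro ⟨-, a, ha, hax⟩
  rw [dotProduct_zero, Int.cast_zero, eq_comm] at hax
  exact mul_ne_zero (Int.cast_ne_zero.2 (hA a ha)) (NNReal.coe_pos.2 ht).ne' hax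

namespace IsInequalitySystem

lemma le_of_mem_entryPoints (hA : IsInequalitySystem T v A) (hs : x ∈ entryPoints T v A s)
    (ht : x ∈ dilatePoints T v t) : s ≤ t := by
  obtain ⟨-, a, ha, hax⟩ := hs
  rw [Finset.mem_filter] at ha
  have hle := (hA t x).1 ht a ha.1
  rw [hax] at hle
  exact_mod_cast le_of_mul_le_mul_left hle (Int.cast_pos.2 ha.2)

lemma le_of_mem_exitPoints (hA : IsInequalitySystem T v A) (hs : x ∈ exitPoints T v A s)
    (ht : x ∈ dilatePoints T v t) : t ≤ s := by
  obtain ⟨-, a, ha, hax⟩ := hs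
  rw [Finset.mem_filter] at ha
  have hle := (hA t x).1 ht a ha.1
  rw [hax] at hle
  exact_mod_cast (mul_le_mul_left_of_neg (Int.cast_lt_zero.2 ha.2)).1 hle

lemma exists_mem_entryPoints (hA : IsInequalitySystem T v A) (hx : x ≠ 0)
    (ht : x ∈ dilatePoints T v t) : ∃ s ∈ Set.Ioc 0 t, x ∈ entryPoints T v A s := by
  have h0 : x ∉ dilatePoints T v 0 := by rwa [dilatePoints_zero]
  rw [hA] at ht h0
  obtain ⟨s, hs, hst, hle, a, ha, hpos, hax⟩ := exists_tight_of_forall_le t.2 h0 ht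
  lift s to ℝ≥0 using hs.le
  exact ⟨s, ⟨hs, hst⟩, (hA s x).2 hle, a, Finset.mem_filter.2 ⟨ha, Int.cast_pos.1 hpos⟩, hax⟩

/-- Reversing time turns an exit into an entry. -/
lemma exists_mem_exitPoints (hA : IsInequalitySystem T v A) (hst : s ≤ t)
    (hs : x ∈ dilatePoints T v s) (ht : x ∉ dilatePoints T v t) :
    ∃ r ∈ Set.Icc s t, x ∈ exitPoints T v A r := by
  rw [hA] at hs ht
  obtain ⟨r, htr, hrs, hle, a, ha, hneg, hax⟩ := exists_tight_of_forall_le (A := A)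
    (p := fun a => ((a.1 ⬝ᵥ x : ℤ) : ℝ)) (β := fun a => -(a.2 : ℝ))
    (neg_le_neg (NNReal.coe_le_coe.2 hst)) (by simpa only [neg_mul_neg] using ht)
    (by simpa only [neg_mul_neg] using hs)
  obtain ⟨r, rfl⟩ : ∃ r' : ℝ≥0, r = -r' :=
    ⟨⟨-r, s.2.trans (le_neg_of_le_neg hrs)⟩, (neg_neg r).symm⟩
  rw [neg_le_neg_iff, NNReal.coe_le_coe] at hrs
  rw [neg_lt_neg_iff, NNReal.coe_lt_coe] at htr
  simp only [neg_mul_neg] at hle hax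
  exact ⟨r, ⟨hrs, htr.le⟩, (hA r x).2 hle, a,
    Finset.mem_filter.2 ⟨ha, Int.cast_lt_zero.1 (neg_pos.1 hneg)⟩, hax⟩

lemma nonneg_of_zero_mem (hA : IsInequalitySystem T v A) (h0 : 0 ∈ dilatePoints T v 1)
    {a : (Fin d → ℤ) × ℤ} (ha : a ∈ A) : 0 ≤ a.2 := by
  simpa using (hA 1 0).1 h0 a ha

lemma filter_neg_eq_empty (hA : IsInequalitySystem T v A) (h0 : 0 ∈ dilatePoints T v 1) :
    (A.filter fun a => a.2 < 0) = ∅ :=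
  Finset.filter_eq_empty_iff.2 fun _ ha => (hA.nonneg_of_zero_mem h0 ha).not_gt

lemma dilatePoints_inter_iUnion_exitPoints (hA : IsInequalitySystem T v A)
    (ht : 0 < t ∨ 0 ∈ dilatePoints T v 1) :
    dilatePoints T v t ∩ ⋃ s ∈ Set.Ioc 0 t, exitPoints T v A s = exitPoints T v A t := by
  ext x
  simp only [Set.mem_inter_iff, Set.mem_iUnion, exists_prop]
  constructor
  · rintro ⟨hxt, s, hs, hxs⟩
    rwa [← le_antisymm hs.2 (hA.le_of_mem_exitPoints hxs hxt)]
  · intro hx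
    refine ⟨hx.1, t, ⟨ht.resolve_right fun h0 => ?_, le_rfl⟩, hx⟩
    rw [exitPoints, hA.filter_neg_eq_empty h0, tightPoints_empty] at hx
    exact hx

lemma dilatePoints_union_iUnion_exitPoints (hA : IsInequalitySystem T v A)
    (ht : 0 < t ∨ 0 ∈ dilatePoints T v 1) :
    dilatePoints T v t ∪ ⋃ s ∈ Set.Ioc 0 t, exitPoints T v A s =
      {x | x = 0 ∧ 0 ∈ dilatePoints T v 1} ∪ ⋃ s ∈ Set.Ioc 0 t, entryPoints T v A s := by
  ext x
  simp only [Set.mem_union, Set.mem_iUnion, exists_prop, Set.mem_ofPred_eq]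
  constructor
  · rintro (hx | ⟨s, hs, hx⟩)
    · by_cases hx0 : x = 0
      · exact .inl ⟨hx0, (zero_mem_dilatePoints_iff ht).1 (hx0 ▸ hx)⟩
      · exact .inr (hA.exists_mem_entryPoints hx0 hx)
    · have hx0 : x ≠ 0 := by
        rintro rfl
        exact zero_notMem_tightPoints (fun a ha => (Finset.mem_filter.1 ha).2.ne) hs.1 hx
      obtain ⟨r, hr, hxr⟩ := hA.exists_mem_entryPoints hx0 hx.1
      exact .inr ⟨r, ⟨hr.1, hr.2.trans hs.2⟩, hxr⟩
  · rintro (⟨rfl, hx⟩ | ⟨s, hs, hx⟩)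
    · exact .inl ((zero_mem_dilatePoints_iff ht).2 hx)
    · by_cases hxt : x ∈ dilatePoints T v t
      · exact .inl hxt
      · obtain ⟨r, hr, hxr⟩ := hA.exists_mem_exitPoints hs.2 hx.1 hxt
        exact .inr ⟨r, ⟨hs.1.trans_le hr.1, hr.2⟩, hxr⟩

lemma indicator_dilatePoints_eq (hA : IsInequalitySystem T v A)
    (ht : 0 < t ∨ 0 ∈ dilatePoints T v 1) (w : (Fin d → ℤ) → ℝ) :
    (dilatePoints T v t).indicator w =
      {x | x = 0 ∧ 0 ∈ dilatePoints T v 1}.indicator w +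
        (⋃ s ∈ Set.Ioc 0 t, entryPoints T v A s).indicator w -
        (⋃ s ∈ Set.Ioc 0 t, exitPoints T v A s).indicator w +
        (exitPoints T v A t).indicator w := by
  have hdisj : Disjoint {x | x = 0 ∧ 0 ∈ dilatePoints T v 1}
      (⋃ s ∈ Set.Ioc 0 t, entryPoints T v A s) := by
    simp only [Set.disjoint_iUnion_right]
    refine fun s hs => Set.disjoint_left.2 ?_
    rintro x ⟨rfl, -⟩
    exact zero_notMem_tightPoints (fun a ha => (Finset.mem_filter.1 ha).2.ne') hs.1
  rw [← hA.dilatePoints_inter_iUnion_exitPoints ht, ← Set.indicator_union_add_inter w {x | _},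
    hdisj.inter_eq, Set.indicator_empty', add_zero, ← hA.dilatePoints_union_iUnion_exitPoints ht,
    sub_add_eq_add_sub, Set.indicator_union_add_inter, add_sub_cancel_right]

end IsInequalitySystem

end EntryExit

/-! ### Induction on the dimension -/

section Induction

variable {ι : Type*} {d : ℕ} {T : Finset ι} {v : ι → Fin d → ℤ} {A : Finset ((Fin d → ℤ) × ℤ)}

namespace IsInequalitySystem

lemma dotProduct_vertex_le (hA : IsInequalitySystem T v A) {a : (Fin d → ℤ) × ℤ} (ha : a ∈ A)
    {i : ι} (hi : i ∈ T) : a.1 ⬝ᵥ v i ≤ a.2 := by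
  have := (hA 1 (v i)).1 (vertex_mem_dilatePoints v hi) a ha
  rw [mul_one] at this
  exact_mod_cast this

open Classical in
lemma hasSum_dilatePoints (hA : IsInequalitySystem T v A) {B : ℕ} (hB : 0 < B)
    (hAB : ∀ a ∈ A, a.2 ≠ 0 → a.2 ∣ B) {w : (Fin d → ℤ) → ℝ} {f g : ℝ≥0 → ℝ}
    (hf : ∀ t : ℝ≥0, 0 < t → HasSum ((entryPoints T v A t).indicator w) (f t))
    (hg : ∀ t : ℝ≥0, 0 < t ∨ 0 ∈ dilatePoints T v 1 →
      HasSum ((exitPoints T v A t).indicator w) (g t))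
    {t : ℝ≥0} (ht : 0 < t ∨ 0 ∈ dilatePoints T v 1) :
    HasSum ((dilatePoints T v t).indicator w)
      ((if 0 ∈ dilatePoints T v 1 then w 0 else 0) + gridSum B f t - gridSum B g t + g t) := by
  have hzero : HasSum ({x | x = 0 ∧ 0 ∈ dilatePoints T v 1}.indicator w)
      (if 0 ∈ dilatePoints T v 1 then w 0 else 0) := by
    convert hasSum_single (f := {x | x = 0 ∧ 0 ∈ dilatePoints T v 1}.indicator w) 0
      fun x hx => Set.indicator_of_notMem (fun h => hx h.1) _ using 1
    simp [Set.indicator_apply]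
  have hgrid : ∀ A' ⊆ A, (∀ a ∈ A', a.2 ≠ 0) → ∀ (x : Fin d → ℤ) (s : ℝ≥0),
      x ∈ tightPoints T v A' s → ∃ n : ℕ, (n / B : ℝ≥0) = s := fun A' hA' hne x s hx =>
    exists_natCast_div_of_mem_tightPoints hB (fun a ha => ⟨hne a ha, hAB a (hA' ha) (hne a ha)⟩) hx
  have hentry : HasSum ((⋃ s ∈ Set.Ioc 0 t, entryPoints T v A s).indicator w) (gridSum B f t) :=
    (hasSum_gridSum hf hB t).congr_fun fun x => (gridSum_indicator hB
      (fun s s' hs hs' => le_antisymm (hA.le_of_mem_entryPoints hs hs'.1)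
        (hA.le_of_mem_entryPoints hs' hs.1))
      (hgrid _ (Finset.filter_subset _ _) (fun a ha => (Finset.mem_filter.1 ha).2.ne') x) w t).symm
  have hexit : HasSum ((⋃ s ∈ Set.Ioc 0 t, exitPoints T v A s).indicator w) (gridSum B g t) :=
    (hasSum_gridSum (fun t ht => hg t (.inl ht)) hB t).congr_fun fun x => (gridSum_indicator hB
      (fun s s' hs hs' => le_antisymm (hA.le_of_mem_exitPoints hs' hs.1)
        (hA.le_of_mem_exitPoints hs hs'.1))
      (hgrid _ (Finset.filter_subset _ _) (fun a ha => (Finset.mem_filter.1 ha).2.ne) x) w t).symm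
  rw [hA.indicator_dilatePoints_eq ht]
  exact ((hzero.add hentry).sub hexit).add (hg t ht)

end IsInequalitySystem

lemma hasStepSums_zero (ι : Type*) : HasStepSums ι 0 := by
  classical
  intro T v p
  refine ⟨fun _ => if 0 ∈ dilatePoints T v 1 then evalInt p 0 else 0, const_mem_stepDegreeLE _ _,
    fun t ht => ?_⟩
  convert hasSum_single (f := (dilatePoints T v t).indicator (evalInt p)) 0
    fun x hx => absurd (Subsingleton.elim x 0) hx using 1
  rw [Set.indicator_apply, zero_mem_dilatePoints_iff ht]

lemma HasStepSums.succ (h : HasStepSums ι d) : HasStepSums ι (d + 1) := by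
  classical
  intro T v p
  obtain ⟨A, hA⟩ := exists_isInequalitySystem T v
  set B : ℕ := ∏ a ∈ A.filter (fun a => a.2 ≠ 0), a.2.natAbs
  have hB : 0 < B := Finset.prod_pos fun a ha => Int.natAbs_pos.2 (Finset.mem_filter.1 ha).2
  have hAB : ∀ a ∈ A, a.2 ≠ 0 → a.2 ∣ B := fun a ha ha0 => Int.natAbs_dvd.1
    (Int.natCast_dvd_natCast.2 (Finset.dvd_prod_of_mem _ (Finset.mem_filter.2 ⟨ha, ha0⟩)))
  have htight : ∀ A' ⊆ A, (∀ a ∈ A', a.2 ≠ 0) →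
      ∃ u ∈ gridStable B (d + 1 + p.totalDegree), ∀ t : ℝ≥0, (A'.Nonempty → 0 < t) →
        HasSum ((tightPoints T v A' t).indicator (evalInt p)) (u t) := fun A' hA' hne =>
    h.exists_hasSum_tightPoints hB T v A' (fun a ha => ⟨hne a ha, hAB a (hA' ha) (hne a ha)⟩)
      (fun a ha i hi => hA.dotProduct_vertex_le (hA' ha) hi) p
  obtain ⟨f, hf, hentry⟩ := htight (A.filter fun a => 0 < a.2) (Finset.filter_subset _ _)
    fun a ha => (Finset.mem_filter.1 ha).2.ne'
  obtain ⟨g, hg, hexit⟩ := htight (A.filter fun a => a.2 < 0) (Finset.filter_subset _ _)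
    fun a ha => (Finset.mem_filter.1 ha).2.ne
  refine ⟨(fun _ => if 0 ∈ dilatePoints T v 1 then evalInt p 0 else 0) + gridSum B f -
    gridSum B g + g, add_mem (sub_mem (add_mem (const_mem_stepDegreeLE _ _) hf.2) hg.2) hg.1,
    fun t ht => hA.hasSum_dilatePoints hB hAB (fun t ht => hentry t fun _ => ht)
      (fun t ht => hexit t fun hne => ht.resolve_right fun h0 => ?_) ht⟩
  rw [hA.filter_neg_eq_empty h0] at hne
  exact Finset.not_nonempty_empty hne

lemma hasStepSums (ι : Type*) (d : ℕ) : HasStepSums ι d := by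
  induction d with
  | zero => exact hasStepSums_zero ι
  | succ d ih => exact ih.succ

end Induction

/-! ### The dilate by zero -/

section Zero

variable {ι : Type*} {d k : ℕ} {f g : ℝ≥0 → ℝ}

lemma exists_polynomial_eval_natCast_eq (hf : f ∈ stepDegreeLE k) :
    ∃ P : Polynomial ℝ, ∀ n : ℕ, f n = P.eval (n : ℝ) := by
  let polynomials : Subalgebra ℝ (ℝ≥0 → ℝ) :=
    (Polynomial.aeval (Nat.cast : ℕ → ℝ)).range.comap (restrictGrid 1)
  have hgen : stepGen ⊆ polynomials := by
    rintro _ (rfl | rfl | ⟨c, rfl⟩)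
    · exact one_mem _
    · exact ⟨Polynomial.X, funext fun n => by simp [restrictGrid]⟩
    · refine ⟨0, funext fun n => ?_⟩
      have : Int.fract ((c : ℝ) * n) = 0 := by exact_mod_cast Int.fract_intCast (c * n)
      simpa [restrictGrid] using this.symm
  have hle : stepDegreeLE k ≤ Subalgebra.toSubmodule polynomials := by
    rw [stepDegreeLE, Submodule.span_pow, Submodule.span_le]
    exact Submonoid.pow_subset (S := polynomials.toSubmonoid) hgen
  obtain ⟨P, hP⟩ := hle hf
  refine ⟨P, fun n => ?_⟩
  simpa [restrictGrid, Polynomial.aeval_pi_apply₂] using (congrFun hP n).symm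

lemma eq_at_zero_of_forall_natCast_pos (hf : f ∈ stepDegreeLE k) (hg : g ∈ stepDegreeLE k)
    (h : ∀ n : ℕ, 0 < n → f n = g n) : f 0 = g 0 := by
  obtain ⟨P, hP⟩ := exists_polynomial_eval_natCast_eq hf
  obtain ⟨Q, hQ⟩ := exists_polynomial_eval_natCast_eq hg
  have hPQ : P = Q := by
    refine Polynomial.eq_of_infinite_eval_eq P Q
      (((Set.Ioi_infinite 0).image Nat.cast_injective.injOn).mono ?_)
    rintro _ ⟨n, hn, rfl⟩
    exact (hP n).symm.trans ((h n hn).trans (hQ n))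
  have hfg := hP 0
  rw [hPQ, ← hQ 0] at hfg
  simpa only [Nat.cast_zero] using hfg

-- A translate of the polytope contains the origin and has the same sums at integer times, so
-- the step polynomial that is correct for `t > 0` takes the value of that translate at `t = 0`.
lemma exists_hasSum_dilatePoints {T : Finset ι} (hT : T.Nonempty) (v : ι → Fin d → ℤ)
    (p : MvPolynomial (Fin d) ℝ) :
    ∃ f ∈ stepDegreeLE (d + p.totalDegree), ∀ t : ℝ≥0,
      HasSum ((dilatePoints T v t).indicator (evalInt p)) (f t) := by
  obtain ⟨i₀, hi₀⟩ := hT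
  obtain ⟨f, hf, hfsum⟩ := hasStepSums ι d T v p
  obtain ⟨g, hg, hgsum⟩ := (hasStepSums ι d).exists_hasSum_of_affine_image (one_mul 1) (b := 1)
    (c := v i₀) (v := v) (u := fun i => v i - v i₀) (T := T)
    (fun i _ => by rw [one_smul, Matrix.one_mulVec, add_sub_cancel]) p
  have hzero_mem : 0 ∈ dilatePoints T (fun i => v i - v i₀) 1 := by
    simpa only [sub_self] using vertex_mem_dilatePoints (fun i => v i - v i₀) hi₀
  have hgsum_nat (n : ℕ) : HasSum ((dilatePoints T v (n : ℝ≥0)).indicator (evalInt p)) (g n) :=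
    hgsum n n (by simp) (.inr hzero_mem)
  have hfg : f 0 = g 0 := eq_at_zero_of_forall_natCast_pos hf hg fun n hn =>
    (hfsum n (.inl (Nat.cast_pos.2 hn))).unique (hgsum_nat n)
  refine ⟨f, hf, fun t => ?_⟩
  rcases eq_zero_or_pos t with rfl | ht
  · rw [hfg]
    exact_mod_cast hgsum_nat 0
  · exact hfsum t (.inl ht)

end Zero

/-! ### Step polynomials as quasi-polynomials -/

section QuasiPolynomial

variable {q k : ℕ}

/-- The span of the products of at most `k` functions `t ↦ {(c / q) t}` with `c` an integer: step
polynomials with period `q`. -/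
noncomputable def periodicStepDegreeLE (q k : ℕ) : Submodule ℝ (ℝ → ℝ) :=
  Submodule.span ℝ
    ((fun (cs : List ℤ) t => (cs.map fun c : ℤ => Int.fract ((c / q : ℝ) * t)).prod) ''
      {cs | cs.length ≤ k})

lemma isStepPoly1_of_mem_periodicStepDegreeLE {f : ℝ → ℝ} (hf : f ∈ periodicStepDegreeLE q k) :
    IsStepPoly1 k f := by
  obtain ⟨n, coef, φ, rfl⟩ := Submodule.mem_span_set'.1 hf
  choose cs hlen hcs using fun i => (φ i).2
  refine ⟨n, coef, fun i => (cs i).map fun c : ℤ => (c / q : ℚ), fun i => ?_, fun t => ?_⟩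
  · rw [List.length_map]
    exact hlen i
  · -- The coercion of a list of rationals in `IsStepPoly1` elaborates to a monadic bind.
    simp only [Finset.sum_apply, Pi.smul_apply, smul_eq_mul, ← hcs, List.bind_eq_flatMap,
      List.pure_def, ← List.map_eq_flatMap, List.map_map, Function.comp_def, Rat.cast_div,
      Rat.cast_intCast, Rat.cast_natCast]

lemma periodic_of_mem_periodicStepDegreeLE (hq : 0 < q) {f : ℝ → ℝ}
    (hf : f ∈ periodicStepDegreeLE q k) : Function.Periodic f q := by
  induction hf using Submodule.span_induction with
  | mem f hf =>
    obtain ⟨cs, -, rfl⟩ := hf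
    intro t
    have hq' : (q : ℝ) ≠ 0 := Nat.cast_ne_zero.2 hq.ne'
    simp only [mul_add, div_mul_cancel₀ _ hq', Int.fract_add_intCast]
  | zero => exact fun _ => rfl
  | add f g _ _ hf hg => exact hf.add hg
  | smul c f _ hf => exact hf.smul c

lemma exists_eq_sum_mul_pow_of_mem_stepDegreeLE {f : ℝ≥0 → ℝ} (hf : f ∈ stepDegreeLE k) (q : ℕ) :
    ∃ E : ℕ → ℝ → ℝ, (∀ r ≤ k, E r ∈ periodicStepDegreeLE q (k - r)) ∧
      ∀ t : ℝ≥0, f (t / q) = ∑ r ∈ Finset.range (k + 1), E r t * t ^ r := by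
  rw [stepDegreeLE, Submodule.span_pow] at hf
  induction hf using Submodule.span_induction with
  | mem f hf =>
    obtain ⟨r, L, hL, hk, rfl⟩ := exists_eq_pow_mul_prod_of_mem_insert_pow hf
    obtain ⟨cs, rfl⟩ := (Set.range_list_map _).ge hL
    rw [List.length_map] at hk
    refine ⟨Pi.single r ((q⁻¹ : ℝ) ^ r •
      fun t => (cs.map fun c : ℤ => Int.fract ((c / q : ℝ) * t)).prod), fun s _ => ?_, fun t => ?_⟩
    · rcases eq_or_ne s r with rfl | hsr
      · rw [Pi.single_eq_same]
        exact Submodule.smul_mem _ _ (Submodule.subset_span ⟨cs, by simp; omega, rfl⟩)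
      · rw [Pi.single_eq_of_ne hsr]
        exact zero_mem _
    · rw [Finset.sum_eq_single_of_mem r (Finset.mem_range.2 (by omega))
        fun s _ hs => by rw [Pi.single_eq_of_ne hs, Pi.zero_apply, zero_mul], Pi.single_eq_same]
      simp only [Pi.mul_apply, Pi.pow_apply, Pi.smul_apply, smul_eq_mul, Pi.list_prod_apply,
        List.map_map, NNReal.coe_div, NNReal.coe_natCast, div_pow, inv_pow, Function.comp_def,
        mul_div_assoc, div_mul_eq_mul_div]
      ring
  | zero => exact ⟨0, fun _ _ => zero_mem _, fun t => by simp⟩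
  | add f g _ _ hf hg =>
    obtain ⟨E, hE, hfE⟩ := hf
    obtain ⟨E', hE', hgE'⟩ := hg
    refine ⟨E + E', fun r hr => add_mem (hE r hr) (hE' r hr), fun t => ?_⟩
    simp only [Pi.add_apply, hfE, hgE', add_mul, Finset.sum_add_distrib]
  | smul c f _ hf =>
    obtain ⟨E, hE, hfE⟩ := hf
    refine ⟨c • E, fun r hr => Submodule.smul_mem _ c (hE r hr), fun t => ?_⟩
    simp only [Pi.smul_apply, smul_eq_mul, hfE, Finset.mul_sum, mul_assoc]

end QuasiPolynomial

/-! ### Dilates of convex hulls -/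

section ConvexHull

lemma mem_smul_convexHull_image_iff {ι E : Type*} [AddCommGroup E] [Module ℝ E] {T : Finset ι}
    (hT : T.Nonempty) (u : ι → E) {t : ℝ} (ht : 0 ≤ t) {x : E} :
    x ∈ t • convexHull ℝ (u '' T) ↔
      ∃ w : ι → ℝ, (∀ i ∈ T, 0 ≤ w i) ∧ ∑ i ∈ T, w i = t ∧ ∑ i ∈ T, w i • u i = x := by
  classical
  constructor
  · rintro ⟨y, hy, rfl⟩
    obtain ⟨κ, K, w, z, hw, hw1, hz, rfl⟩ := (convexHull_eq _).le hy
    have : Nonempty ι := ⟨hT.choose⟩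
    choose! σ hσT hσz using hz
    refine ⟨fun i => t * ∑ k ∈ K with σ k = i, w k, fun i _ => mul_nonneg ht (Finset.sum_nonneg
      fun k hk => hw k (Finset.mem_filter.1 hk).1), ?_, ?_⟩
    · rw [← Finset.mul_sum, Finset.sum_fiberwise_of_maps_to hσT, hw1, mul_one]
    · dsimp only
      rw [Finset.centerMass_eq_of_sum_1 _ _ hw1, ← Finset.sum_fiberwise_of_maps_to hσT,
        Finset.smul_sum]
      refine Finset.sum_congr rfl fun i _ => ?_
      rw [mul_smul, Finset.sum_smul]
      congr 1
      refine Finset.sum_congr rfl fun k hk => ?_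
      obtain ⟨hkK, rfl⟩ := Finset.mem_filter.1 hk
      rw [hσz k hkK]
  · rintro ⟨w, hw, rfl, rfl⟩
    rcases ht.eq_or_lt with h0 | hpos
    · have hw0 := (Finset.sum_eq_zero_iff_of_nonneg hw).1 h0.symm
      rw [← h0, Set.zero_smul_set (hT.to_set.image u).convexHull,
        Finset.sum_eq_zero fun i hi => by rw [hw0 i hi, zero_smul]]
      rfl
    · refine ⟨T.centerMass w u, T.centerMass_mem_convexHull hw hpos fun i hi =>
        Set.mem_image_of_mem u hi, ?_⟩
      simp only [Finset.centerMass, smul_inv_smul₀ hpos.ne']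

lemma finite_setOf_intCast_mem {d : ℕ} {K : Set (Fin d → ℝ)} (hK : IsCompact K) :
    {x : Fin d → ℤ | (fun i => (x i : ℝ)) ∈ K}.Finite :=
  isCompact_iff_finite.1 ((Topology.IsClosedEmbedding.piMap
    fun _ => Int.isClosedEmbedding_coe_real).isCompact_preimage hK)

lemma smul_convexHull_ratCast_eq {d q : ℕ} (hq : 0 < q) {S : Finset (Fin d → ℚ)}
    {v : (Fin d → ℚ) → Fin d → ℤ} (hv : ∀ s ∈ S, ∀ i, (q : ℚ) * s i = v s i) (t : ℝ) :
    t • convexHull ℝ ((fun (s : Fin d → ℚ) i => (s i : ℝ)) '' S) =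
      (t / q) • convexHull ℝ ((fun s => (Int.cast ∘ v s : Fin d → ℝ)) '' S) := by
  have hq' : (q : ℝ) ≠ 0 := Nat.cast_ne_zero.2 hq.ne'
  have himage : (fun s => (Int.cast ∘ v s : Fin d → ℝ)) '' S =
      (q : ℝ) • (fun (s : Fin d → ℚ) i => (s i : ℝ)) '' S := by
    rw [← Set.image_smul, Set.image_image]
    refine Set.image_congr fun s hs => funext fun i => ?_
    change (v s i : ℝ) = q * s i
    exact_mod_cast (hv s hs i).symm
  rw [himage, convexHull_smul, smul_smul, div_mul_cancel₀ t hq']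

lemma setOf_intCast_mem_smul_convexHull_eq {d q : ℕ} (hq : 0 < q) {S : Finset (Fin d → ℚ)}
    (hS : S.Nonempty) {v : (Fin d → ℚ) → Fin d → ℤ}
    (hv : ∀ s ∈ S, ∀ i, (q : ℚ) * s i = v s i) {t : ℝ} (ht : 0 ≤ t) :
    {x : Fin d → ℤ | (fun i => (x i : ℝ)) ∈
      t • convexHull ℝ ((fun (s : Fin d → ℚ) i => (s i : ℝ)) '' S)} =
      dilatePoints S v (t / q) := by
  ext x
  rw [Set.mem_ofPred_eq, smul_convexHull_ratCast_eq hq hv,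
    mem_smul_convexHull_image_iff hS _ (by positivity)]
  rfl

end ConvexHull

theorem stmt_1
    (d m : ℕ)
    -- P = conv(S), S a finite set of rational points
    (S : Finset (Fin d → ℚ))
    (P : Set (Fin d → ℝ))
    (hP : P = convexHull ℝ ((fun (s : Fin d → ℚ) => fun i => (s i : ℝ)) '' ↑S))
    -- q a positive integer with q·s integral for all s ∈ S
    (q : ℕ) (hq : 0 < q)
    (hSq : ∀ s ∈ S, ∀ i, ∃ z : ℤ, (q : ℚ) * s i = z)
    -- h a polynomial of total degree at most m
    (h : MvPolynomial (Fin d) ℝ) (hh : h.totalDegree ≤ m) :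
    ∃ E : ℕ → ℝ → ℝ,
      -- (a) each E r is a step-polynomial of step degree at most d + m - r
      (∀ r ≤ d + m, IsStepPoly1 (d + m - r) (E r)) ∧
      -- (b) each E r is periodic with period q
      (∀ r ≤ d + m, ∀ t : ℝ, E r (t + q) = E r t) ∧
      -- (c) the weighted Ehrhart quasi-polynomial formula
      (∀ t : ℝ, 0 ≤ t →
        (∑ᶠ x ∈ {x : Fin d → ℤ | (fun i => (x i : ℝ)) ∈ t • P},
          MvPolynomial.eval (fun i => (x i : ℝ)) h) =
        ∑ r ∈ Finset.range (d + m + 1), E r t * t ^ r) := by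
  subst hP
  rcases S.eq_empty_or_nonempty with rfl | hS
  · exact ⟨0, fun r _ => isStepPoly1_of_mem_periodicStepDegreeLE (q := q) (zero_mem _),
      fun _ _ _ => rfl, fun t _ => by simp⟩
  choose! v hv using hSq
  obtain ⟨f, hf, hsum⟩ := exists_hasSum_dilatePoints hS v h
  obtain ⟨E, hE, hfE⟩ := exists_eq_sum_mul_pow_of_mem_stepDegreeLE
    (stepDegreeLE_mono (Nat.add_le_add_left hh d) hf) q
  refine ⟨E, fun r hr => isStepPoly1_of_mem_periodicStepDegreeLE (hE r hr),
    fun r hr => periodic_of_mem_periodicStepDegreeLE hq (hE r hr), fun t ht => ?_⟩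
  have hfinite := finite_setOf_intCast_mem
    (((S.finite_toSet.image fun (s : Fin d → ℚ) i => (s i : ℝ)).isCompact_convexHull ℝ).smul t)
  rw [setOf_intCast_mem_smul_convexHull_eq hq hS hv ht] at hfinite ⊢
  lift t to ℝ≥0 using ht
  rw [finsum_mem_def, ← hfE]
  exact (tsum_eq_finsum (hfinite.subset Set.support_indicator_subset)).symm.trans
    (hsum (t / q)).tsum_eq
end

section
/- Let P_1, …, P_q ⊆ ℝ^d be polytopes with rational vertices, i.e., P_i = conv(S_i) for finite sets S_i ⊆ ℚ^d. Then there exist a finite set Ψ ⊆ ℚ^q and a function E : ℝ^q → ℝ belonging to the ℝ-algebra of functions on ℝ^q generated by the coordinate functions t ↦ t_i together with the functions t ↦ {⟨η, t⟩} for η ∈ Ψ, such that for all t = (t_1, …, t_q) with t_i ≥ 0 for every i, the number of lattice points in the Minkowski sum satisfies #(ℤ^d ∩ (t_1·P_1 + t_2·P_2 + ⋯ + t_q·P_q)) = E(t), where t_i·P_i = {t_i·p : p ∈ P_i} and + denotes Minkowski sum of sets. -/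
open Pointwise

/-!
The substitution `t ↦ t / N` reduces to vertices `z a ∈ ℤ^d`, the vertex `z a` belonging to the
polytope with label `π a`. Then `x ∈ ∑ i, t i • P i` iff `(t, x)` lies in the Cayley cone `C`
generated by the vectors `g a = (e (π a), z a)`. Let `I` be the set of vertices with label `j`. If
`t j ≥ |I|`, every expression of `y = (t, x)` as a nonnegative combination of the generators gives
weight at least `1` to some `a ∈ I`, so the compact polytope of these expressions is a union of
convex sets, and the Euler relation reads
`∑ T ⊆ I, (-1) ^ |T| * [y - ∑ a ∈ T, g a ∈ C] = 0`.
Summed over `x ∈ ℤ^d`, it says that the `|I|`-th difference of the count in the direction `e j`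
vanishes on the whole orthant. Newton's formula therefore expresses the count at `t` polynomially
in the integer parts of the `t i`, with coefficients that are counts at integer translates of the
fractional parts of `t`. As `C` is cut out by integral inequalities, such a coefficient depends
only on finitely many bounded integers `⌊ℓ · t⌋`, and is a polynomial in them by interpolation.
-/

open Finset Set Filter Topology

section ConvexEuler

variable {V : Type*}

open Classical in
/-- The Euler characteristic of a compact convex set: `0` if it is empty and `1` otherwise. -/
noncomputable def convexEuler (s : Set V) : ℝ :=
  if s.Nonempty then 1 else 0

theorem convexEuler_of_nonempty {s : Set V} (hs : s.Nonempty) : convexEuler s = 1 :=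
  if_pos hs

@[simp]
theorem convexEuler_empty : convexEuler (∅ : Set V) = 0 :=
  if_neg Set.not_nonempty_empty

theorem convexEuler_congr {s s' : Set V} (h : s.Nonempty ↔ s'.Nonempty) :
    convexEuler s = convexEuler s' := by
  classical
  exact if_congr h rfl rfl

theorem convexEuler_inter_le_add_inter_ge [AddCommGroup V] [Module ℝ V] {K : Set V}
    (hK : Convex ℝ K) (φ : V →ₗ[ℝ] ℝ) (r : ℝ) :
    convexEuler (K ∩ {x | φ x ≤ r}) + convexEuler (K ∩ {x | r ≤ φ x}) =
      convexEuler K + convexEuler (K ∩ {x | φ x = r}) := by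
  rcases Set.eq_empty_or_nonempty (K ∩ {x | φ x ≤ r}) with hle | hle
  · have hge : K ∩ {x | r ≤ φ x} = K :=
      inter_eq_left.2 fun x hx => show r ≤ φ x from le_of_not_ge fun h => hle.subset ⟨hx, h⟩
    have heq : K ∩ {x | φ x = r} = ∅ :=
      subset_empty_iff.1 (hle ▸ inter_subset_inter_right K fun x hx => hx.le)
    rw [hle, hge, heq, add_comm]
  rcases Set.eq_empty_or_nonempty (K ∩ {x | r ≤ φ x}) with hge | hge
  · have hle : K ∩ {x | φ x ≤ r} = K :=
      inter_eq_left.2 fun x hx => show φ x ≤ r from le_of_not_ge fun h => hge.subset ⟨hx, h⟩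
    have heq : K ∩ {x | φ x = r} = ∅ :=
      subset_empty_iff.1 (hge ▸ inter_subset_inter_right K fun x hx => hx.ge)
    rw [hle, hge, heq]
  · obtain ⟨x, hx, hxr⟩ := hle
    obtain ⟨y, hy, hyr⟩ := hge
    obtain ⟨z, hz, hzr⟩ : r ∈ φ '' K :=
      (hK.linear_image φ).ordConnected.out (mem_image_of_mem φ hx) (mem_image_of_mem φ hy)
        ⟨hxr, hyr⟩
    simp only [convexEuler_of_nonempty (⟨x, hx, hxr⟩ : (K ∩ {x | φ x ≤ r}).Nonempty),
      convexEuler_of_nonempty (⟨y, hy, hyr⟩ : (K ∩ {x | r ≤ φ x}).Nonempty),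
      convexEuler_of_nonempty (⟨x, hx⟩ : K.Nonempty),
      convexEuler_of_nonempty (⟨z, hz, hzr⟩ : (K ∩ {x | φ x = r}).Nonempty)]

theorem eventually_convexEuler_inter_ge_eq [TopologicalSpace V] {K : Set V}
    (hK : IsCompact K) {φ : V → ℝ} (hφ : Continuous φ) (c : ℝ) :
    ∀ᶠ r in 𝓝[<] c, convexEuler (K ∩ {x | r ≤ φ x}) = convexEuler (K ∩ {x | c ≤ φ x}) := by
  rcases Set.eq_empty_or_nonempty (K ∩ {x | c ≤ φ x}) with hempty | ⟨x, hx, hcx⟩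
  · rcases K.eq_empty_or_nonempty with rfl | hne
    · simp
    obtain ⟨m, hm, hmax⟩ := hK.exists_isMaxOn hne hφ.continuousOn
    have hmc : φ m < c := lt_of_not_ge fun h => hempty.subset ⟨hm, h⟩
    filter_upwards [Ioo_mem_nhdsLT hmc] with r hr
    have : K ∩ {x | r ≤ φ x} = ∅ :=
      Set.eq_empty_iff_forall_notMem.2 fun x hx => (hr.1.trans_le hx.2).not_ge (hmax hx.1)
    rw [this, hempty]
  · filter_upwards [self_mem_nhdsWithin] with r hr
    have hrx : r ≤ φ x := (mem_Iio.1 hr).le.trans hcx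
    exact convexEuler_congr (iff_of_true ⟨x, hx, hrx⟩ ⟨x, hx, hcx⟩)

theorem sum_powerset_insert_neg_one_pow_card {ι : Type*} [DecidableEq ι] {a : ι} {I : Finset ι}
    (ha : a ∉ I) (f : Finset ι → ℝ) :
    ∑ T ∈ (insert a I).powerset, (-1) ^ #T * f T =
      ∑ T ∈ I.powerset, (-1) ^ #T * (f T - f (insert a T)) := by
  rw [sum_powerset_insert ha, ← sum_add_distrib]
  refine sum_congr rfl fun T hT => ?_
  rw [card_insert_of_notMem fun h => ha (mem_powerset.1 hT h)]
  ring

variable [AddCommGroup V] [Module ℝ V] [TopologicalSpace V] {ι : Type*}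

theorem isClosed_forall_mem_le (φ : ι → V →L[ℝ] ℝ) (c : ι → ℝ) (T : Finset ι) :
    IsClosed {x | ∀ i ∈ T, c i ≤ φ i x} := by
  simp only [Set.ofPred_forall]
  exact isClosed_biInter fun i _ => isClosed_le continuous_const (φ i).continuous

theorem convex_forall_mem_le (φ : ι → V →L[ℝ] ℝ) (c : ι → ℝ) (T : Finset ι) :
    Convex ℝ {x | ∀ i ∈ T, c i ≤ φ i x} := by
  simp only [Set.ofPred_forall]
  exact convex_iInter₂ fun i _ => convex_halfSpace_ge (φ i).isLinear (c i)

/- The last half-space is shrunk slightly, so that the part of `K` it leaves out, cut closed, is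
still covered by the remaining half-spaces. -/
theorem sum_powerset_convexEuler_eq_zero (φ : ι → V →L[ℝ] ℝ) (c : ι → ℝ) (I : Finset ι)
    {K : Set V} (hK : IsCompact K) (hconv : Convex ℝ K) (hcover : ∀ x ∈ K, ∃ i ∈ I, c i ≤ φ i x) :
    ∑ T ∈ I.powerset, (-1) ^ #T * convexEuler (K ∩ {x | ∀ i ∈ T, c i ≤ φ i x}) = 0 := by
  classical
  induction I using Finset.induction generalizing K with
  | empty =>
    have : K = ∅ := Set.eq_empty_iff_forall_notMem.2 fun x hx => by simpa using hcover x hx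
    simp [this]
  | insert a I ha ih =>
    let H (T : Finset ι) : Set V := {x | ∀ i ∈ T, c i ≤ φ i x}
    obtain ⟨r, hr, hrc⟩ : ∃ r, (∀ T ∈ I.powerset,
        convexEuler ((K ∩ H T) ∩ {x | r ≤ φ a x}) =
          convexEuler ((K ∩ H T) ∩ {x | c a ≤ φ a x})) ∧ r < c a :=
      ((I.powerset.eventually_all.2 fun T _ => eventually_convexEuler_inter_ge_eq
        (hK.inter_right (isClosed_forall_mem_le φ c T)) (φ a).continuous (c a)).and
          self_mem_nhdsWithin).exists
    have hcoverI {x : V} (hx : x ∈ K) (hxr : φ a x ≤ r) : ∃ i ∈ I, c i ≤ φ i x := by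
      obtain ⟨i, hi, hix⟩ := hcover x hx
      rcases Finset.mem_insert.1 hi with rfl | hi
      · exact absurd hix (hxr.trans_lt hrc).not_ge
      · exact ⟨i, hi, hix⟩
    have hle := ih (hK.inter_right (isClosed_le (φ a).continuous continuous_const))
      (hconv.inter (convex_halfSpace_le (φ a).isLinear r)) fun x hx => hcoverI hx.1 hx.2
    have heq := ih (hK.inter_right (isClosed_eq (φ a).continuous continuous_const))
      (hconv.inter (convex_hyperplane (φ a).isLinear r)) fun x hx => hcoverI hx.1 hx.2.le
    rw [sum_powerset_insert_neg_one_pow_card ha, ← sub_eq_zero.2 (hle.trans heq.symm),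
      ← sum_sub_distrib]
    refine sum_congr rfl fun T hT => ?_
    have hinsert : K ∩ {x | ∀ i ∈ insert a T, c i ≤ φ i x} = K ∩ H T ∩ {x | c a ≤ φ a x} := by
      ext x
      simp only [H, Finset.forall_mem_insert, Set.mem_inter_iff, Set.mem_ofPred_eq]
      tauto
    have hval := convexEuler_inter_le_add_inter_ge (hconv.inter (convex_forall_mem_le φ c T))
      (φ a).toLinearMap r
    simp only [ContinuousLinearMap.coe_coe] at hval
    rw [← mul_sub, hinsert, ← hr T hT, Set.inter_right_comm K _ (H T),
      Set.inter_right_comm K _ (H T)]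
    congr 1
    linear_combination -hval

end ConvexEuler

section ConicWeights

variable {ι F : Type*} [Fintype ι] [AddCommGroup F] [Module ℝ F]

/-- The polyhedron of nonnegative weights expressing `y` through the vectors `g`. -/
def conicWeights (g : ι → F) (y : F) : Set (ι → ℝ) :=
  {l | 0 ≤ l ∧ ∑ a, l a • g a = y}

theorem mem_hull_range_iff_nonempty_conicWeights (g : ι → F) (y : F) :
    y ∈ PointedCone.hull ℝ (range g) ↔ (conicWeights g y).Nonempty := by
  rw [PointedCone.hull, Submodule.mem_span_range_iff_exists_fun]
  exact ⟨fun ⟨l, hl⟩ => ⟨fun a => l a, fun a => (l a).2, hl⟩,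
    fun ⟨l, hl, hly⟩ => ⟨fun a => ⟨l a, hl a⟩, hly⟩⟩

theorem convex_conicWeights (g : ι → F) (y : F) : Convex ℝ (conicWeights g y) :=
  (convex_Ici 0).inter ((convex_singleton y).linear_preimage (Fintype.linearCombination ℝ g))

theorem le_div_of_mem_conicWeights {g : ι → F} {m : F →ₗ[ℝ] ℝ} (hm : ∀ a, 0 < m (g a)) {y : F}
    {l : ι → ℝ} (hl : l ∈ conicWeights g y) (a : ι) : l a ≤ m y / m (g a) := by
  rw [le_div_iff₀ (hm a), ← hl.2, map_sum]
  simp only [map_smul, smul_eq_mul]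
  exact Finset.single_le_sum (f := fun b => l b * m (g b))
    (fun b _ => mul_nonneg (hl.1 b) (hm b).le) (Finset.mem_univ a)

theorem isCompact_conicWeights [TopologicalSpace F] [ContinuousAdd F] [ContinuousSMul ℝ F]
    [T1Space F] {g : ι → F} {m : F →ₗ[ℝ] ℝ} (hm : ∀ a, 0 < m (g a)) (y : F) :
    IsCompact (conicWeights g y) := by
  have hclosed : IsClosed (conicWeights g y) :=
    isClosed_Ici.inter (isClosed_singleton.preimage (by fun_prop : Continuous fun l : ι → ℝ =>
      ∑ a, l a • g a))
  exact isCompact_Icc.of_isClosed_subset hclosed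
    fun l hl => ⟨hl.1, le_div_of_mem_conicWeights hm hl⟩

theorem nonempty_conicWeights_inter_one_le_iff (g : ι → F) (y : F) (T : Finset ι) :
    (conicWeights g y ∩ {l | ∀ a ∈ T, 1 ≤ l a}).Nonempty ↔
      (conicWeights g (y - ∑ a ∈ T, g a)).Nonempty := by
  have hsum (l : ι → ℝ) : ∑ a, (l a + (T : Set ι).indicator 1 a) • g a =
      ∑ a, l a • g a + ∑ a ∈ T, g a := by
    classical
    simp [add_smul, sum_add_distrib, Set.indicator_apply, ite_smul]
  constructor
  · rintro ⟨l, ⟨hl, hly⟩, hlT⟩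
    refine ⟨l - (T : Set ι).indicator 1, sub_nonneg.2 ?_, eq_sub_of_add_eq ?_⟩
    · exact Set.indicator_le' hlT fun a _ => hl a
    · simpa [← hsum] using hly
  · rintro ⟨l, hl, hly⟩
    refine ⟨l + (T : Set ι).indicator 1,
      ⟨add_nonneg hl (Set.indicator_nonneg fun _ _ => zero_le_one), ?_⟩, fun a ha => ?_⟩
    · simpa [hly] using hsum l
    · simpa [ha] using hl a

theorem sum_powerset_indicator_hull_eq_zero [TopologicalSpace F] [ContinuousAdd F]
    [ContinuousSMul ℝ F] [T1Space F] {g : ι → F} {m : F →ₗ[ℝ] ℝ} (hm : ∀ a, 0 < m (g a))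
    (I : Finset ι) {y : F} (hcover : ∀ l ∈ conicWeights g y, ∃ a ∈ I, 1 ≤ l a) :
    ∑ T ∈ I.powerset, (-1 : ℝ) ^ #T *
      (PointedCone.hull ℝ (range g) : Set F).indicator 1 (y - ∑ a ∈ T, g a) = 0 := by
  refine Eq.trans ?_ (sum_powerset_convexEuler_eq_zero (ContinuousLinearMap.proj (R := ℝ)) 1 I
    (isCompact_conicWeights hm y) (convex_conicWeights g y) hcover)
  refine sum_congr rfl fun T _ => ?_
  classical
  simp only [indicator_apply, SetLike.mem_coe, mem_hull_range_iff_nonempty_conicWeights,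
    ← nonempty_conicWeights_inter_one_le_iff, convexEuler, ContinuousLinearMap.proj_apply,
    Pi.one_apply]
  congr

end ConicWeights

section Elimination

theorem exists_nonneg_forall_mul_le_iff {𝕜 ι : Type*} [Field 𝕜] [LinearOrder 𝕜]
    [IsStrictOrderedRing 𝕜] (s : Finset ι) (a b : ι → 𝕜) :
    (∃ r, 0 ≤ r ∧ ∀ i ∈ s, r * b i ≤ a i) ↔
      (∀ i ∈ s, 0 ≤ b i → 0 ≤ a i) ∧
        ∀ i ∈ s, ∀ j ∈ s, 0 < b i → b j < 0 → 0 ≤ b i * a j - b j * a i := by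
  constructor
  · rintro ⟨r, hr, h⟩
    refine ⟨fun i hi hb => (mul_nonneg hr hb).trans (h i hi), fun i hi j hj hbi hbj => ?_⟩
    nlinarith [mul_le_mul_of_nonneg_left (h j hj) hbi.le,
      mul_le_mul_of_nonpos_left (h i hi) hbj.le]
  · rintro ⟨hnonneg, hpair⟩
    obtain ⟨r, hr, hlower, hmin⟩ : ∃ r, 0 ≤ r ∧ (∀ j ∈ s, b j < 0 → a j / b j ≤ r) ∧
        (r = 0 ∨ ∃ j ∈ s, b j < 0 ∧ r = a j / b j) := by
      classical
      let bounds := insert 0 ({j ∈ s | b j < 0}.image fun j => a j / b j)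
      have hne : bounds.Nonempty := Finset.insert_nonempty _ _
      refine ⟨bounds.max' hne, bounds.le_max' 0 (Finset.mem_insert_self _ _),
        fun j hj hbj => bounds.le_max' _ (Finset.mem_insert_of_mem (Finset.mem_image_of_mem _
          (Finset.mem_filter.2 ⟨hj, hbj⟩))), ?_⟩
      simpa [bounds, and_assoc, eq_comm] using bounds.max'_mem hne
    refine ⟨r, hr, fun i hi => ?_⟩
    rcases lt_trichotomy (b i) 0 with hbi | hbi | hbi
    · exact (div_le_iff_of_neg hbi).1 (hlower i hi hbi)
    · simpa [hbi] using hnonneg i hi hbi.ge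
    · rcases hmin with rfl | ⟨j, hj, hbj, rfl⟩
      · simpa using hnonneg i hi hbi.le
      · rw [div_mul_eq_mul_div, div_le_iff_of_neg hbj]
        linarith [hpair i hi j hj hbi hbj]

theorem mem_hull_insert {𝕜 F : Type*} [Field 𝕜] [LinearOrder 𝕜] [IsStrictOrderedRing 𝕜]
    [AddCommGroup F] [Module 𝕜 F] (v : F) (s : Set F) (z : F) :
    z ∈ PointedCone.hull 𝕜 (insert v s) ↔
      ∃ r : 𝕜, 0 ≤ r ∧ z - r • v ∈ PointedCone.hull 𝕜 s := by
  rw [PointedCone.hull, Submodule.mem_span_insert]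
  constructor
  · rintro ⟨r, y, hy, rfl⟩
    exact ⟨r, r.2, by rwa [← Nonneg.coe_smul, add_sub_cancel_left]⟩
  · rintro ⟨r, hr, hz⟩
    exact ⟨⟨r, hr⟩, _, hz, (add_sub_cancel (r • v) z).symm⟩

/- Fourier–Motzkin elimination of one generator at a time. -/
theorem exists_integral_inequalities_hull {ι : Type*} (𝕜 : Type*) [Field 𝕜] [LinearOrder 𝕜]
    [IsStrictOrderedRing 𝕜] {κ : Type*} [Fintype κ] (g : ι → κ → ℤ) (s : Finset ι) :
    ∃ L : Finset (κ → ℤ), ∀ z : κ → 𝕜,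
      z ∈ PointedCone.hull 𝕜 ((fun a c => (g a c : 𝕜)) '' s) ↔
        ∀ ℓ ∈ L, 0 ≤ ∑ c, (ℓ c : 𝕜) * z c := by
  classical
  induction s using Finset.induction with
  | empty =>
    refine ⟨Finset.univ.image (fun c => Pi.single c 1) ∪
      Finset.univ.image fun c => Pi.single c (-1), fun z => ?_⟩
    have hsingle (c : κ) (n : ℤ) : ∑ c', ((Pi.single c n : κ → ℤ) c' : 𝕜) * z c' = n * z c := by
      simp [Pi.single_apply, ite_mul]
    simp only [Finset.coe_empty, Set.image_empty, Submodule.span_empty, Submodule.mem_bot,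
      Finset.forall_mem_union, Finset.forall_mem_image, hsingle, funext_iff]
    simp [le_antisymm_iff, forall_and, and_comm]
  | insert a s _ ih =>
    obtain ⟨L, hL⟩ := ih
    let ev (ℓ : κ → ℤ) : ℤ := ℓ ⬝ᵥ g a
    refine ⟨{ℓ ∈ L | 0 ≤ ev ℓ} ∪ Finset.image₂ (fun ℓ ℓ' => ev ℓ • ℓ' - ev ℓ' • ℓ)
      {ℓ ∈ L | 0 < ev ℓ} {ℓ ∈ L | ev ℓ < 0}, fun z => ?_⟩
    have hpair (ℓ : κ → ℤ) (r : 𝕜) : ∑ c, (ℓ c : 𝕜) * (z c - r * g a c) =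
        ∑ c, (ℓ c : 𝕜) * z c - r * ev ℓ := by
      simp [ev, dotProduct, mul_sub, Finset.mul_sum, mul_left_comm]
    have hmem : z ∈ PointedCone.hull 𝕜 ((fun a c => (g a c : 𝕜)) '' ↑(insert a s)) ↔
        ∃ r : 𝕜, 0 ≤ r ∧ ∀ ℓ ∈ L, r * ev ℓ ≤ ∑ c, (ℓ c : 𝕜) * z c := by
      rw [Finset.coe_insert, Set.image_insert_eq, mem_hull_insert]
      simp only [hL, Pi.sub_apply, Pi.smul_apply, smul_eq_mul, hpair, sub_nonneg]
    have hcomb (ℓ ℓ' : κ → ℤ) :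
        ∑ c, ((ev ℓ • ℓ' - ev ℓ' • ℓ) c : 𝕜) * z c =
          ev ℓ * ∑ c, (ℓ' c : 𝕜) * z c - ev ℓ' * ∑ c, (ℓ c : 𝕜) * z c := by
      simp [sub_mul, Finset.mul_sum, mul_assoc]
    simp only [hmem, exists_nonneg_forall_mul_le_iff, Finset.forall_mem_union,
      Finset.forall_mem_image₂, Finset.mem_filter, and_imp, hcomb, Int.cast_nonneg_iff,
      Int.cast_pos, Int.cast_lt_zero]
    grind

end Elimination

section FiniteDifferences

variable {M G : Type*} [AddCommMonoid M] [AddCommGroup G]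

theorem fwdDiff_iter_card_eq_sum_powerset {ι : Type*} (I : Finset ι) (h : M) (f : M → G) (y : M) :
    (fwdDiff h)^[#I] f y = ∑ T ∈ I.powerset, (-1 : ℤ) ^ #T • f (y + (#I - #T) • h) := by
  rw [Finset.sum_powerset_apply_card fun k => (-1 : ℤ) ^ k • f (y + (#I - k) • h),
    fwdDiff_iter_eq_sum_shift, ← Finset.sum_range_reflect]
  refine sum_congr rfl fun k hk => ?_
  have hk : k ≤ #I := Nat.lt_succ_iff.1 (Finset.mem_range.1 hk)
  rw [Nat.add_sub_cancel, Nat.sub_sub_self hk, Nat.choose_symm hk, mul_comm, mul_smul,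
    natCast_zsmul]

theorem fwdDiff_iter_eq_zero_of_le {h : M} {f : M → G} {D n : ℕ} (hf : (fwdDiff h)^[D] f = 0)
    (hDn : D ≤ n) : (fwdDiff h)^[n] f = 0 := by
  induction n, hDn using Nat.le_induction with
  | base => exact hf
  | succ n _ ih => rw [Function.iterate_succ_apply', ih]; exact fwdDiff_const h 0

theorem shift_eq_sum_fwdDiff_iter_of_eq_zero {h : M} {f : M → G} {D : ℕ}
    (hf : (fwdDiff h)^[D] f = 0) (n : ℕ) (y : M) :
    f (y + n • h) = ∑ k ∈ Finset.range D, n.choose k • (fwdDiff h)^[k] f y := by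
  rw [shift_eq_sum_fwdDiff_iter h f]
  rcases le_total (n + 1) D with hle | hle
  · refine Finset.sum_subset (Finset.range_subset_range.2 hle) fun k _ hk => ?_
    rw [Nat.choose_eq_zero_of_lt (by simpa using hk), zero_smul]
  · refine (Finset.sum_subset (Finset.range_subset_range.2 hle) fun k _ hk => ?_).symm
    rw [fwdDiff_iter_eq_zero_of_le hf (by simpa using hk), Pi.zero_apply, smul_zero]

end FiniteDifferences

section Counting

theorem natCast_ncard_eq_sum_indicator {α R : Type*} [Semiring R] {s : Set α} {X : Finset α}
    (hs : s ⊆ X) : (s.ncard : R) = ∑ x ∈ X, s.indicator 1 x := by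
  classical
  have : s = ↑({x ∈ X | x ∈ s} : Finset α) := by
    ext x
    simpa using @hs x
  conv_lhs => rw [this, Set.ncard_coe_finset]
  simp [Set.indicator_apply]

theorem sum_mul_ncard_eq_zero {ι α R : Type*} [Semiring R] (s : Finset ι) (ε : ι → R)
    {A : ι → Set α} (hA : ∀ i, (A i).Finite) (h : ∀ x, ∑ i ∈ s, ε i * (A i).indicator 1 x = 0) :
    ∑ i ∈ s, ε i * ((A i).ncard : R) = 0 := by
  classical
  let X : Finset α := s.biUnion fun i => (hA i).toFinset
  have hX : ∀ i ∈ s, A i ⊆ X := fun i hi x hx =>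
    Finset.mem_biUnion.2 ⟨i, hi, (hA i).mem_toFinset.2 hx⟩
  calc ∑ i ∈ s, ε i * ((A i).ncard : R)
      = ∑ i ∈ s, ∑ x ∈ X, ε i * (A i).indicator 1 x :=
        sum_congr rfl fun i hi => by rw [natCast_ncard_eq_sum_indicator (hX i hi), mul_sum]
    _ = 0 := by
        rw [Finset.sum_comm]
        exact Finset.sum_eq_zero fun x _ => h x

end Counting

section CayleyCone

open scoped NNReal

variable {ι σ κ : Type*} [DecidableEq σ]

/-- The generators of the Cayley cone of the points `z`, which the map `π` distributes over
polytopes labelled by `σ`: the label of each point is recorded by a standard basis vector. -/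
def cayleyGenerator (π : ι → σ) (z : ι → κ → ℤ) (a : ι) : σ ⊕ κ → ℝ :=
  Sum.elim (Pi.single (π a) 1) fun k => (z a k : ℝ)

/-- The lattice points in the fibre over `t` of the Cayley cone. Writing `P i` for the convex hull
of the points with label `i`, this fibre is the Minkowski sum of the dilates `t i • P i`. -/
def cayleyLatticePoints (π : ι → σ) (z : ι → κ → ℤ) (t : σ → ℝ) : Set (κ → ℤ) :=
  {x | Sum.elim t (fun k => (x k : ℝ)) ∈ PointedCone.hull ℝ (range (cayleyGenerator π z))}

variable (π : ι → σ) (z : ι → κ → ℤ)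

theorem ncard_cayleyLatticePoints_sub (t : σ → ℝ) (v : κ → ℤ) :
    {x : κ → ℤ | x - v ∈ cayleyLatticePoints π z t}.ncard = (cayleyLatticePoints π z t).ncard := by
  rw [← Set.ncard_vadd_set v (cayleyLatticePoints π z t)]
  congr 1
  ext x
  simp [Set.mem_vadd_set_iff_neg_vadd_mem, neg_add_eq_sub]

theorem sum_cayleyGenerator {T : Finset ι} {j : σ} (hT : ∀ a ∈ T, π a = j) :
    ∑ a ∈ T, cayleyGenerator π z a =
      Sum.elim ((#T : ℝ) • Pi.single j 1) fun k => ((∑ a ∈ T, z a) k : ℝ) := by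
  ext (i | k)
  · rw [Finset.sum_apply, sum_congr rfl fun a ha => by rw [cayleyGenerator, Sum.elim_inl, hT a ha]]
    simp
  · simp [cayleyGenerator]

theorem mem_conicWeights_cayleyGenerator_iff [Fintype ι] {l : ι → ℝ} {t : σ → ℝ} {x : κ → ℝ} :
    l ∈ conicWeights (cayleyGenerator π z) (Sum.elim t x) ↔
      0 ≤ l ∧ (∀ i, ∑ a with π a = i, l a = t i) ∧ ∑ a, l a • (fun k => (z a k : ℝ)) = x := by
  simp [conicWeights, cayleyGenerator, funext_iff, Pi.single_apply, Finset.sum_filter, eq_comm]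

theorem finite_cayleyLatticePoints [Finite ι] [Finite σ] [Finite κ] (t : σ → ℝ) :
    (cayleyLatticePoints π z t).Finite := by
  cases nonempty_fintype ι
  cases nonempty_fintype σ
  cases nonempty_fintype κ
  let e : ι → σ → ℝ := fun a => Pi.single (π a) 1
  have hcompact : IsCompact (conicWeights e t) :=
    isCompact_conicWeights (m := Fintype.linearCombination ℝ 1) (by simp [e]) t
  have himage : IsCompact ((fun l => ∑ a, l a • fun k => (z a k : ℝ)) '' conicWeights e t) :=
    hcompact.image (by fun_prop)
  have hemb : IsClosedEmbedding (Pi.map fun _ => (↑) : (κ → ℤ) → κ → ℝ) :=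
    .piMap fun _ => Int.isClosedEmbedding_coe_real
  refine (hemb.isCompact_preimage himage).finite_of_discrete.subset fun x hx => ?_
  obtain ⟨l, hl⟩ := (mem_hull_range_iff_nonempty_conicWeights _ _).1 hx
  obtain ⟨hl, hlt, hlx⟩ := (mem_conicWeights_cayleyGenerator_iff π z).1 hl
  refine ⟨l, ⟨hl, funext fun i => ?_⟩, hlx⟩
  simpa [e, Pi.single_apply, Finset.sum_filter, eq_comm] using hlt i

theorem sum_powerset_ncard_cayleyLatticePoints [Finite ι] [Finite σ] [Finite κ] {t : σ → ℝ}
    {j : σ} {I : Finset ι} (hI : ∀ a, a ∈ I ↔ π a = j) (hne : I.Nonempty) (ht : #I ≤ t j) :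
    ∑ T ∈ I.powerset,
      (-1 : ℝ) ^ #T * (cayleyLatticePoints π z (t - (#T : ℝ) • Pi.single j 1)).ncard = 0 := by
  cases nonempty_fintype ι
  cases nonempty_fintype σ
  cases nonempty_fintype κ
  have htranslate {T : Finset ι} (hT : T ∈ I.powerset) (x : κ → ℤ) :
      Sum.elim t (fun k => (x k : ℝ)) - ∑ a ∈ T, cayleyGenerator π z a ∈
          PointedCone.hull ℝ (range (cayleyGenerator π z)) ↔
        x - ∑ a ∈ T, z a ∈ cayleyLatticePoints π z (t - (#T : ℝ) • Pi.single j 1) := by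
    rw [sum_cayleyGenerator π z fun a ha => (hI a).1 (Finset.mem_powerset.1 hT ha),
      cayleyLatticePoints, Set.mem_ofPred_eq, ← Sum.elim_sub_sub]
    simp [Pi.sub_def]
  have hcover (x : κ → ℤ) (l)
      (hl : l ∈ conicWeights (cayleyGenerator π z) (Sum.elim t fun k => (x k : ℝ))) :
      ∃ a ∈ I, 1 ≤ l a := by
    obtain ⟨-, hlt, -⟩ := (mem_conicWeights_cayleyGenerator_iff π z).1 hl
    refine Finset.exists_le_of_sum_le hne ?_
    have : I = ({a | π a = j} : Finset ι) := by ext; simp [hI]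
    simpa [hlt j, this] using ht
  have hpos (a : ι) :
      0 < Fintype.linearCombination ℝ (Sum.elim 1 0 : σ ⊕ κ → ℝ) (cayleyGenerator π z a) := by
    simp [cayleyGenerator, Fintype.linearCombination_apply]
  have hfinite (T : Finset ι) : {x | x - ∑ a ∈ T, z a ∈
      cayleyLatticePoints π z (t - (#T : ℝ) • Pi.single j 1)}.Finite :=
    (finite_cayleyLatticePoints π z _).preimage
      (sub_left_injective (b := ∑ a ∈ T, z a)).injOn
  have hzero := sum_mul_ncard_eq_zero I.powerset (fun T => (-1 : ℝ) ^ #T) hfinite fun x => ?_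
  · simpa only [ncard_cayleyLatticePoints_sub] using hzero
  · rw [← sum_powerset_indicator_hull_eq_zero hpos I (hcover x)]
    refine sum_congr rfl fun T hT => ?_
    classical
    simp [Set.indicator_apply, htranslate hT]

theorem fwdDiff_iter_ncard_cayleyLatticePoints [Fintype ι] [Finite σ] [Finite κ]
    (hπ : π.Surjective) (j : σ) :
    (fwdDiff (Pi.single j 1 : σ → ℝ≥0))^[#{a | π a = j}]
      (fun t => ((cayleyLatticePoints π z fun i => t i).ncard : ℝ)) = 0 := by
  funext t
  rw [fwdDiff_iter_card_eq_sum_powerset]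
  set I : Finset ι := {a | π a = j} with hI
  have h := sum_powerset_ncard_cayleyLatticePoints π z
    (t := fun i => (t + #I • Pi.single j 1 : σ → ℝ≥0) i) (j := j) (I := I) (by simp [I])
    ((hπ j).imp fun a ha => by simpa [I] using ha) (by simp)
  rw [Pi.zero_apply, ← h]
  refine sum_congr rfl fun T hT => ?_
  have hcard : #T ≤ #I := Finset.card_le_card (Finset.mem_powerset.1 hT)
  have hshift : (fun i => ((t + (#I - #T) • Pi.single j 1 : σ → ℝ≥0) i : ℝ)) =
      (fun i => ((t + #I • Pi.single j 1 : σ → ℝ≥0) i : ℝ)) - (#T : ℝ) • Pi.single j 1 := by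
    ext i
    rcases eq_or_ne i j with rfl | hij
    · simp [NNReal.coe_sub (Nat.cast_le.2 hcard), add_sub_assoc]
    · simp [hij]
  rw [hshift]
  simp

theorem exists_cayleyLatticePoints_eq_comp_floor [Finite ι] [Fintype σ] [Finite κ] :
    ∃ (L : Finset (σ ⊕ κ → ℤ)) (Φ : (L → ℤ) → Set (κ → ℤ)), ∀ t : σ → ℝ,
      cayleyLatticePoints π z t = Φ fun ℓ => ⌊∑ i, (ℓ.1 (.inl i) : ℝ) * t i⌋ := by
  cases nonempty_fintype ι
  cases nonempty_fintype κ
  obtain ⟨L, hL⟩ := exists_integral_inequalities_hull ℝ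
    (fun a => Sum.elim (Pi.single (π a) 1) (z a)) Finset.univ
  have hrange : (fun a c => ((Sum.elim (Pi.single (π a) 1) (z a) : σ ⊕ κ → ℤ) c : ℝ)) ''
      (Finset.univ : Finset ι) = range (cayleyGenerator π z) := by
    rw [Finset.coe_univ, Set.image_univ]
    congr! 2 with a
    ext (i | k)
    · simp [cayleyGenerator, Pi.single_apply]
    · simp [cayleyGenerator]
  refine ⟨L, fun n => {x | ∀ ℓ : L, 0 ≤ n ℓ + ∑ k, ℓ.1 (.inr k) * x k}, fun t => ?_⟩
  ext x
  rw [cayleyLatticePoints, Set.mem_ofPred_eq, ← hrange, hL]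
  simp only [Fintype.sum_sum_type, Sum.elim_inl, Sum.elim_inr, Set.mem_ofPred_eq, Subtype.forall]
  refine forall₂_congr fun ℓ _ => ?_
  rw [← Int.floor_add_intCast, Int.floor_nonneg]
  push_cast
  rfl

end CayleyCone

section FunctionAlgebras

variable {𝕜 X : Type*} [Field 𝕜]

theorem polynomial_eval_comp_mem (A : Subalgebra 𝕜 (X → 𝕜)) {u : X → 𝕜} (hu : u ∈ A)
    (p : Polynomial 𝕜) : (fun x => p.eval (u x)) ∈ A := by
  have h : Polynomial.aeval u p ∈ A :=
    Algebra.adjoin_le (Set.singleton_subset_iff.2 hu) (Polynomial.aeval_mem_adjoin_singleton 𝕜 u)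
  convert h using 2 with x
  rw [Polynomial.aeval_fn_apply, Polynomial.coe_aeval_eq_eval]

theorem comp_mem_of_finite_range (A : Subalgebra 𝕜 (X → 𝕜)) {u : X → 𝕜} (hu : u ∈ A)
    (hfin : (range u).Finite) (φ : 𝕜 → 𝕜) : φ ∘ u ∈ A := by
  classical
  convert polynomial_eval_comp_mem A hu (Lagrange.interpolate hfin.toFinset id φ) using 2 with x
  have hx : u x ∈ hfin.toFinset := hfin.mem_toFinset.2 (mem_range_self x)
  exact (Lagrange.eval_interpolate_at_node φ (injOn_id _) hx).symm

theorem pi_comp_mem_of_finite_range {ι : Type*} [Finite ι] (A : Subalgebra 𝕜 (X → 𝕜))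
    {u : ι → X → 𝕜} (hu : ∀ i, u i ∈ A) (hfin : ∀ i, (range (u i)).Finite)
    (Φ : (ι → 𝕜) → 𝕜) : (fun x => Φ fun i => u i x) ∈ A := by
  classical
  cases nonempty_fintype ι
  have hrange := Set.Finite.pi' hfin
  have hsum : (fun x => Φ fun i => u i x) =
      ∑ v ∈ hrange.toFinset, Φ v • ∏ i, (fun c => if v i = c then 1 else 0) ∘ u i := by
    ext x
    simp [Finset.sum_apply, Finset.prod_apply, Finset.prod_boole, ← funext_iff]
  rw [hsum]
  exact sum_mem fun v _ => A.smul_mem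
    (prod_mem fun i _ => comp_mem_of_finite_range A (hu i) (hfin i) _) _

theorem natCast_choose_comp_mem [CharZero 𝕜] (A : Subalgebra 𝕜 (X → 𝕜)) {u : X → ℕ}
    (hu : (fun x => (u x : 𝕜)) ∈ A) (k : ℕ) : (fun x => ((u x).choose k : 𝕜)) ∈ A := by
  convert polynomial_eval_comp_mem A hu
    (Polynomial.C ((k.factorial : 𝕜)⁻¹) * descPochhammer 𝕜 k) using 2 with x
  rw [Nat.cast_choose_eq_descPochhammer_div, Polynomial.eval_mul, Polynomial.eval_C, inv_mul_eq_div]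

/-- Precomposition with `g`, as a homomorphism between algebras of functions. -/
def precompAlgHom (𝕜 : Type*) [Field 𝕜] {X Y : Type*} (g : X → Y) : (Y → 𝕜) →ₐ[𝕜] (X → 𝕜) :=
  AlgHom.pi fun x => Pi.evalAlgHom 𝕜 (fun _ => 𝕜) (g x)

end FunctionAlgebras

section StepAlgebra

open scoped NNReal

variable {σ : Type*} [Fintype σ]

/-- The algebra generated by the coordinate functions and by the fractional parts of the linear
forms in `Ψ`. -/
def stepAlgebra (Ψ : Set (σ → ℚ)) : Subalgebra ℝ ((σ → ℝ) → ℝ) :=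
  Algebra.adjoin ℝ
    ({f | ∃ i, f = fun t => t i} ∪ {f | ∃ η ∈ Ψ, f = fun t => Int.fract (∑ j, (η j : ℝ) * t j)})

theorem coord_mem_stepAlgebra (Ψ : Set (σ → ℚ)) (i : σ) : (fun t => t i) ∈ stepAlgebra Ψ :=
  Algebra.subset_adjoin (.inl ⟨i, rfl⟩)

theorem fract_mem_stepAlgebra {Ψ : Set (σ → ℚ)} {η : σ → ℚ} (hη : η ∈ Ψ) :
    (fun t => Int.fract (∑ j, (η j : ℝ) * t j)) ∈ stepAlgebra Ψ :=
  Algebra.subset_adjoin (.inr ⟨η, hη, rfl⟩)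

theorem stepAlgebra_mono {Ψ Ψ' : Set (σ → ℚ)} (h : Ψ ⊆ Ψ') : stepAlgebra Ψ ≤ stepAlgebra Ψ' :=
  Algebra.adjoin_mono (Set.union_subset_union_right _ fun _ ⟨η, hη, hf⟩ => ⟨η, h hη, hf⟩)

theorem exists_finset_mem_stepAlgebra {Ψ : Set (σ → ℚ)} {E : (σ → ℝ) → ℝ}
    (hE : E ∈ stepAlgebra Ψ) : ∃ Ψ' : Finset (σ → ℚ), E ∈ stepAlgebra (Ψ' : Set (σ → ℚ)) := by
  classical
  have hdir : Directed (· ≤ ·) fun Ψ' : Finset (σ → ℚ) => stepAlgebra (Ψ' : Set (σ → ℚ)) :=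
    Monotone.directed_le fun _ _ h => stepAlgebra_mono (Finset.coe_subset.2 h)
  have hle : stepAlgebra Ψ ≤ ⨆ Ψ' : Finset (σ → ℚ), stepAlgebra (Ψ' : Set (σ → ℚ)) := by
    refine Algebra.adjoin_le ?_
    rw [Subalgebra.coe_iSup_of_directed hdir]
    rintro _ (⟨i, rfl⟩ | ⟨η, -, rfl⟩)
    · exact mem_iUnion.2 ⟨∅, coord_mem_stepAlgebra _ i⟩
    · exact mem_iUnion.2 ⟨{η}, fract_mem_stepAlgebra (by simp)⟩
  have hE' := SetLike.mem_coe.2 (hle hE)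
  rw [Subalgebra.coe_iSup_of_directed hdir] at hE'
  exact mem_iUnion.1 hE'

theorem comp_div_mem_stepAlgebra {E : (σ → ℝ) → ℝ} (hE : E ∈ stepAlgebra univ) (N : ℕ) :
    (fun t => E fun i => t i / N) ∈ stepAlgebra univ := by
  let scale : (σ → ℝ) → σ → ℝ := fun t i => t i / N
  suffices h : stepAlgebra univ ≤ (stepAlgebra univ).comap (precompAlgHom ℝ scale) from h hE
  refine Algebra.adjoin_le ?_
  rintro _ (⟨i, rfl⟩ | ⟨η, -, rfl⟩)
  · change (fun t : σ → ℝ => t i / N) ∈ stepAlgebra univ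
    convert Subalgebra.smul_mem _ (coord_mem_stepAlgebra univ i) ((N : ℝ)⁻¹) using 2 with t
    exact div_eq_inv_mul _ _
  · change (fun t : σ → ℝ => Int.fract (∑ j, (η j : ℝ) * (t j / N))) ∈ stepAlgebra univ
    convert fract_mem_stepAlgebra (Set.mem_univ fun j => η j / N) using 2 with t
    exact congrArg Int.fract (sum_congr rfl fun j _ => by push_cast; ring)

variable (σ) in
/-- The restrictions to the nonnegative orthant of the functions built from coordinates and
fractional parts of rational linear forms. -/
noncomputable def orthantStepAlgebra : Subalgebra ℝ ((σ → ℝ≥0) → ℝ) :=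
  (stepAlgebra univ).map (precompAlgHom ℝ fun t i => (t i : ℝ))

theorem coord_mem_orthantStepAlgebra (i : σ) :
    (fun t => (t i : ℝ)) ∈ orthantStepAlgebra σ :=
  ⟨_, coord_mem_stepAlgebra univ i, rfl⟩

theorem floor_mem_orthantStepAlgebra (ℓ : σ → ℤ) :
    (fun t => (⌊∑ i, (ℓ i : ℝ) * t i⌋ : ℝ)) ∈ orthantStepAlgebra σ := by
  have hlin : (∑ i, (ℓ i : ℝ) • fun t : σ → ℝ => t i) ∈ stepAlgebra univ :=
    sum_mem fun i _ => Subalgebra.smul_mem _ (coord_mem_stepAlgebra univ i) _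
  have hfract := fract_mem_stepAlgebra (Set.mem_univ fun i => (ℓ i : ℚ))
  refine ⟨_, Subalgebra.sub_mem _ hlin hfract, ?_⟩
  ext t
  simp [precompAlgHom, ← Int.self_sub_fract]

theorem natFloor_mem_orthantStepAlgebra (i : σ) :
    (fun t => (⌊(t i : ℝ)⌋₊ : ℝ)) ∈ orthantStepAlgebra σ := by
  classical
  convert floor_mem_orthantStepAlgebra (Pi.single i 1) using 2 with t
  simp [Pi.single_apply, natCast_floor_eq_intCast_floor]

end StepAlgebra

section NewtonInterpolation

variable {𝕜 X M : Type*} [Field 𝕜] [CharZero 𝕜] [AddCommMonoid M] (A : Subalgebra 𝕜 (X → 𝕜))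
  {f : M → 𝕜}

theorem add_nsmul_comp_mem_of_fwdDiff_iter_eq_zero {h : M} {D : ℕ} (hf : (fwdDiff h)^[D] f = 0)
    {n : X → ℕ} (hn : (fun x => (n x : 𝕜)) ∈ A) {y : X → M}
    (hy : ∀ k : ℕ, (fun x => f (y x + k • h)) ∈ A) : (fun x => f (y x + n x • h)) ∈ A := by
  have hdiff (k : ℕ) : (fun x => (fwdDiff h)^[k] f (y x)) ∈ A := by
    have hsum : (fun x => (fwdDiff h)^[k] f (y x)) = ∑ m ∈ Finset.range (k + 1),
        ((-1 : ℤ) ^ (k - m) * k.choose m) • fun x => f (y x + m • h) := by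
      ext x
      rw [fwdDiff_iter_eq_sum_shift, Finset.sum_apply]
      rfl
    rw [hsum]
    exact sum_mem fun m _ => Subalgebra.zsmul_mem _ (hy m) _
  have hnewton : (fun x => f (y x + n x • h)) = ∑ k ∈ Finset.range D,
      (fun x => ((n x).choose k : 𝕜)) * fun x => (fwdDiff h)^[k] f (y x) := by
    ext x
    rw [shift_eq_sum_fwdDiff_iter_of_eq_zero hf, Finset.sum_apply]
    exact sum_congr rfl fun k _ => nsmul_eq_mul _ _
  rw [hnewton]
  exact sum_mem fun k _ => A.mul_mem (natCast_choose_comp_mem A hn k) (hdiff k)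

theorem add_sum_nsmul_comp_mem_of_fwdDiff_iter_eq_zero {σ : Type*} {h : σ → M} {D : σ → ℕ}
    (hf : ∀ j, (fwdDiff (h j))^[D j] f = 0) {n : σ → X → ℕ}
    (hn : ∀ j, (fun x => (n j x : 𝕜)) ∈ A) (J : Finset σ) {y : X → M}
    (hy : ∀ k : σ → ℕ, (fun x => f (y x + ∑ j ∈ J, k j • h j)) ∈ A) :
    (fun x => f (y x + ∑ j ∈ J, n j x • h j)) ∈ A := by
  classical
  induction J using Finset.induction_on generalizing y with
  | empty => simpa using hy 0
  | insert j J hj ih =>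
    simp only [Finset.sum_insert hj, add_comm (_ • h j), ← add_assoc] at hy ⊢
    refine add_nsmul_comp_mem_of_fwdDiff_iter_eq_zero A (hf j) (hn j) fun k => ?_
    simp only [add_right_comm _ _ (k • h j)]
    refine ih fun l => ?_
    convert hy (Function.update l j k) using 3 with x
    rw [Function.update_self, add_right_comm]
    congr 2
    exact sum_congr rfl fun i hi => by rw [Function.update_of_ne (ne_of_mem_of_not_mem hi hj)]

end NewtonInterpolation

section OrthantCount

open scoped NNReal

variable {σ : Type*} [Fintype σ]

theorem finite_range_floor_sum_mul_fract_add (ℓ : σ → ℤ) (k : σ → ℕ) :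
    (range fun t : σ → ℝ => ⌊∑ i, (ℓ i : ℝ) * (Int.fract (t i) + k i)⌋).Finite := by
  let b : ℝ := ∑ i, |(ℓ i : ℝ)| * (1 + k i)
  refine (Set.finite_Icc ⌊-b⌋ ⌊b⌋).subset ?_
  rintro _ ⟨t, rfl⟩
  have hb : |∑ i, (ℓ i : ℝ) * (Int.fract (t i) + k i)| ≤ b := by
    refine (abs_sum_le_sum_abs _ _).trans (sum_le_sum fun i _ => ?_)
    have hfract : 0 ≤ Int.fract (t i) + k i := add_nonneg (Int.fract_nonneg _) (Nat.cast_nonneg _)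
    rw [abs_mul, abs_of_nonneg hfract]
    gcongr
    exact (Int.fract_lt_one _).le
  exact ⟨Int.floor_mono (abs_le.1 hb).1, Int.floor_mono (abs_le.1 hb).2⟩

theorem floor_sum_mul_fract_add_mem_orthantStepAlgebra (ℓ : σ → ℤ) (k : σ → ℕ) :
    (fun t => (⌊∑ i, (ℓ i : ℝ) * (Int.fract (t i : ℝ) + k i)⌋ : ℝ)) ∈ orthantStepAlgebra σ := by
  have hshift : (fun t : σ → ℝ≥0 => (⌊∑ i, (ℓ i : ℝ) * (Int.fract (t i : ℝ) + k i)⌋ : ℝ)) =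
      (fun t => (⌊∑ i, (ℓ i : ℝ) * t i⌋ : ℝ)) +
        ∑ i, (ℓ i : ℝ) • ((fun _ => (k i : ℝ)) - fun t => (⌊(t i : ℝ)⌋₊ : ℝ)) := by
    ext t
    have : ∑ i, (ℓ i : ℝ) * (Int.fract (t i : ℝ) + k i) =
        ∑ i, (ℓ i : ℝ) * t i + (∑ i, ℓ i * (k i - ⌊(t i : ℝ)⌋) : ℤ) := by
      push_cast
      rw [← sum_add_distrib]
      exact sum_congr rfl fun i _ => by rw [← Int.self_sub_floor]; ring
    rw [this, Int.floor_add_intCast]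
    simp [Finset.sum_apply, natCast_floor_eq_intCast_floor]
  rw [hshift]
  exact add_mem (floor_mem_orthantStepAlgebra ℓ) (sum_mem fun i _ => Subalgebra.smul_mem _
    (Subalgebra.sub_mem _ (Subalgebra.algebraMap_mem _ (k i : ℝ))
      (natFloor_mem_orthantStepAlgebra i)) _)

theorem mem_orthantStepAlgebra_of_fwdDiff_iter_eq_zero [DecidableEq σ] {f : (σ → ℝ≥0) → ℝ}
    {D : σ → ℕ} (hf : ∀ j, (fwdDiff (Pi.single j 1))^[D j] f = 0) {α : Type*} [Finite α]
    {ℓ : α → σ → ℤ} {Φ : (α → ℤ) → ℝ} (hΦ : ∀ t, f t = Φ fun a => ⌊∑ i, (ℓ a i : ℝ) * t i⌋) :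
    f ∈ orthantStepAlgebra σ := by
  let y : (σ → ℝ≥0) → σ → ℝ≥0 := fun t i => ⟨Int.fract (t i : ℝ), Int.fract_nonneg _⟩
  have hy (t : σ → ℝ≥0) (k : σ → ℕ) (i : σ) :
      ((y t + ∑ j, k j • Pi.single j 1 : σ → ℝ≥0) i : ℝ) = Int.fract (t i : ℝ) + k i := by
    rw [Pi.add_apply, Finset.sum_apply, NNReal.coe_add]
    simp [y, Pi.single_apply]
    rfl
  have hfloor (t : σ → ℝ≥0) : y t + ∑ j, ⌊(t j : ℝ)⌋₊ • Pi.single j 1 = t := by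
    ext i
    rw [hy t fun j => ⌊(t j : ℝ)⌋₊, natCast_floor_eq_intCast_floor (t i).coe_nonneg,
      Int.fract_add_floor]
  suffices h : (fun t => f (y t + ∑ j, ⌊(t j : ℝ)⌋₊ • Pi.single j 1)) ∈ orthantStepAlgebra σ by
    simpa only [hfloor] using h
  refine add_sum_nsmul_comp_mem_of_fwdDiff_iter_eq_zero _ hf natFloor_mem_orthantStepAlgebra
    Finset.univ fun k => ?_
  simp only [hΦ, hy]
  convert pi_comp_mem_of_finite_range (orthantStepAlgebra σ)
    (fun a => floor_sum_mul_fract_add_mem_orthantStepAlgebra (ℓ a) k) (fun a => ?_)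
    (fun v => Φ fun a => ⌊v a⌋) using 4
  · exact (Int.floor_intCast _).symm
  · refine ((finite_range_floor_sum_mul_fract_add (ℓ a) k).image ((↑) : ℤ → ℝ)).subset ?_
    rintro _ ⟨t, rfl⟩
    exact ⟨_, ⟨fun i => t i, rfl⟩, rfl⟩

theorem ncard_cayleyLatticePoints_mem_orthantStepAlgebra {ι κ : Type*} [Finite ι] [Finite κ]
    [DecidableEq σ] {π : ι → σ} (hπ : π.Surjective) (z : ι → κ → ℤ) :
    (fun t => ((cayleyLatticePoints π z fun i => t i).ncard : ℝ)) ∈ orthantStepAlgebra σ := by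
  cases nonempty_fintype ι
  obtain ⟨L, Φ, hΦ⟩ := exists_cayleyLatticePoints_eq_comp_floor π z
  exact mem_orthantStepAlgebra_of_fwdDiff_iter_eq_zero
    (fwdDiff_iter_ncard_cayleyLatticePoints π z hπ) (ℓ := fun (ℓ : L) i => ℓ.1 (.inl i))
    (Φ := fun v => (Φ v).ncard) fun t => by rw [hΦ]

end OrthantCount

section MinkowskiSums

variable {𝕜 E σ : Type*} [Field 𝕜] [LinearOrder 𝕜] [IsStrictOrderedRing 𝕜] [AddCommGroup E]
  [Module 𝕜 E]

theorem smul_stdSimplex_eq {α : Type*} [Fintype α] [Nonempty α] {r : 𝕜} (hr : 0 ≤ r) :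
    r • stdSimplex 𝕜 α = {l | 0 ≤ l ∧ ∑ a, l a = r} := by
  classical
  have hne : (stdSimplex 𝕜 α).Nonempty := ⟨_, single_mem_stdSimplex 𝕜 (Classical.arbitrary α)⟩
  ext l
  rcases hr.eq_or_lt with rfl | hpos
  · rw [Set.zero_smul_set hne, Set.mem_zero, Set.mem_ofPred_eq]
    refine ⟨by rintro rfl; simp, fun ⟨hl, hsum⟩ => funext fun a => ?_⟩
    exact (Fintype.sum_eq_zero_iff_of_nonneg hl).1 hsum ▸ rfl
  · simp only [Set.mem_smul_set_iff_inv_smul_mem₀ hpos.ne', stdSimplex, Set.mem_ofPred_eq,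
      Pi.smul_apply, smul_eq_mul, ← mul_sum, inv_mul_eq_one₀ hpos.ne', eq_comm (a := r)]
    exact and_congr_left fun _ => forall_congr' fun a => by simp [hpos]

theorem mem_smul_convexHull_range_iff {α : Type*} [Fintype α] [Nonempty α] {v : α → E}
    {r : 𝕜} (hr : 0 ≤ r) {x : E} :
    x ∈ r • convexHull 𝕜 (range v) ↔ ∃ l : α → 𝕜, (0 ≤ l ∧ ∑ a, l a = r) ∧ ∑ a, l a • v a = x := by
  classical
  have hsimplex : convexHull 𝕜 (range v) = Fintype.linearCombination 𝕜 v '' stdSimplex 𝕜 α := by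
    rw [← convexHull_rangle_single_eq_stdSimplex, LinearMap.image_convexHull, ← range_comp]
    congr 2
    ext a
    simp
  rw [hsimplex, ← image_smul_set, smul_stdSimplex_eq hr]
  rfl

theorem mem_sum_smul_convexHull_range_iff [Fintype σ] {α : σ → Type*} [∀ i, Fintype (α i)]
    [∀ i, Nonempty (α i)] {v : ∀ i, α i → E} {t : σ → 𝕜} (ht : 0 ≤ t) {x : E} :
    x ∈ ∑ i, t i • convexHull 𝕜 (range (v i)) ↔
      ∃ l : (Σ i, α i) → 𝕜, 0 ≤ l ∧ (∀ i, ∑ a, l ⟨i, a⟩ = t i) ∧ ∑ a, l a • v a.1 a.2 = x := by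
  simp only [Set.mem_fintype_sum, mem_smul_convexHull_range_iff (ht _), Fintype.sum_sigma]
  constructor
  · rintro ⟨y, hy, rfl⟩
    choose l hl hly using hy
    exact ⟨fun a => l a.1 a.2, fun a => (hl a.1).1 a.2, fun i => (hl i).2, by simp only [hly]⟩
  · rintro ⟨l, hl, hlt, rfl⟩
    exact ⟨_, fun i => ⟨fun a => l ⟨i, a⟩, ⟨fun a => hl _, hlt i⟩, rfl⟩, rfl⟩

end MinkowskiSums

section Polytopes

open scoped NNReal

variable {σ κ : Type*} [Fintype σ] {α : σ → Type*}

theorem mem_cayleyLatticePoints_sigma_fst_iff [DecidableEq σ] [∀ i, Finite (α i)]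
    [∀ i, Nonempty (α i)] {z : ∀ i, α i → κ → ℤ} {t : σ → ℝ} (ht : 0 ≤ t) {x : κ → ℤ} :
    x ∈ cayleyLatticePoints Sigma.fst (fun a : Σ i, α i => z a.1 a.2) t ↔
      (fun k => (x k : ℝ)) ∈ ∑ i, t i • convexHull ℝ (range fun a k => (z i a k : ℝ)) := by
  have := fun i => Fintype.ofFinite (α i)
  have hfibre (l : (Σ i, α i) → ℝ) (i : σ) : ∑ a with a.1 = i, l a = ∑ a, l ⟨i, a⟩ := by
    rw [Finset.sum_filter, Fintype.sum_sigma, Fintype.sum_eq_single i fun j hj => by simp [hj]]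
    simp
  rw [cayleyLatticePoints, Set.mem_ofPred_eq, mem_hull_range_iff_nonempty_conicWeights,
    mem_sum_smul_convexHull_range_iff ht]
  simp only [Set.Nonempty, mem_conicWeights_cayleyGenerator_iff, hfibre]

theorem exists_mem_stepAlgebra_ncard_sum_smul_integral_eq [Finite κ] [∀ i, Finite (α i)]
    [∀ i, Nonempty (α i)] (z : ∀ i, α i → κ → ℤ) :
    ∃ E ∈ stepAlgebra univ, ∀ t : σ → ℝ, 0 ≤ t → ({x : κ → ℤ | (fun k => (x k : ℝ)) ∈
      ∑ i, t i • convexHull ℝ (range fun a k => (z i a k : ℝ))}.ncard : ℝ) = E t := by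
  classical
  have hfst : (Sigma.fst : (Σ i, α i) → σ).Surjective := Sigma.fst_surjective
  obtain ⟨E, hE, hcount⟩ := ncard_cayleyLatticePoints_mem_orthantStepAlgebra hfst
    fun a : Σ i, α i => z a.1 a.2
  refine ⟨E, hE, fun t ht => ?_⟩
  have hEt : E t = _ := congrFun hcount fun i => ⟨t i, ht i⟩
  rw [hEt]
  congr 2
  ext x
  exact (mem_cayleyLatticePoints_sigma_fst_iff ht).symm

theorem exists_forall_eq_intCast_div_natCast {β : Type*} [Finite β] (f : β → ℚ) :
    ∃ (N : ℕ) (m : β → ℤ), ∀ b, f b = m b / N := by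
  have := Fintype.ofFinite β
  choose k hk using fun b => Finset.dvd_prod_of_mem (fun b => (f b).den) (Finset.mem_univ b)
  have hpos : 0 < ∏ b, (f b).den := Finset.prod_pos fun b _ => (f b).den_pos
  refine ⟨∏ b, (f b).den, fun b => (f b).num * k b, fun b => ?_⟩
  have hkb : (k b : ℚ) ≠ 0 := by
    rintro h
    simp [hk b, Nat.cast_eq_zero.1 h] at hpos
  rw [hk b]
  push_cast
  rw [mul_div_mul_right _ _ hkb, Rat.num_div_den]

theorem exists_mem_stepAlgebra_ncard_sum_smul_rational_eq [Finite κ] [∀ i, Finite (α i)]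
    (v : ∀ i, α i → κ → ℚ) :
    ∃ E ∈ stepAlgebra univ, ∀ t : σ → ℝ, 0 ≤ t → ({x : κ → ℤ | (fun k => (x k : ℝ)) ∈
      ∑ i, t i • convexHull ℝ (range fun a k => (v i a k : ℝ))}.ncard : ℝ) = E t := by
  classical
  by_cases hne : ∀ i, Nonempty (α i)
  · obtain ⟨N, z, hz⟩ := exists_forall_eq_intCast_div_natCast
      fun a : (Σ i, α i) × κ => v a.1.1 a.1.2 a.2
    obtain ⟨E, hE, hcount⟩ := exists_mem_stepAlgebra_ncard_sum_smul_integral_eq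
      fun i a k => z (⟨i, a⟩, k)
    have hhull (i : σ) : convexHull ℝ (range fun a k => (v i a k : ℝ)) =
        (N : ℝ)⁻¹ • convexHull ℝ (range fun a k => (z (⟨i, a⟩, k) : ℝ)) := by
      rw [← convexHull_smul, Set.smul_set_range]
      congr! 3 with a
      ext k
      simp [hz (⟨i, a⟩, k), div_eq_inv_mul]
    refine ⟨_, comp_div_mem_stepAlgebra hE N, fun t ht => ?_⟩
    rw [← hcount _ fun i => div_nonneg (ht i) N.cast_nonneg]
    simp only [hhull, smul_smul, div_eq_mul_inv]
  · obtain ⟨i, hi⟩ := not_forall.1 hne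
    have := not_nonempty_iff.1 hi
    refine ⟨0, zero_mem _, fun t _ => ?_⟩
    have hempty : ∑ j, t j • convexHull ℝ (range fun a k => (v j a k : ℝ)) = ∅ := by
      rw [← add_sum_erase _ _ (Finset.mem_univ i), range_eq_empty, convexHull_empty,
        Set.smul_set_empty, Set.empty_add]
    simp [hempty]

end Polytopes

theorem stmt_2
    (d q : ℕ)
    -- the polytopes P i = conv(S i) with rational vertices
    (S : Fin q → Finset (Fin d → ℚ))
    (P : Fin q → Set (Fin d → ℝ))
    (hP : ∀ i, P i = convexHull ℝ ((fun (s : Fin d → ℚ) => fun j => (s j : ℝ)) '' ↑(S i))) :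
    ∃ (Ψ : Finset (Fin q → ℚ)) (E : (Fin q → ℝ) → ℝ),
      -- E belongs to the ℝ-algebra generated by the coordinate functions and the
      -- step-linear functions t ↦ {⟨η, t⟩}, η ∈ Ψ
      E ∈ Algebra.adjoin ℝ
        ({f : (Fin q → ℝ) → ℝ | ∃ i : Fin q, f = fun t => t i} ∪
          {f : (Fin q → ℝ) → ℝ | ∃ η ∈ Ψ,
            f = fun t => Int.fract (∑ j, (η j : ℝ) * t j)}) ∧
      -- the lattice-point count of the Minkowski sum is given by E
      ∀ t : Fin q → ℝ, (∀ i, 0 ≤ t i) →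
        (({x : Fin d → ℤ | (fun i => (x i : ℝ)) ∈ ∑ i, t i • P i}.ncard : ℝ)) = E t := by
  obtain ⟨E, hE, hcount⟩ := exists_mem_stepAlgebra_ncard_sum_smul_rational_eq
    fun i (s : S i) => s.1
  obtain ⟨Ψ, hΨ⟩ := exists_finset_mem_stepAlgebra hE
  refine ⟨Ψ, E, hΨ, fun t ht => ?_⟩
  simp only [hP, Set.image_eq_range]
  exact hcount t ht
end

section
/- Assume that μ_1, …, μ_N generate (ℝ^d)* as a cone. Let τ be an admissible μ-chamber and let b be a point of the topological closure of τ. Then the function 𝟙_{P(b)} − Σ_{B ∈ 𝓑_τ} 𝟙_{s_B(b) + c_B} (a finite linear combination of indicator functions from ℝ^d to ℝ) belongs to the ℝ-linear span of the set of indicator functions 𝟙_{s + C}, where s ranges over ℝ^d and C ranges over polyhedral cones in ℝ^d containing a line. -/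
/-!
Work first at a parameter `b₀` inside the chamber, where `P(b₀)` is a simple polytope whose vertices
are the points `s_B(b₀)`, `B ∈ 𝓑_τ`, and whose faces correspond to the sets `K` contained in some
such `B`. A linear form `ξ` that is constant along no edge assigns to each face its `ξ`-minimal
vertex; this partitions the sets `K` into intervals `[D(B), B]`, where `D(B)` collects the edges at
`s_B(b₀)` that descend in the direction of `ξ`. An alternating sum over an interval vanishes unless
the interval is a point, so evaluating at `x` the signed sum of the indicators of
`{x | ∀ j ∈ K, μ_j(x) ≤ b_j}` amounts to comparing `D(B)` with the set of constraints satisfied by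
`x`. If `x ∉ P(b)`, a perturbation `ξ` of a violated `μ_k` makes every term vanish; if `x ∈ P(b)`,
only the `ξ`-maximal vertex contributes. This is the Brianchon–Gram identity, and the comparison
only uses that the `s_B(b)` are feasible for `b`, so it persists on the closure of the chamber.
Finally, the terms with `K` a basis are the cones at the vertices, and all others contain a line.
-/

open Module Filter Topology

lemma sum_Icc_neg_one_pow_card {ι A : Type*} [DecidableEq ι] [Ring A] (R S : Finset ι) :
    ∑ K ∈ Finset.Icc R S, (-1 : A) ^ K.card = if R = S then (-1) ^ R.card else 0 := by
  by_cases hRS : R ⊆ S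
  · have hdisj : ∀ K ∈ (S \ R).powerset, Disjoint R K := fun K hK =>
      Finset.disjoint_sdiff.mono_right (Finset.mem_powerset.1 hK)
    have hinj : Set.InjOn (R ∪ ·) (S \ R).powerset := fun K hK L hL
        (h : R ∪ K = R ∪ L) => by
      rw [← Finset.union_sdiff_cancel_left (hdisj K hK), h,
        Finset.union_sdiff_cancel_left (hdisj L hL)]
    have hpowerset : ∑ K ∈ (S \ R).powerset, (-1 : A) ^ K.card = if S \ R = ∅ then 1 else 0 :=
      mod_cast congrArg (Int.cast : ℤ → A) (Finset.sum_powerset_neg_one_pow_card (x := S \ R))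
    have hiff : S \ R = ∅ ↔ R = S :=
      Finset.sdiff_eq_empty_iff_subset.trans ⟨hRS.antisymm, fun h => h.ge⟩
    rw [Finset.Icc_eq_image_powerset hRS, Finset.sum_image hinj]
    calc ∑ K ∈ (S \ R).powerset, (-1 : A) ^ (R ∪ K).card
        = ∑ K ∈ (S \ R).powerset, (-1 : A) ^ R.card * (-1) ^ K.card :=
          Finset.sum_congr rfl fun K hK => by
            rw [Finset.card_union_of_disjoint (hdisj K hK), pow_add]
      _ = if R = S then (-1) ^ R.card else 0 := by
          rw [← Finset.mul_sum, hpowerset, mul_ite, mul_one, mul_zero, if_congr hiff rfl rfl]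
  · rw [Finset.Icc_eq_empty hRS, Finset.sum_empty, if_neg fun h => hRS h.le]

lemma subset_interior_of_isPreconnected {X : Type*} [TopologicalSpace X] {s t : Set X}
    (hs : IsPreconnected s) (hst : Disjoint s (frontier t)) (hne : (s ∩ t).Nonempty) :
    s ⊆ interior t := by
  obtain ⟨x, hxs, hxt⟩ := hne
  have hcover : s ⊆ interior t ∪ interior tᶜ :=
    hst.subset_compl_right.trans compl_frontier_eq_union_interior.subset
  exact hs.subset_left_of_subset_union isOpen_interior isOpen_interior
    (disjoint_compl_right.mono interior_subset interior_subset) hcover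
    ⟨x, hxs, (hcover hxs).resolve_right fun h => interior_subset h hxt⟩

lemma exists_dual_forall_ne_zero_forall_neg {V κ : Type*} [AddCommGroup V] [Module ℝ V]
    [Finite κ] {u : κ → V} (hu : ∀ i, u i ≠ 0) (ξ₀ : Dual ℝ V) {S : Set V} (hS : S.Finite)
    (hneg : ∀ v ∈ S, ξ₀ v < 0) :
    ∃ ξ : Dual ℝ V, (∀ i, ξ (u i) ≠ 0) ∧ ∀ v ∈ S, ξ v < 0 := by
  obtain ⟨η, hη⟩ := exists_dual_forall_apply_ne_zero (K := ℝ) u hu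
  have htendsto (x : V) : Tendsto (fun ε : ℝ => (ξ₀ + ε • η) x) (𝓝[>] 0) (𝓝 (ξ₀ x)) := by
    have hcont : Continuous fun ε : ℝ => ξ₀ x + ε * η x := by fun_prop
    simpa using (hcont.tendsto 0).mono_left nhdsWithin_le_nhds
  have hne : ∀ᶠ ε : ℝ in 𝓝[>] 0, ∀ i, (ξ₀ + ε • η) (u i) ≠ 0 := eventually_all.2 fun i => by
    by_cases h : ξ₀ (u i) = 0
    · filter_upwards [self_mem_nhdsWithin] with ε hε
      simpa [h] using ⟨(Set.mem_Ioi.1 hε).ne', hη i⟩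
    · exact (htendsto _).eventually_ne h
  have hlt : ∀ᶠ ε : ℝ in 𝓝[>] 0, ∀ v ∈ S, (ξ₀ + ε • η) v < 0 :=
    (eventually_all_finite hS).2 fun v hv => (htendsto v).eventually_lt_const (hneg v hv)
  obtain ⟨ε, hε⟩ := (hne.and hlt).exists
  exact ⟨_, hε⟩

section FormBasis

variable {ι V : Type*} [AddCommGroup V] [Module ℝ V] {μ : ι → Dual ℝ V} {B : Finset ι}

/-- The forms `μ j`, `j ∈ B`, constitute a basis of the dual space. -/
def IsFormBasis (μ : ι → Dual ℝ V) (B : Finset ι) : Prop :=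
  LinearIndependent ℝ (fun j : {j // j ∈ B} => μ j.1) ∧
    Submodule.span ℝ (Set.range fun j : {j // j ∈ B} => μ j.1) = ⊤

/-- For each basis `B` of forms, `s B b` is the vertex at which these forms take the values
prescribed by `b`. -/
def IsVertexMap (μ : ι → Dual ℝ V) (s : Finset ι → (ι → ℝ) →ₗ[ℝ] V) : Prop :=
  ∀ B, IsFormBasis μ B → ∀ b, ∀ j ∈ B, μ j (s B b) = b j

lemma span_range_dual_eq_top_iff {κ : Type*} [Finite κ] {φ : κ → Dual ℝ V} :
    Submodule.span ℝ (Set.range φ) = ⊤ ↔ ∀ x, (∀ i, φ i x = 0) → x = 0 := by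
  refine ⟨fun h x hx => (forall_dual_apply_eq_zero_iff ℝ x).1 fun ψ => ?_, fun h => ?_⟩
  · have hψ : ψ ∈ Submodule.span ℝ (Set.range φ) := h ▸ Submodule.mem_top
    have hle : Submodule.span ℝ (Set.range φ) ≤ LinearMap.ker (Dual.eval ℝ V x) :=
      Submodule.span_le.2 (Set.range_subset_iff.2 hx)
    exact hle hψ
  · refine eq_top_iff.2 fun ψ _ => mem_span_of_iInf_ker_le_ker fun x hx => ?_
    simp only [Submodule.mem_iInf, LinearMap.mem_ker] at hx
    simp [h x hx]

lemma isFormBasis_iff_card_eq_finrank :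
    IsFormBasis μ B ↔ B.card = finrank ℝ V ∧ ∀ x, (∀ j ∈ B, μ j x = 0) → x = 0 := by
  rw [IsFormBasis, span_range_dual_eq_top_iff]
  simp only [Subtype.forall]
  refine and_congr_left fun hker => ?_
  have hspan := span_range_dual_eq_top_iff (φ := fun j : {j // j ∈ B} => μ j.1).2
    (by simpa only [Subtype.forall] using hker)
  rw [← Subspace.dual_finrank_eq (K := ℝ) (V := V), ← Fintype.card_coe]
  exact ⟨fun hli => (finrank_eq_card_basis (Basis.mk hli hspan.ge)).symm,
    linearIndependent_of_top_le_span_of_card_eq_finrank hspan.ge⟩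

lemma IsFormBasis.ext (hB : IsFormBasis μ B) {x y : V} (h : ∀ j ∈ B, μ j x = μ j y) : x = y :=
  sub_eq_zero.1 <| (isFormBasis_iff_card_eq_finrank.1 hB).2 _ fun j hj => by simp [h j hj]

lemma exists_isFormBasis_subset [Finite ι] {T : Set ι} (hT : ∀ x, (∀ j ∈ T, μ j x = 0) → x = 0) :
    ∃ B : Finset ι, ↑B ⊆ T ∧ IsFormBasis μ B := by
  obtain ⟨B, hBT, -, hspan, hli⟩ :=
    exists_linearIndepOn_extension (linearIndepOn_empty ℝ μ) (Set.empty_subset T)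
  lift B to Finset ι using B.toFinite
  have hT' : Submodule.span ℝ (μ '' T) = ⊤ := by
    rw [Set.image_eq_range, span_range_dual_eq_top_iff]
    simpa only [Subtype.forall] using hT
  refine ⟨B, hBT, hli, top_unique ?_⟩
  rw [Set.image_eq_range μ (B : Set ι)] at hspan
  exact hT' ▸ Submodule.span_le.2 hspan

variable {s : Finset ι → (ι → ℝ) →ₗ[ℝ] V}

lemma IsVertexMap.eq_of_forall_apply_eq (hs : IsVertexMap μ s) (hB : IsFormBasis μ B)
    {b : ι → ℝ} {x : V} (h : ∀ j ∈ B, μ j x = b j) : s B b = x :=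
  hB.ext fun j hj => (hs B hB b j hj).trans (h j hj).symm

variable [DecidableEq ι]

/-- The direction of the edge line through the vertices `s B b` obtained by releasing the
constraint `j ∈ B`; `μ j` increases along it at unit speed. -/
def edgeVector (s : Finset ι → (ι → ℝ) →ₗ[ℝ] V) (B : Finset ι) (j : ι) : V :=
  s B (Pi.single j 1)

variable {i j k : ι}

lemma IsVertexMap.apply_edgeVector_self (hs : IsVertexMap μ s) (hB : IsFormBasis μ B)
    (hj : j ∈ B) : μ j (edgeVector s B j) = 1 :=
  (hs B hB _ j hj).trans (Pi.single_eq_same j 1)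

lemma IsVertexMap.apply_edgeVector_of_ne (hs : IsVertexMap μ s) (hB : IsFormBasis μ B)
    (hi : i ∈ B) (hij : i ≠ j) : μ i (edgeVector s B j) = 0 :=
  (hs B hB _ i hi).trans (Pi.single_eq_of_ne hij 1)

lemma IsVertexMap.edgeVector_ne_zero (hs : IsVertexMap μ s) (hB : IsFormBasis μ B)
    (hj : j ∈ B) : edgeVector s B j ≠ 0 := fun h => by
  simpa [h] using hs.apply_edgeVector_self hB hj

lemma IsVertexMap.apply_eq_sum (hs : IsVertexMap μ s) (hB : IsFormBasis μ B) (ξ : Dual ℝ V)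
    (x : V) : ξ x = ∑ j ∈ B, μ j x * ξ (edgeVector s B j) := by
  have hx : x = ∑ j ∈ B, μ j x • edgeVector s B j := hB.ext fun i hi => by
    rw [map_sum, Finset.sum_eq_single_of_mem i hi]
    · simp [hs.apply_edgeVector_self hB hi]
    · intro j _ hji
      simp [hs.apply_edgeVector_of_ne hB hi hji.symm]
  calc ξ x = ξ (∑ j ∈ B, μ j x • edgeVector s B j) := congrArg ξ hx
    _ = ∑ j ∈ B, μ j x * ξ (edgeVector s B j) := by simp only [map_sum, map_smul, smul_eq_mul]

lemma IsVertexMap.isFormBasis_insert_erase (hs : IsVertexMap μ s) (hB : IsFormBasis μ B)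
    (hj : j ∈ B) (hk : k ∉ B) (hkj : μ k (edgeVector s B j) ≠ 0) :
    IsFormBasis μ (insert k (B.erase j)) := by
  refine isFormBasis_iff_card_eq_finrank.2 ⟨?_, fun x hx => ?_⟩
  · rw [Finset.card_insert_of_notMem fun h => hk (Finset.mem_of_mem_erase h),
      Finset.card_erase_add_one hj, (isFormBasis_iff_card_eq_finrank.1 hB).1]
  · have hzero : ∀ i ∈ B, i ≠ j → μ i x = 0 := fun i hi hij =>
      hx i (Finset.mem_insert_of_mem (Finset.mem_erase.2 ⟨hij, hi⟩))
    have hkx : μ j x * μ k (edgeVector s B j) = 0 := by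
      rw [← hx k (Finset.mem_insert_self _ _), hs.apply_eq_sum hB (μ k) x,
        Finset.sum_eq_single_of_mem j hj fun i hi hij => by rw [hzero i hi hij, zero_mul]]
    have hjx : μ j x = 0 := (mul_eq_zero.1 hkx).resolve_right hkj
    refine (isFormBasis_iff_card_eq_finrank.1 hB).2 x fun i hi => ?_
    obtain rfl | hij := eq_or_ne i j
    · exact hjx
    · exact hzero i hi hij

end FormBasis

section Polyhedron

variable {ι V : Type*} [AddCommGroup V] [Module ℝ V] {μ : ι → Dual ℝ V}
  {s : Finset ι → (ι → ℝ) →ₗ[ℝ] V} {b : ι → ℝ} {B : Finset ι}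

/-- The polyhedron `P(b)` with right-hand sides `b`. -/
def polyhedron (μ : ι → Dual ℝ V) (b : ι → ℝ) : Set V :=
  {x | ∀ j, μ j x ≤ b j}

/-- The polyhedron obtained from `P(b)` by dropping the constraints outside `K`. For `b = 0` it is a
cone; when `K = B` is a basis, this is the cone `c_B`. -/
def relaxedPolyhedron (μ : ι → Dual ℝ V) (K : Finset ι) (b : ι → ℝ) : Set V :=
  {x | ∀ j ∈ K, μ j x ≤ b j}

/-- The cone `d_B` of the parameters `b` for which `s B b` satisfies the constraints outside `B`. -/
def feasibleCone (μ : ι → Dual ℝ V) (s : Finset ι → (ι → ℝ) →ₗ[ℝ] V) (B : Finset ι) :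
    Set (ι → ℝ) :=
  {b | ∀ k ∉ B, μ k (s B b) ≤ b k}

/-- Every nonzero direction increases some `μ k`, so that the polyhedra `P(b)` contain no ray. By
Farkas' lemma this means that the `μ j` generate the dual space as a cone. -/
def BlocksAllDirections (μ : ι → Dual ℝ V) : Prop :=
  ∀ w : V, w ≠ 0 → ∃ k, 0 < μ k w

lemma blocksAllDirections_of_forall_eq_sum [Fintype ι]
    (h : ∀ ξ : Dual ℝ V, ∃ c : ι → ℝ, (∀ j, 0 ≤ c j) ∧ ξ = ∑ j, c j • μ j) :
    BlocksAllDirections μ := by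
  intro w hw
  obtain ⟨φ, hφ⟩ : ∃ φ : Dual ℝ V, φ w ≠ 0 := by
    simpa only [ne_eq, not_forall] using mt (forall_dual_apply_eq_zero_iff ℝ w).1 hw
  obtain ⟨c, hc, hsum⟩ := h (φ w • φ)
  by_contra! hle
  have hpos : 0 < (φ w • φ) w := mul_self_pos.2 hφ
  have hnonpos : (φ w • φ) w ≤ 0 := by
    rw [hsum, LinearMap.sum_apply]
    exact Finset.sum_nonpos fun j _ => mul_nonpos_of_nonneg_of_nonpos (hc j) (hle j)
  exact hpos.not_ge hnonpos

lemma BlocksAllDirections.exists_blocking_constraint [Finite ι] (hμ : BlocksAllDirections μ)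
    {x w : V} (hx : x ∈ polyhedron μ b) (hw : w ≠ 0) :
    ∃ k, 0 < μ k w ∧ ∃ t : ℝ, 0 ≤ t ∧ μ k (x + t • w) = b k ∧ x + t • w ∈ polyhedron μ b := by
  obtain ⟨k, hk, hmin⟩ := Set.exists_min_image {k | 0 < μ k w} (fun k => (b k - μ k x) / μ k w)
    (Set.toFinite _) (hμ w hw)
  rw [Set.mem_ofPred_eq] at hk
  have ht : 0 ≤ (b k - μ k x) / μ k w := div_nonneg (sub_nonneg.2 (hx k)) hk.le
  refine ⟨k, hk, (b k - μ k x) / μ k w, ht, ?_, fun i => ?_⟩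
  · rw [map_add, map_smul, smul_eq_mul, div_mul_cancel₀ _ hk.ne', add_sub_cancel]
  · rw [map_add, map_smul, smul_eq_mul]
    obtain hi | hi := le_or_gt (μ i w) 0
    · linarith [hx i, mul_nonpos_of_nonneg_of_nonpos ht hi]
    · linarith [(le_div_iff₀ hi).1 (hmin i hi)]

lemma BlocksAllDirections.exists_mem_polyhedron_forall_eq_zero [Finite ι]
    (hμ : BlocksAllDirections μ) (hne : (polyhedron μ b).Nonempty) :
    ∃ x ∈ polyhedron μ b, ∀ w, (∀ j, μ j x = b j → μ j w = 0) → w = 0 := by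
  obtain ⟨x, hx, hmax⟩ := Set.Finite.exists_maximalFor' (fun x => {j | μ j x = b j})
    (polyhedron μ b) (Set.toFinite _) hne
  refine ⟨x, hx, fun w hw => by_contra fun hw0 => ?_⟩
  obtain ⟨k, hk, t, -, htk, hmem⟩ := hμ.exists_blocking_constraint hx hw0
  have hle : {j | μ j x = b j} ≤ {j | μ j (x + t • w) = b j} := fun j (hj : μ j x = b j) => by
    simp [hj, hw j hj]
  exact hk.ne' (hw k (hmax hmem hle htk))

lemma exists_isFormBasis_mem_polyhedron [Finite ι] (hs : IsVertexMap μ s)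
    (hμ : BlocksAllDirections μ) (hne : (polyhedron μ b).Nonempty) :
    ∃ B, IsFormBasis μ B ∧ s B b ∈ polyhedron μ b := by
  obtain ⟨x, hx, hker⟩ := hμ.exists_mem_polyhedron_forall_eq_zero hne
  obtain ⟨B, hBT, hB⟩ := exists_isFormBasis_subset (T := {j | μ j x = b j}) hker
  exact ⟨B, hB, (hs.eq_of_forall_apply_eq hB fun j hj => hBT hj) ▸ hx⟩

lemma IsVertexMap.mem_feasibleCone_iff (hs : IsVertexMap μ s) (hB : IsFormBasis μ B) :
    b ∈ feasibleCone μ s B ↔ s B b ∈ polyhedron μ b := by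
  refine ⟨fun h k => ?_, fun h k _ => h k⟩
  by_cases hk : k ∈ B
  · exact (hs B hB b k hk).le
  · exact h k hk

lemma isClosed_feasibleCone [Finite ι] (μ : ι → Dual ℝ V) (s : Finset ι → (ι → ℝ) →ₗ[ℝ] V)
    (B : Finset ι) : IsClosed (feasibleCone μ s B) := by
  simp only [feasibleCone, Set.ofPred_forall]
  exact isClosed_iInter fun k => isClosed_iInter fun _ =>
    isClosed_le (μ k ∘ₗ s B).continuous_of_finiteDimensional (continuous_apply k)

lemma IsVertexMap.apply_lt_of_mem_interior_feasibleCone [Finite ι] (hs : IsVertexMap μ s)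
    (hB : IsFormBasis μ B) (hb : b ∈ interior (feasibleCone μ s B)) {k : ι} (hk : k ∉ B) :
    μ k (s B b) < b k := by
  classical
  let slack : (ι → ℝ) →ₗ[ℝ] ℝ := LinearMap.proj k - μ k ∘ₗ s B
  have hvertex : s B (Pi.single k 1) = 0 := hs.eq_of_forall_apply_eq hB fun j hj => by
    rw [map_zero, Pi.single_eq_of_ne (ne_of_mem_of_not_mem hj hk)]
  have hslack : slack ≠ 0 := fun h => by
    simpa [slack, hvertex] using LinearMap.congr_fun h (Pi.single k 1)
  have hopen : IsOpenMap slack :=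
    slack.isOpenMap_of_finiteDimensional (LinearMap.surjective hslack)
  have hmaps : Set.MapsTo slack (feasibleCone μ s B) (Set.Ici 0) := fun y hy =>
    sub_nonneg.2 (hy k hk)
  have hpos : slack b ∈ Set.Ioi 0 := interior_Ici (a := (0 : ℝ)) ▸ hopen.mapsTo_interior hmaps hb
  exact sub_pos.1 hpos

end Polyhedron

section SimplePolytope

variable {ι V : Type*} [Fintype ι] [AddCommGroup V] [Module ℝ V] {μ : ι → Dual ℝ V}
  {s : Finset ι → (ι → ℝ) →ₗ[ℝ] V} {b : ι → ℝ} {B B' K : Finset ι}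

open Classical in
/-- The bases `B` whose vertex `s B b` belongs to the polyhedron `P(b)`. -/
noncomputable def feasibleBases (μ : ι → Dual ℝ V) (s : Finset ι → (ι → ℝ) →ₗ[ℝ] V) (b : ι → ℝ) :
    Finset (Finset ι) :=
  {B | IsFormBasis μ B ∧ s B b ∈ polyhedron μ b}

/-- Only the constraints in `B` are active at the vertex `s B b` of a feasible basis `B`, so that
the polyhedron `P(b)` is simple and its vertices correspond to the feasible bases. -/
def IsSimpleParameter (μ : ι → Dual ℝ V) (s : Finset ι → (ι → ℝ) →ₗ[ℝ] V) (b : ι → ℝ) : Prop :=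
  ∀ B ∈ feasibleBases μ s b, ∀ k ∉ B, μ k (s B b) < b k

lemma mem_feasibleBases :
    B ∈ feasibleBases μ s b ↔ IsFormBasis μ B ∧ s B b ∈ polyhedron μ b := by
  simp [feasibleBases]

lemma isFormBasis_of_mem_feasibleBases (hB : B ∈ feasibleBases μ s b) : IsFormBasis μ B :=
  (mem_feasibleBases.1 hB).1

lemma IsSimpleParameter.eq_of_vertex_eq (hs : IsVertexMap μ s) (hb : IsSimpleParameter μ s b)
    (hB : B ∈ feasibleBases μ s b) (hB' : B' ∈ feasibleBases μ s b) (h : s B b = s B' b) :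
    B = B' := by
  have hsubset {C C' : Finset ι} (hC : C ∈ feasibleBases μ s b) (hC' : C' ∈ feasibleBases μ s b)
      (h : s C b = s C' b) : C ⊆ C' := fun k hk => by_contra fun hk' =>
    (hb C' hC' k hk').ne (h ▸ hs C (isFormBasis_of_mem_feasibleBases hC) b k hk)
  exact (hsubset hB hB' h).antisymm (hsubset hB' hB h.symm)

variable [DecidableEq ι]

lemma IsSimpleParameter.exists_adjacent_vertex (hs : IsVertexMap μ s)
    (hμ : BlocksAllDirections μ) (hb : IsSimpleParameter μ s b) (hB : B ∈ feasibleBases μ s b)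
    {j : ι} (hj : j ∈ B) :
    ∃ B' ∈ feasibleBases μ s b, B.erase j ⊆ B' ∧
      ∃ t : ℝ, 0 < t ∧ s B' b = s B b - t • edgeVector s B j := by
  obtain ⟨hbasis, hmem⟩ := mem_feasibleBases.1 hB
  obtain ⟨k, hk, t, ht, htk, hmem'⟩ := hμ.exists_blocking_constraint hmem
    (neg_ne_zero.2 (hs.edgeVector_ne_zero hbasis hj))
  rw [map_neg, neg_pos] at hk
  rw [smul_neg, ← sub_eq_add_neg] at htk hmem'
  have hkB : k ∉ B := fun hkB => by
    obtain rfl | hkj := eq_or_ne k j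
    · exact hk.not_ge (hs.apply_edgeVector_self hbasis hkB ▸ zero_le_one)
    · exact hk.ne (hs.apply_edgeVector_of_ne hbasis hkB hkj)
  have ht0 : t ≠ 0 := fun h => (hb B hB k hkB).ne (by simpa [h] using htk)
  have hbasis' := hs.isFormBasis_insert_erase hbasis hj hkB hk.ne
  have hvertex : s (insert k (B.erase j)) b = s B b - t • edgeVector s B j :=
    hs.eq_of_forall_apply_eq hbasis' fun i hi => by
      obtain rfl | hi := Finset.mem_insert.1 hi
      · exact htk
      · obtain ⟨hij, hiB⟩ := Finset.mem_erase.1 hi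
        simp [hs B hbasis b i hiB, hs.apply_edgeVector_of_ne hbasis hiB hij]
  exact ⟨_, mem_feasibleBases.2 ⟨hbasis', hvertex ▸ hmem'⟩, Finset.subset_insert _ _,
    t, ht.lt_of_ne' ht0, hvertex⟩

/-- The `j ∈ B` for which `ξ` decreases along the edge leaving the vertex `s B b` into the
halfspace `μ j ≤ b j`, that is, in the direction `-edgeVector s B j`. -/
noncomputable def descentSet (s : Finset ι → (ι → ℝ) →ₗ[ℝ] V) (ξ : Dual ℝ V) (B : Finset ι) :
    Finset ι :=
  {j ∈ B | 0 < ξ (edgeVector s B j)}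

/-- The form `ξ` is constant along no edge issued from a vertex of `P(b)`. -/
def IsGenericForm (μ : ι → Dual ℝ V) (s : Finset ι → (ι → ℝ) →ₗ[ℝ] V) (b : ι → ℝ)
    (ξ : Dual ℝ V) : Prop :=
  ∀ B ∈ feasibleBases μ s b, ∀ j ∈ B, ξ (edgeVector s B j) ≠ 0

/-- The sets `K` contained in a feasible basis. For a simple parameter they index the nonempty faces
of `P(b)`: the face of `K` is cut out by the equations `μ j = b j`, `j ∈ K`. -/
noncomputable def faceIndices (μ : ι → Dual ℝ V) (s : Finset ι → (ι → ℝ) →ₗ[ℝ] V) (b : ι → ℝ) :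
    Finset (Finset ι) :=
  (feasibleBases μ s b).biUnion Finset.powerset

variable {ξ : Dual ℝ V}

lemma exists_isGenericForm_forall_neg (hs : IsVertexMap μ s) (b : ι → ℝ) (ξ₀ : Dual ℝ V)
    {S : Set V} (hS : S.Finite) (hneg : ∀ v ∈ S, ξ₀ v < 0) :
    ∃ ξ, IsGenericForm μ s b ξ ∧ ∀ v ∈ S, ξ v < 0 := by
  obtain ⟨ξ, hξ, hξneg⟩ := exists_dual_forall_ne_zero_forall_neg
    (u := fun p : {p : Finset ι × ι // p.1 ∈ feasibleBases μ s b ∧ p.2 ∈ p.1} =>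
      edgeVector s p.1.1 p.1.2)
    (fun p => hs.edgeVector_ne_zero (isFormBasis_of_mem_feasibleBases p.2.1) p.2.2) ξ₀ hS hneg
  exact ⟨ξ, fun B hB j hj => hξ ⟨(B, j), hB, hj⟩, hξneg⟩

lemma IsGenericForm.neg (hξ : IsGenericForm μ s b ξ) : IsGenericForm μ s b (-ξ) :=
  fun B hB j hj => neg_ne_zero.2 (hξ B hB j hj)

lemma IsGenericForm.descentSet_neg (hξ : IsGenericForm μ s b ξ) (hB : B ∈ feasibleBases μ s b) :
    descentSet s (-ξ) B = B \ descentSet s ξ B := by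
  ext j
  simp only [descentSet, Finset.mem_filter, Finset.mem_sdiff, LinearMap.neg_apply, neg_pos]
  refine and_congr_right fun hj => ?_
  simp only [hj, true_and, not_lt]
  exact ⟨le_of_lt, fun h => h.lt_of_ne (hξ B hB j hj)⟩

lemma IsSimpleParameter.exists_mem_Icc_descentSet (hs : IsVertexMap μ s)
    (hμ : BlocksAllDirections μ) (hb : IsSimpleParameter μ s b) (ξ : Dual ℝ V)
    (hK : K ∈ faceIndices μ s b) :
    ∃ B ∈ feasibleBases μ s b, K ∈ Finset.Icc (descentSet s ξ B) B := by
  obtain ⟨B₀, hB₀, hKB₀⟩ := Finset.mem_biUnion.1 hK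
  obtain ⟨B, hB, hmin⟩ := Finset.exists_min_image {B ∈ feasibleBases μ s b | K ⊆ B}
    (fun B => ξ (s B b)) ⟨B₀, Finset.mem_filter.2 ⟨hB₀, Finset.mem_powerset.1 hKB₀⟩⟩
  obtain ⟨hB, hKB⟩ := Finset.mem_filter.1 hB
  refine ⟨B, hB, Finset.mem_Icc.2 ⟨fun j hj => by_contra fun hjK => ?_, hKB⟩⟩
  obtain ⟨hjB, hjpos⟩ := Finset.mem_filter.1 hj
  obtain ⟨B', hB', hsub, t, ht, hvertex⟩ := hb.exists_adjacent_vertex hs hμ hB hjB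
  have hKB' : K ⊆ B' := (Finset.subset_erase.2 ⟨hKB, hjK⟩).trans hsub
  have hle := hmin B' (Finset.mem_filter.2 ⟨hB', hKB'⟩)
  rw [hvertex, map_sub, map_smul, smul_eq_mul] at hle
  linarith [mul_pos ht hjpos]

lemma IsGenericForm.eq_vertex_of_apply_le (hs : IsVertexMap μ s) (hξ : IsGenericForm μ s b ξ)
    (hB : B ∈ feasibleBases μ s b) {y : V} (hy : y ∈ polyhedron μ b)
    (hyB : ∀ j ∈ descentSet s ξ B, μ j y = b j) (hle : ξ y ≤ ξ (s B b)) : y = s B b := by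
  have hbasis := isFormBasis_of_mem_feasibleBases hB
  have hnonneg : ∀ j ∈ B, 0 ≤ μ j (y - s B b) * ξ (edgeVector s B j) := fun j hj => by
    rw [map_sub, hs B hbasis b j hj]
    by_cases hjD : j ∈ descentSet s ξ B
    · rw [hyB j hjD, sub_self, zero_mul]
    · exact mul_nonneg_of_nonpos_of_nonpos (sub_nonpos.2 (hy j))
        (not_lt.1 fun h => hjD (Finset.mem_filter.2 ⟨hj, h⟩))
  have hsum : ∑ j ∈ B, μ j (y - s B b) * ξ (edgeVector s B j) = 0 := by
    refine le_antisymm ?_ (Finset.sum_nonneg hnonneg)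
    rw [← hs.apply_eq_sum hbasis, map_sub]
    exact sub_nonpos.2 hle
  refine hbasis.ext fun j hj => sub_eq_zero.1 ?_
  rw [← map_sub]
  exact (mul_eq_zero.1 ((Finset.sum_eq_zero_iff_of_nonneg hnonneg).1 hsum j hj)).resolve_right
    (hξ B hB j hj)

lemma IsSimpleParameter.eq_of_mem_Icc_descentSet (hs : IsVertexMap μ s)
    (hb : IsSimpleParameter μ s b) (hξ : IsGenericForm μ s b ξ) (hB : B ∈ feasibleBases μ s b)
    (hK : K ∈ Finset.Icc (descentSet s ξ B) B) (hB' : B' ∈ feasibleBases μ s b)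
    (hK' : K ∈ Finset.Icc (descentSet s ξ B') B') : B = B' := by
  wlog hle : ξ (s B b) ≤ ξ (s B' b) generalizing B B'
  · exact (this hB' hK' hB hK (not_le.1 hle).le).symm
  rw [Finset.mem_Icc] at hK hK'
  obtain ⟨hbasis, hmem⟩ := mem_feasibleBases.1 hB
  exact hb.eq_of_vertex_eq hs hB hB' <| hξ.eq_vertex_of_apply_le hs hB' hmem
    (fun j hj => hs B hbasis b j (hK.2 (hK'.1 hj))) hle

lemma IsSimpleParameter.sum_faceIndices (hs : IsVertexMap μ s) (hμ : BlocksAllDirections μ)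
    (hb : IsSimpleParameter μ s b) (hξ : IsGenericForm μ s b ξ) {A : Type*} [AddCommMonoid A]
    (f : Finset ι → A) :
    ∑ K ∈ faceIndices μ s b, f K =
      ∑ B ∈ feasibleBases μ s b, ∑ K ∈ Finset.Icc (descentSet s ξ B) B, f K := by
  have hunion : faceIndices μ s b =
      (feasibleBases μ s b).biUnion fun B => Finset.Icc (descentSet s ξ B) B := by
    ext K
    refine ⟨fun hK => Finset.mem_biUnion.2 (hb.exists_mem_Icc_descentSet hs hμ ξ hK), fun hK => ?_⟩
    obtain ⟨B, hB, hKB⟩ := Finset.mem_biUnion.1 hK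
    exact Finset.mem_biUnion.2 ⟨B, hB, Finset.mem_powerset.2 (Finset.mem_Icc.1 hKB).2⟩
  rw [hunion, Finset.sum_biUnion]
  exact fun B hB B' hB' hne => Finset.disjoint_left.2 fun K hK hK' =>
    hne (hb.eq_of_mem_Icc_descentSet hs hξ hB hK hB' hK')

lemma IsSimpleParameter.sum_faceIndices_subset (hs : IsVertexMap μ s)
    (hμ : BlocksAllDirections μ) (hb : IsSimpleParameter μ s b) (hξ : IsGenericForm μ s b ξ)
    {A : Type*} [Ring A] (J : Finset ι) :
    ∑ K ∈ faceIndices μ s b, (if K ⊆ J then (-1 : A) ^ K.card else 0) =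
      ∑ B ∈ feasibleBases μ s b,
        if descentSet s ξ B = B ∩ J then (-1) ^ (descentSet s ξ B).card else 0 := by
  rw [hb.sum_faceIndices hs hμ hξ]
  refine Finset.sum_congr rfl fun B _ => ?_
  have hfilter : {K ∈ Finset.Icc (descentSet s ξ B) B | K ⊆ J} =
      Finset.Icc (descentSet s ξ B) (B ∩ J) := by
    ext K
    simp only [Finset.mem_filter, Finset.mem_Icc, Finset.subset_inter_iff, and_assoc]
  rw [← Finset.sum_filter, hfilter, sum_Icc_neg_one_pow_card]

lemma IsSimpleParameter.sum_faceIndices_neg_one_pow (hs : IsVertexMap μ s)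
    (hμ : BlocksAllDirections μ) (hb : IsSimpleParameter μ s b)
    (hne : (feasibleBases μ s b).Nonempty) {A : Type*} [Ring A] :
    ∑ K ∈ faceIndices μ s b, (-1 : A) ^ K.card = (-1) ^ finrank ℝ V := by
  obtain ⟨ξ, hξ, -⟩ := exists_isGenericForm_forall_neg hs b 0 Set.finite_empty (by simp)
  obtain ⟨B₀, hB₀⟩ := hne
  obtain ⟨B₁, hB₁, hB₁max⟩ := hb.exists_mem_Icc_descentSet hs hμ (-ξ)
    (Finset.mem_biUnion.2 ⟨B₀, hB₀, Finset.empty_mem_powerset B₀⟩)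
  have hmax_iff {B} (hB : B ∈ feasibleBases μ s b) :
      descentSet s ξ B = B ↔ ∅ ∈ Finset.Icc (descentSet s (-ξ) B) B := by
    rw [Finset.mem_Icc, hξ.descentSet_neg hB, Finset.subset_empty,
      Finset.sdiff_eq_empty_iff_subset, and_iff_left (Finset.empty_subset B)]
    exact ⟨fun h => h.ge, (Finset.filter_subset _ _).antisymm⟩
  have hunique : ∀ B ∈ feasibleBases μ s b, B ≠ B₁ → descentSet s ξ B ≠ B := fun B hB hne h =>
    hne (hb.eq_of_mem_Icc_descentSet hs hξ.neg hB ((hmax_iff hB).1 h) hB₁ hB₁max)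
  have hmax := (hmax_iff hB₁).2 hB₁max
  calc ∑ K ∈ faceIndices μ s b, (-1 : A) ^ K.card
      = ∑ B ∈ feasibleBases μ s b,
          if descentSet s ξ B = B then (-1) ^ (descentSet s ξ B).card else 0 := by
        simpa using hb.sum_faceIndices_subset hs hμ hξ (A := A) Finset.univ
    _ = (-1) ^ (descentSet s ξ B₁).card := by
        rw [Finset.sum_eq_single_of_mem B₁ hB₁ fun B hB hne => if_neg (hunique B hB hne),
          if_pos hmax]
    _ = (-1) ^ finrank ℝ V := by
        rw [hmax, (isFormBasis_iff_card_eq_finrank.1 (isFormBasis_of_mem_feasibleBases hB₁)).1]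

lemma IsSimpleParameter.sum_faceIndices_eq_zero (hs : IsVertexMap μ s)
    (hμ : BlocksAllDirections μ) {b₀ : ι → ℝ} (hb₀ : IsSimpleParameter μ s b₀)
    (hsub : feasibleBases μ s b₀ ⊆ feasibleBases μ s b) {x : V} (hx : x ∉ polyhedron μ b)
    {J : Finset ι} (hJ : ∀ j, j ∈ J ↔ μ j x ≤ b j) {A : Type*} [Ring A] :
    ∑ K ∈ faceIndices μ s b₀, (if K ⊆ J then (-1 : A) ^ K.card else 0) = 0 := by
  obtain ⟨k, hk⟩ : ∃ k, b k < μ k x := by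
    simpa only [polyhedron, Set.mem_ofPred_eq, not_forall, not_le] using hx
  obtain ⟨ξ, hξ, hneg⟩ := exists_isGenericForm_forall_neg hs b₀ (μ k)
    (S := (fun B => s B b - x) '' feasibleBases μ s b₀) (Set.toFinite _) (by
      rintro _ ⟨B, hB, rfl⟩
      rw [map_sub, sub_neg]
      exact ((mem_feasibleBases.1 (hsub hB)).2 k).trans_lt hk)
  rw [hb₀.sum_faceIndices_subset hs hμ hξ]
  refine Finset.sum_eq_zero fun B hB => if_neg fun hD => ?_
  have hbasis := isFormBasis_of_mem_feasibleBases hB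
  have hnonneg : 0 ≤ ξ (s B b - x) := by
    rw [hs.apply_eq_sum hbasis]
    refine Finset.sum_nonneg fun j hj => ?_
    have hiff : 0 < ξ (edgeVector s B j) ↔ μ j x ≤ b j := by
      simpa [descentSet, hj, hJ] using Finset.ext_iff.1 hD j
    rw [map_sub, hs B hbasis b j hj]
    obtain hle | hlt := le_or_gt (μ j x) (b j)
    · exact mul_nonneg (sub_nonneg.2 hle) (hiff.2 hle).le
    · exact mul_nonneg_of_nonpos_of_nonpos (sub_nonpos.2 hlt.le)
        (not_lt.1 fun h => hlt.not_ge (hiff.1 h))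
  exact (hneg _ ⟨B, hB, rfl⟩).not_ge hnonneg

lemma IsSimpleParameter.indicator_polyhedron_eq_sum (hs : IsVertexMap μ s)
    (hμ : BlocksAllDirections μ) {b₀ : ι → ℝ} (hb₀ : IsSimpleParameter μ s b₀)
    (hne : (feasibleBases μ s b₀).Nonempty)
    (hsub : feasibleBases μ s b₀ ⊆ feasibleBases μ s b) :
    (polyhedron μ b).indicator (fun _ => (1 : ℝ)) =
      ∑ K ∈ faceIndices μ s b₀, (-1 : ℝ) ^ (finrank ℝ V + K.card) •
        (relaxedPolyhedron μ K b).indicator (fun _ => (1 : ℝ)) := by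
  ext x
  classical
  let J : Finset ι := {j | μ j x ≤ b j}
  have hJ (j : ι) : j ∈ J ↔ μ j x ≤ b j := by simp [J]
  have hrelaxed (K : Finset ι) : x ∈ relaxedPolyhedron μ K b ↔ K ⊆ J :=
    forall₂_congr fun j _ => (hJ j).symm
  have hsum : (∑ K ∈ faceIndices μ s b₀, (-1 : ℝ) ^ (finrank ℝ V + K.card) •
      (relaxedPolyhedron μ K b).indicator (fun _ => (1 : ℝ))) x =
      (-1) ^ finrank ℝ V *
        ∑ K ∈ faceIndices μ s b₀, if K ⊆ J then (-1 : ℝ) ^ K.card else 0 := by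
    rw [Finset.mul_sum, Finset.sum_apply]
    exact Finset.sum_congr rfl fun K _ => by simp [Set.indicator_apply, hrelaxed, pow_add]
  rw [hsum]
  by_cases hx : x ∈ polyhedron μ b
  · have hsubset (K : Finset ι) : K ⊆ J := fun j _ => (hJ j).2 (hx j)
    simp only [Set.indicator_of_mem hx, hsubset, if_true]
    rw [hb₀.sum_faceIndices_neg_one_pow hs hμ hne, ← mul_pow, neg_one_mul, neg_neg, one_pow]
  · rw [Set.indicator_of_notMem hx, hb₀.sum_faceIndices_eq_zero hs hμ hsub hx hJ, mul_zero]

end SimplePolytope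

section LinedCones

variable {ι V : Type*} [AddCommGroup V] [Module ℝ V] {μ : ι → Dual ℝ V}
  {s : Finset ι → (ι → ℝ) →ₗ[ℝ] V} {b b₀ : ι → ℝ} {B K : Finset ι}

/-- An intersection of finitely many linear halfspaces. -/
def IsPolyhedralCone (C : Set V) : Prop :=
  ∃ (n : ℕ) (ν : Fin n → Dual ℝ V), C = {x | ∀ i, ν i x ≤ 0}

/-- For a cone `C`: it contains a line through the origin. -/
def ContainsLine (C : Set V) : Prop :=
  ∃ w, w ≠ 0 ∧ w ∈ C ∧ -w ∈ C

/-- The indicator functions of translated polyhedral cones containing a line. -/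
def linedConeIndicators (V : Type*) [AddCommGroup V] [Module ℝ V] : Set (V → ℝ) :=
  {f | ∃ (s : V) (C : Set V), IsPolyhedralCone C ∧ ContainsLine C ∧
    f = Set.indicator ((fun y => s + y) '' C) (fun _ => (1 : ℝ))}

lemma isPolyhedralCone_relaxedPolyhedron_zero (μ : ι → Dual ℝ V) (K : Finset ι) :
    IsPolyhedralCone (relaxedPolyhedron μ K 0) := by
  refine ⟨K.card, fun i => μ (K.equivFin.symm i), Set.ext fun x => ?_⟩
  exact ⟨fun h i => h _ (K.equivFin.symm i).2,
    fun h j hj => by simpa using h (K.equivFin ⟨j, hj⟩)⟩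

lemma IsVertexMap.relaxedPolyhedron_eq_image (hs : IsVertexMap μ s) (hB : IsFormBasis μ B)
    (hKB : K ⊆ B) (b : ι → ℝ) :
    relaxedPolyhedron μ K b = (fun y => s B b + y) '' relaxedPolyhedron μ K 0 := by
  ext x
  rw [Set.image_add_left, Set.mem_preimage]
  refine forall₂_congr fun j hj => ?_
  rw [map_add, map_neg, hs B hB b j (hKB hj), Pi.zero_apply, neg_add_nonpos_iff]

lemma IsVertexMap.containsLine_relaxedPolyhedron_zero (hs : IsVertexMap μ s)
    (hB : IsFormBasis μ B) (hKB : K ⊂ B) : ContainsLine (relaxedPolyhedron μ K 0) := by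
  classical
  obtain ⟨j, hjB, hjK⟩ := Finset.exists_of_ssubset hKB
  have hzero : ∀ i ∈ K, μ i (edgeVector s B j) = 0 := fun i hi =>
    hs.apply_edgeVector_of_ne hB (hKB.subset hi) (ne_of_mem_of_not_mem hi hjK)
  refine ⟨edgeVector s B j, hs.edgeVector_ne_zero hB hjB, fun i hi => (hzero i hi).le,
    fun i hi => ?_⟩
  rw [map_neg, hzero i hi, neg_zero, Pi.zero_apply]

lemma IsVertexMap.indicator_relaxedPolyhedron_mem_linedConeIndicators (hs : IsVertexMap μ s)
    (hB : IsFormBasis μ B) (hKB : K ⊂ B) (b : ι → ℝ) :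
    (relaxedPolyhedron μ K b).indicator (fun _ => (1 : ℝ)) ∈ linedConeIndicators V :=
  ⟨s B b, relaxedPolyhedron μ K 0, isPolyhedralCone_relaxedPolyhedron_zero μ K,
    hs.containsLine_relaxedPolyhedron_zero hB hKB,
    by rw [hs.relaxedPolyhedron_eq_image hB hKB.subset b]⟩

lemma IsSimpleParameter.indicator_polyhedron_sub_mem_span [Fintype ι] (hs : IsVertexMap μ s)
    (hμ : BlocksAllDirections μ) (hb₀ : IsSimpleParameter μ s b₀)
    (hne : (feasibleBases μ s b₀).Nonempty)
    (hsub : feasibleBases μ s b₀ ⊆ feasibleBases μ s b) :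
    (polyhedron μ b).indicator (fun _ => (1 : ℝ)) -
        ∑ B ∈ feasibleBases μ s b₀,
          ((fun y => s B b + y) '' relaxedPolyhedron μ B 0).indicator (fun _ => (1 : ℝ)) ∈
      Submodule.span ℝ (linedConeIndicators V) := by
  classical
  have hfaces : feasibleBases μ s b₀ ⊆ faceIndices μ s b₀ := fun B hB =>
    Finset.mem_biUnion.2 ⟨B, hB, Finset.mem_powerset_self B⟩
  have hbases : ∑ B ∈ feasibleBases μ s b₀, (-1 : ℝ) ^ (finrank ℝ V + B.card) •
        (relaxedPolyhedron μ B b).indicator (fun _ => (1 : ℝ)) =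
      ∑ B ∈ feasibleBases μ s b₀,
        ((fun y => s B b + y) '' relaxedPolyhedron μ B 0).indicator (fun _ => (1 : ℝ)) := by
    refine Finset.sum_congr rfl fun B hB => ?_
    have hbasis := isFormBasis_of_mem_feasibleBases hB
    rw [(isFormBasis_iff_card_eq_finrank.1 hbasis).1, (Even.add_self _).neg_one_pow, one_smul,
      hs.relaxedPolyhedron_eq_image hbasis subset_rfl]
  rw [hb₀.indicator_polyhedron_eq_sum hs hμ hne hsub, ← Finset.sum_sdiff hfaces, hbases,
    add_sub_cancel_right]
  refine Submodule.sum_mem _ fun K hK => Submodule.smul_mem _ _ (Submodule.subset_span ?_)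
  obtain ⟨hKface, hKbasis⟩ := Finset.mem_sdiff.1 hK
  obtain ⟨B, hB, hKB⟩ := Finset.mem_biUnion.1 hKface
  have hKB : K ⊂ B := (Finset.mem_powerset.1 hKB).ssubset_of_ne fun h => hKbasis (h ▸ hB)
  exact hs.indicator_relaxedPolyhedron_mem_linedConeIndicators
    (isFormBasis_of_mem_feasibleBases hB) hKB b

end LinedCones

section Chamber

variable {ι V : Type*} [AddCommGroup V] [Module ℝ V] {μ : ι → Dual ℝ V}
  {s : Finset ι → (ι → ℝ) →ₗ[ℝ] V} {τ : Set (ι → ℝ)} {b b₀ : ι → ℝ} {B : Finset ι}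

/-- A connected or empty set of parameters meeting the boundary of no cone `d_B`; chambers are the
maximal nonempty such sets. -/
structure IsSubchamber (μ : ι → Dual ℝ V) (s : Finset ι → (ι → ℝ) →ₗ[ℝ] V)
    (τ : Set (ι → ℝ)) : Prop where
  isPreconnected : IsPreconnected τ
  disjoint_frontier : ∀ B, IsFormBasis μ B → Disjoint τ (frontier (feasibleCone μ s B))

namespace IsSubchamber

variable [Fintype ι]

lemma subset_interior_feasibleCone (hτ : IsSubchamber μ s τ) (hs : IsVertexMap μ s)
    (hb₀ : b₀ ∈ τ) (hB : B ∈ feasibleBases μ s b₀) : τ ⊆ interior (feasibleCone μ s B) := by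
  obtain ⟨hbasis, hmem⟩ := mem_feasibleBases.1 hB
  exact subset_interior_of_isPreconnected hτ.isPreconnected (hτ.disjoint_frontier B hbasis)
    ⟨b₀, hb₀, (hs.mem_feasibleCone_iff hbasis).2 hmem⟩

lemma isSimpleParameter (hτ : IsSubchamber μ s τ) (hs : IsVertexMap μ s) (hb₀ : b₀ ∈ τ) :
    IsSimpleParameter μ s b₀ := fun _ hB _ hk =>
  hs.apply_lt_of_mem_interior_feasibleCone (isFormBasis_of_mem_feasibleBases hB)
    (hτ.subset_interior_feasibleCone hs hb₀ hB hb₀) hk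

lemma coe_feasibleBases (hτ : IsSubchamber μ s τ) (hs : IsVertexMap μ s) (hb₀ : b₀ ∈ τ) :
    (feasibleBases μ s b₀ : Set (Finset ι)) = {B | IsFormBasis μ B ∧ τ ⊆ feasibleCone μ s B} := by
  ext B
  refine ⟨fun hB => ⟨isFormBasis_of_mem_feasibleBases hB,
    (hτ.subset_interior_feasibleCone hs hb₀ hB).trans interior_subset⟩, fun ⟨hB, hτB⟩ => ?_⟩
  exact mem_feasibleBases.2 ⟨hB, (hs.mem_feasibleCone_iff hB).1 (hτB hb₀)⟩

lemma feasibleBases_subset (hτ : IsSubchamber μ s τ) (hs : IsVertexMap μ s) (hb₀ : b₀ ∈ τ)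
    (hb : b ∈ closure τ) : feasibleBases μ s b₀ ⊆ feasibleBases μ s b := fun B hB => by
  have hbasis := isFormBasis_of_mem_feasibleBases hB
  have hclosure : closure τ ⊆ feasibleCone μ s B := closure_minimal
    ((hτ.subset_interior_feasibleCone hs hb₀ hB).trans interior_subset)
    (isClosed_feasibleCone μ s B)
  exact mem_feasibleBases.2 ⟨hbasis, (hs.mem_feasibleCone_iff hbasis).1 (hclosure hb)⟩

end IsSubchamber

theorem stmt_3_general [Finite ι] (hs : IsVertexMap μ s) (hμ : BlocksAllDirections μ)
    (hτ : IsSubchamber μ s τ) (hb₀ : b₀ ∈ τ) (hne : (polyhedron μ b₀).Nonempty)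
    (hb : b ∈ closure τ) :
    ((polyhedron μ b).indicator (fun _ => (1 : ℝ)) -
        fun x => ∑ᶠ B ∈ {B | IsFormBasis μ B ∧ τ ⊆ feasibleCone μ s B},
          ((fun y => s B b + y) '' relaxedPolyhedron μ B 0).indicator (fun _ => (1 : ℝ)) x) ∈
      Submodule.span ℝ (linedConeIndicators V) := by
  have := Fintype.ofFinite ι
  obtain ⟨B, hB, hBmem⟩ := exists_isFormBasis_mem_polyhedron hs hμ hne
  convert (hτ.isSimpleParameter hs hb₀).indicator_polyhedron_sub_mem_span hs hμ
    ⟨B, mem_feasibleBases.2 ⟨hB, hBmem⟩⟩ (hτ.feasibleBases_subset hs hb₀ hb) using 2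
  ext x
  rw [← hτ.coe_feasibleBases hs hb₀, finsum_mem_coe_finset, Finset.sum_apply]

end Chamber

theorem stmt_3
    (d N : ℕ) (hd : 1 ≤ d) (hN : 1 ≤ N)
    (μ : Fin N → ((Fin d → ℝ) →ₗ[ℝ] ℝ))
    -- the μ_j generate the dual space as a cone
    (hgen : ∀ ξ : (Fin d → ℝ) →ₗ[ℝ] ℝ,
      ∃ c : Fin N → ℝ, (∀ j, 0 ≤ c j) ∧ ξ = ∑ j, c j • μ j)
    (P : (Fin N → ℝ) → Set (Fin d → ℝ))
    (hP : ∀ b, P b = {x | ∀ j, μ j x ≤ b j})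
    (𝓑 : Set (Finset (Fin N)))
    (h𝓑 : ∀ B : Finset (Fin N), B ∈ 𝓑 ↔
      (LinearIndependent ℝ (fun j : {j // j ∈ B} => μ j.1) ∧
        Submodule.span ℝ (Set.range (fun j : {j // j ∈ B} => μ j.1)) = ⊤))
    (sB : Finset (Fin N) → ((Fin N → ℝ) →ₗ[ℝ] (Fin d → ℝ)))
    (hsB : ∀ B ∈ 𝓑, ∀ b : Fin N → ℝ, ∀ j ∈ B, μ j (sB B b) = b j)
    (cB : Finset (Fin N) → Set (Fin d → ℝ))
    (hcB : ∀ B, cB B = {x | ∀ j ∈ B, μ j x ≤ 0})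
    (dB : Finset (Fin N) → Set (Fin N → ℝ))
    (hdB : ∀ B, dB B = {b | ∀ k ∉ B, μ k (sB B b) ≤ b k})
    -- τ is an admissible μ-chamber
    (τ : Set (Fin N → ℝ))
    (hτ : ∃ b₀ ∈ {b : Fin N → ℝ | ∀ B ∈ 𝓑, b ∉ frontier (dB B)},
      τ = connectedComponentIn {b : Fin N → ℝ | ∀ B ∈ 𝓑, b ∉ frontier (dB B)} b₀)
    (hadm : ∀ b ∈ τ, (P b).Nonempty)
    (𝓑τ : Set (Finset (Fin N)))
    (h𝓑τ : ∀ B, B ∈ 𝓑τ ↔ B ∈ 𝓑 ∧ τ ⊆ dB B)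
    (b : Fin N → ℝ) (hb : b ∈ closure τ) :
    -- 𝟙_{P(b)} − Σ_{B ∈ 𝓑_τ} 𝟙_{s_B(b) + c_B} lies in the span of indicators of
    -- shifted polyhedral cones containing a line
    (Set.indicator (P b) (fun _ => (1 : ℝ)) -
        fun x => ∑ᶠ B ∈ 𝓑τ,
          Set.indicator ((fun y => sB B b + y) '' cB B) (fun _ => (1 : ℝ)) x)
      ∈ Submodule.span ℝ {f : (Fin d → ℝ) → ℝ |
          ∃ (s : Fin d → ℝ) (C : Set (Fin d → ℝ)),
            (∃ (n : ℕ) (ν : Fin n → ((Fin d → ℝ) →ₗ[ℝ] ℝ)), C = {x | ∀ i, ν i x ≤ 0}) ∧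
            (∃ w : Fin d → ℝ, w ≠ 0 ∧ w ∈ C ∧ -w ∈ C) ∧
            f = Set.indicator ((fun y => s + y) '' C) (fun _ => (1 : ℝ))} := by
  obtain rfl : P = polyhedron μ := funext hP
  obtain rfl : cB = fun B => relaxedPolyhedron μ B 0 := funext hcB
  obtain rfl : dB = feasibleCone μ sB := funext hdB
  obtain rfl : 𝓑 = {B | IsFormBasis μ B} := Set.ext h𝓑
  obtain rfl : 𝓑τ = {B | IsFormBasis μ B ∧ τ ⊆ feasibleCone μ sB B} := Set.ext h𝓑τ
  obtain ⟨b₀, hb₀, rfl⟩ := hτ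
  have hsub : IsSubchamber μ sB (connectedComponentIn
      {b | ∀ B ∈ {B | IsFormBasis μ B}, b ∉ frontier (feasibleCone μ sB B)} b₀) :=
    ⟨isPreconnected_connectedComponentIn, fun B hB => Set.disjoint_left.2 fun b hb =>
      connectedComponentIn_subset _ _ hb B hB⟩
  have hmem := mem_connectedComponentIn hb₀
  exact stmt_3_general hsB (blocksAllDirections_of_forall_eq_sum hgen) hsub hmem (hadm b₀ hmem) hb
end
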